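/- arXiv:0902.3419 — 3 statements merged into one kernel-verified Lean document; each statement's English description precedes it below -/
import Mathlib

section
/- Under the stated assumptions, the variance of Y_N satisfies Var(Y_N) ∼ σ² log N as N → ∞. -/
open scoped BigOperators ENNReal
open Filter Asymptotics

noncomputable section

/-- `af P m n` is the number of ordered `m`-tuples `(n₁,…,n_m)` of elements of `P`
with product `n` (so `af P 0 n = 1` iff `n = 1`). -/
def af (P : Set ℕ) (m n : ℕ) : ℕ :=
  Nat.card {t : Fin m → ℕ // (∀ i, t i ∈ P) ∧ ∏ i, t i = n}

/-- `aTot P n = a(n) = Σ_{m ≥ 0} a_m(n)`. -/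
def aTot (P : Set ℕ) (n : ℕ) : ℝ := ∑' m : ℕ, (af P m n : ℝ)

/-- `Acum P N = A(N) = Σ_{1 ≤ n ≤ N} a(n)`. -/
def Acum (P : Set ℕ) (N : ℕ) : ℝ := ∑ n ∈ Finset.Icc 1 N, aTot P n

/-- The Dirichlet series `𝒫(x) = Σ_{n ∈ 𝒫} n^{-x}` at a real point. -/
def Pval (P : Set ℕ) (x : ℝ) : ℝ := ∑' n : P, ((n : ℕ) : ℝ) ^ (-x)

/-- `𝒫'(x) = -Σ_{n ∈ 𝒫} n^{-x} log n`. -/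
def Pderiv1 (P : Set ℕ) (x : ℝ) : ℝ := -∑' n : P, ((n : ℕ) : ℝ) ^ (-x) * Real.log (n : ℕ)

/-- `𝒫''(x) = Σ_{n ∈ 𝒫} n^{-x} (log n)^2`. -/
def Pderiv2 (P : Set ℕ) (x : ℝ) : ℝ := ∑' n : P, ((n : ℕ) : ℝ) ^ (-x) * (Real.log (n : ℕ)) ^ 2

/-- The abscissa of convergence `κ` of the Dirichlet series of `P`, as an extended real
(`⊥` when `P` is finite). -/
def kappa (P : Set ℕ) : EReal :=
  sInf {x : EReal | ∃ r : ℝ, x = (r : EReal) ∧ Summable (fun n : P => ((n : ℕ) : ℝ) ^ (-r))}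

open Classical in
/-- The (possibly infinite) value `𝒫(x) ∈ (0,∞]` of the Dirichlet series at an
extended-real point; at `x = -∞` every term `n^{-x}` is infinite. -/
def PvalE (P : Set ℕ) (x : EReal) : ℝ≥0∞ :=
  if x = ⊥ then ⊤ else ∑' n : P, ENNReal.ofReal (((n : ℕ) : ℝ) ^ (-x.toReal))

structure Ren (ι : Type) where
  p : ι → ℝ
  l : ι → ℝ
  S : ℝ → Finset ι
  δ : ℝ
  θ : ℝ
  hp : ∀ i, 0 < p i
  hsum : HasSum p 1
  hδ : 0 < δ
  hl : ∀ i, δ ≤ l i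
  hS : ∀ y i, i ∈ S y ↔ l i ≤ y
  hθ : 0 < θ
  hexp : Summable fun i => p i * (1 + l i) ^ 2 * Real.exp (θ * l i)

namespace Ren
variable {ι : Type} (R : Ren ι)

def op (w : ι → ℝ) (f : ℝ → ℝ) (y : ℝ) : ℝ := ∑ i ∈ R.S y, w i * f (y - R.l i)

lemma op_add (w : ι → ℝ) (f g : ℝ → ℝ) (y : ℝ) :
    R.op w (fun t => f t + g t) y = R.op w f y + R.op w g y := by
  simp only [op, mul_add, Finset.sum_add_distrib]

lemma op_sub (w : ι → ℝ) (f g : ℝ → ℝ) (y : ℝ) :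
    R.op w (fun t => f t - g t) y = R.op w f y - R.op w g y := by
  simp only [op, mul_sub, Finset.sum_sub_distrib]

lemma op_smul (w : ι → ℝ) (c : ℝ) (f : ℝ → ℝ) (y : ℝ) :
    R.op w (fun t => c * f t) y = c * R.op w f y := by
  simp only [op, Finset.mul_sum]
  exact Finset.sum_congr rfl fun i _ => by ring

lemma op_neg (w : ι → ℝ) (f : ℝ → ℝ) (y : ℝ) :
    R.op w (fun t => - f t) y = - R.op w f y := by
  simp only [op, mul_neg, Finset.sum_neg_distrib]

lemma l_pos (i : ι) : 0 < R.l i := lt_of_lt_of_le R.hδ (R.hl i)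

lemma comp (X : ℝ) (f V : ℝ → ℝ)
    (h : ∀ y, 0 ≤ y → y ≤ X → f y - R.op R.p f y ≤ V y - R.op R.p V y) :
    ∀ y, 0 ≤ y → y ≤ X → f y ≤ V y := by
  have key : ∀ n : ℕ, ∀ y, 0 ≤ y → y ≤ X → y < n * R.δ → f y ≤ V y := by
    intro n
    induction n with
    | zero => intro y h0 _ h1; simp at h1; linarith
    | succ n ih =>
      intro y h0 hX h1
      have h2 := h y h0 hX
      have h3 : R.op R.p f y ≤ R.op R.p V y := by
        apply Finset.sum_le_sum
        intro i hi
        have hi' := (R.hS y i).1 hi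
        have := R.hl i
        have := R.l_pos i
        push_cast at h1
        exact mul_le_mul_of_nonneg_left (ih _ (by linarith) (by linarith) (by linarith)) (R.hp i).le
      linarith
  intro y h0 hX
  obtain ⟨n, hn⟩ := exists_nat_gt (y / R.δ)
  exact key n y h0 hX (by rwa [div_lt_iff₀ R.hδ] at hn)

lemma nonempty {ι : Type} (R : Ren ι) : Nonempty ι := by
  by_contra hne
  rw [not_nonempty_iff] at hne
  have := R.hsum.unique (hasSum_empty)
  norm_num at this

lemma sum_le_one (T : Finset ι) : ∑ i ∈ T, R.p i ≤ 1 :=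
  sum_le_hasSum T (fun i _ => (R.hp i).le) R.hsum

lemma supLin (y : ℝ) (hy : 0 ≤ y) :
    1 ≤ (1 + y / R.δ) - R.op R.p (fun t => 1 + t / R.δ) y := by
  have h1 : R.op R.p (fun t => 1 + t / R.δ) y ≤ ∑ i ∈ R.S y, R.p i * (y / R.δ) := by
    apply Finset.sum_le_sum
    intro i hi
    apply mul_le_mul_of_nonneg_left _ (R.hp i).le
    have h2 : (y - R.l i) / R.δ = y / R.δ - R.l i / R.δ := by ring
    have h3 : 1 ≤ R.l i / R.δ := by rw [le_div_iff₀ R.hδ]; linarith [R.hl i]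
    linarith
  rw [← Finset.sum_mul] at h1
  have h4 : (∑ i ∈ R.S y, R.p i) * (y / R.δ) ≤ 1 * (y / R.δ) :=
    mul_le_mul_of_nonneg_right (R.sum_le_one _) (div_nonneg hy R.hδ.le)
  linarith

lemma S_mono {a b : ℝ} (h : a ≤ b) : R.S a ⊆ R.S b := fun i hi =>
  (R.hS b i).2 (((R.hS a i).1 hi).trans h)

lemma op_trunc (w : ι → ℝ) (f : ℝ → ℝ) (L : ℝ) (hL : 0 ≤ L) (y : ℝ) :
    R.op w (fun t => if L ≤ t then f t else 0) y
      = ∑ i ∈ R.S (y - L), w i * f (y - R.l i) := by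
  classical
  unfold op
  symm
  apply Finset.sum_subset_zero_on_sdiff (R.S_mono (by linarith))
  · intro i hi
    rw [Finset.mem_sdiff, R.hS, R.hS] at hi
    dsimp only
    rw [if_neg (by intro h; exact hi.2 (by linarith)), mul_zero]
  · intro i hi
    rw [R.hS] at hi
    dsimp only
    rw [if_pos (by linarith)]

/-- bounded supersolution for exponentials -/
lemma supExp (t : ℝ) (ht : 0 < t) : ∃ B : ℝ, 0 < B ∧ ∀ L : ℝ, 0 ≤ L → ∃ V : ℝ → ℝ,
    (∀ y, 0 ≤ V y ∧ V y ≤ B) ∧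
    (∀ y, 0 ≤ y → (if L ≤ y then Real.exp (-t * (y - L)) else 0) ≤ V y - R.op R.p V y) := by
  classical
  obtain ⟨a⟩ := R.nonempty
  have hpa := R.hp a
  have hexp1 : 0 < Real.exp (t * R.l a) - 1 := by
    have : 0 < t * R.l a := mul_pos ht (R.l_pos a)
    have := Real.add_one_lt_exp this.ne'
    linarith
  set C := 1 / (R.p a * (Real.exp (t * R.l a) - 1)) with hC
  have hCpos : 0 < C := by positivity
  set B := C + 1 / R.p a with hB
  refine ⟨B, by positivity, fun L hL => ?_⟩
  refine ⟨fun y => if L ≤ y then B - C * Real.exp (-t * (y - L)) else 0, ?_, ?_⟩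
  · intro y
    dsimp only
    split_ifs with h
    · have h1 : Real.exp (-t * (y - L)) ≤ 1 := by
        apply Real.exp_le_one_iff.2; nlinarith
      have h2 := Real.exp_pos (-t * (y - L))
      have : 0 < 1 / R.p a := by positivity
      constructor <;> nlinarith
    · exact ⟨le_rfl, by positivity⟩
  · intro y hy
    rw [R.op_trunc R.p (fun y => B - C * Real.exp (-t * (y - L))) L hL y]
    dsimp only
    by_cases h : L ≤ y
    · rw [if_pos h, if_pos h]
      set z := y - L with hz
      have hz0 : 0 ≤ z := by linarith
      set E := Real.exp (-t * z) with hE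
      have hE0 : 0 < E := Real.exp_pos _
      have hE1 : E ≤ 1 := by apply Real.exp_le_one_iff.2; nlinarith
      have e1 : ∀ i, R.p i * (B - C * Real.exp (-t * (y - R.l i - L)))
          = R.p i * (B - C * E) - C * E * (R.p i * (Real.exp (t * R.l i) - 1)) := by
        intro i
        have : Real.exp (-t * (y - R.l i - L)) = E * Real.exp (t * R.l i) := by
          rw [hE, ← Real.exp_add]; congr 1; rw [hz]; ring
        rw [this]; ring
      rw [Finset.sum_congr rfl (fun i _ => e1 i), Finset.sum_sub_distrib, ← Finset.sum_mul,
        ← Finset.mul_sum]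
      have hnn : ∀ i, 0 ≤ R.p i * (Real.exp (t * R.l i) - 1) := fun i =>
        mul_nonneg (R.hp i).le (by
          have : 0 < t * R.l i := mul_pos ht (R.l_pos i)
          have := Real.add_one_lt_exp this.ne'
          linarith)
      have hBC : 0 < B - C * E := by
        have : 0 < 1 / R.p a := by positivity
        nlinarith
      by_cases ha : a ∈ R.S z
      · have h1 : R.p a * (Real.exp (t * R.l a) - 1)
            ≤ ∑ i ∈ R.S z, R.p i * (Real.exp (t * R.l i) - 1) :=
          Finset.single_le_sum (f := fun i => R.p i * (Real.exp (t * R.l i) - 1))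
            (fun i _ => hnn i) ha
        have h2 := mul_le_mul_of_nonneg_left h1 (mul_pos hCpos hE0).le
        have h3 : C * E * (R.p a * (Real.exp (t * R.l a) - 1)) = E := by
          rw [hC]; field_simp
        have h4 := mul_le_mul_of_nonneg_right (R.sum_le_one (R.S z)) hBC.le
        linarith
      · have h0 : 0 ≤ ∑ i ∈ R.S z, R.p i * (Real.exp (t * R.l i) - 1) :=
          Finset.sum_nonneg fun i _ => hnn i
        have h1 : R.p a + ∑ i ∈ R.S z, R.p i ≤ 1 := by
          rw [← Finset.sum_insert ha]; exact R.sum_le_one _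
        have h2 : 1 ≤ R.p a * (B - C * E) := by
          have : R.p a * (1 / R.p a) = 1 := by field_simp
          have : 1 / R.p a ≤ B - C * E := by nlinarith
          nlinarith
        have h5 : 0 ≤ C * E * ∑ i ∈ R.S z, R.p i * (Real.exp (t * R.l i) - 1) := by positivity
        have h4 : (∑ i ∈ R.S z, R.p i) * (B - C * E) ≤ (1 - R.p a) * (B - C * E) :=
          mul_le_mul_of_nonneg_right (by linarith) hBC.le
        nlinarith
    · rw [if_neg h, if_neg h]
      have : R.S (y - L) = ∅ := by
        ext i; rw [R.hS]; simp; have := R.l_pos i; linarith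
      rw [this]; simp

def M : ℝ := ∑' i, R.p i * (1 + R.l i) ^ 2 * Real.exp (R.θ * R.l i)

lemma M_nonneg : 0 ≤ R.M := tsum_nonneg fun i => by
  have := R.hp i; positivity

lemma tail_fin (w : ι → ℝ) (D z : ℝ) (hD : 0 ≤ D) (hw : ∀ i, |w i| ≤ D * (R.p i * (1 + R.l i) ^ 2))
    (T : Finset ι) (hT : ∀ i ∈ T, z ≤ R.l i) : ∑ i ∈ T, |w i| ≤ D * R.M * Real.exp (-R.θ * z) := by
  have h1 : ∑ i ∈ T, |w i| ≤ ∑ i ∈ T, D * Real.exp (-R.θ * z) *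
      (R.p i * (1 + R.l i) ^ 2 * Real.exp (R.θ * R.l i)) := by
    apply Finset.sum_le_sum
    intro i hi
    refine (hw i).trans ?_
    have h2 : 1 ≤ Real.exp (-R.θ * z) * Real.exp (R.θ * R.l i) := by
      rw [← Real.exp_add]
      apply Real.one_le_exp
      have := hT i hi
      have := R.hθ
      nlinarith
    have h3 : 0 ≤ D * (R.p i * (1 + R.l i) ^ 2) := by
      have := R.hp i; positivity
    nlinarith
  refine h1.trans ?_
  rw [← Finset.mul_sum]
  have h4 : ∑ i ∈ T, R.p i * (1 + R.l i) ^ 2 * Real.exp (R.θ * R.l i) ≤ R.M :=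
    R.hexp.sum_le_tsum T (fun i _ => by have := R.hp i; positivity)
  have := mul_le_mul_of_nonneg_left h4 (mul_nonneg hD (Real.exp_pos (-R.θ * z)).le)
  linarith

lemma summ (w : ι → ℝ) (D : ℝ) (hD : 0 ≤ D) (hw : ∀ i, |w i| ≤ D * (R.p i * (1 + R.l i) ^ 2)) :
    Summable w := by
  apply Summable.of_norm
  apply summable_of_sum_le (c := D * R.M) (fun i => norm_nonneg _)
  intro T
  have := R.tail_fin w D 0 hD hw T (fun i _ => (R.l_pos i).le)
  simpa using this

lemma tail_tsum (w : ι → ℝ) (D y : ℝ) (hD : 0 ≤ D)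
    (hw : ∀ i, |w i| ≤ D * (R.p i * (1 + R.l i) ^ 2)) :
    |∑ i ∈ R.S y, w i - ∑' i, w i| ≤ D * R.M * Real.exp (-R.θ * y) := by
  classical
  have hs := (R.summ w D hD hw).hasSum
  have hs : Tendsto (fun T : Finset ι => ∑ i ∈ T, w i) atTop (nhds (∑' i, w i)) := hs
  have h1 : Tendsto (fun T : Finset ι => |∑ i ∈ R.S y, w i - ∑ i ∈ T, w i|) atTop
      (nhds |∑ i ∈ R.S y, w i - ∑' i, w i|) := (tendsto_const_nhds.sub hs).abs
  apply le_of_tendsto h1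
  filter_upwards [eventually_ge_atTop (R.S y)] with T hT
  rw [abs_sub_comm, ← Finset.sum_sdiff hT, add_sub_cancel_right]
  refine (Finset.abs_sum_le_sum_abs _ _).trans ?_
  apply R.tail_fin w D y hD hw
  intro i hi
  rw [Finset.mem_sdiff, R.hS] at hi
  exact (not_le.1 hi.2).le

/-- variance inequality -/
lemma key (x : ι → ℝ) (T : Finset ι) (ξ : ι → ℝ) (v : ℝ) (h0 : HasSum (fun i => R.p i * ξ i) 0)
    (h2 : HasSum (fun i => R.p i * ξ i ^ 2) v) (lam : ℝ) (hlam : 0 < lam) :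
    |∑ i ∈ T, R.p i * ξ i * x i| ≤ lam * v
      + (∑ i ∈ T, R.p i * x i ^ 2 - (∑ i ∈ T, R.p i * x i) ^ 2) / (4 * lam) := by
  classical
  set X : ι → ℝ := fun i => if i ∈ T then x i else 0 with hX
  set m := ∑ i ∈ T, R.p i * x i with hm
  have a1 : HasSum (fun i => R.p i * X i) m := by
    have := hasSum_sum_of_ne_finset_zero (L := .unconditional ι) (f := fun i => R.p i * X i) (s := T)
      (fun b hb => by simp [hX, hb])
    convert this using 1
    exact Finset.sum_congr rfl fun i hi => by simp [hX, hi]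
  have a2 : HasSum (fun i => R.p i * X i ^ 2) (∑ i ∈ T, R.p i * x i ^ 2) := by
    have := hasSum_sum_of_ne_finset_zero (L := .unconditional ι) (f := fun i => R.p i * X i ^ 2) (s := T)
      (fun b hb => by simp [hX, hb])
    convert this using 1
    exact Finset.sum_congr rfl fun i hi => by simp [hX, hi]
  have a3 : HasSum (fun i => R.p i * ξ i * X i) (∑ i ∈ T, R.p i * ξ i * x i) := by
    have := hasSum_sum_of_ne_finset_zero (L := .unconditional ι) (f := fun i => R.p i * ξ i * X i) (s := T)
      (fun b hb => by simp [hX, hb])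
    convert this using 1
    exact Finset.sum_congr rfl fun i hi => by simp [hX, hi]
  have b1 := ((a3.sub (h0.mul_left m)).mul_left (4 * lam)).add (((a2.sub (a1.mul_left (2*m))).add (R.hsum.mul_left (m^2))).add
    (h2.mul_left (4 * lam ^ 2)))
  have b2 := ((a3.sub (h0.mul_left m)).mul_left (-(4 * lam))).add (((a2.sub (a1.mul_left (2*m))).add (R.hsum.mul_left (m^2))).add
    (h2.mul_left (4 * lam ^ 2)))
  have c1 := b1.nonneg (fun i => by
    have := mul_nonneg (R.hp i).le (sq_nonneg (2 * lam * ξ i + (X i - m)))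
    nlinarith)
  have c2 := b2.nonneg (fun i => by
    have := mul_nonneg (R.hp i).le (sq_nonneg (2 * lam * ξ i - (X i - m)))
    nlinarith)
  set Q := ∑ i ∈ T, R.p i * x i ^ 2
  set A := ∑ i ∈ T, R.p i * ξ i * x i
  have hh : lam * v + (Q - m ^ 2) / (4 * lam) = (4 * lam ^ 2 * v + Q - m ^ 2) / (4 * lam) := by
    field_simp
    ring
  rw [hh, abs_le, neg_le, le_div_iff₀ (by positivity), le_div_iff₀ (by positivity)]
  constructor <;> linarith


structure IsH (ρ : ℝ) (h : ℝ → ℝ) : Prop where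
  hρ : 0 < ρ
  neg : ∀ y, y < 0 → h y = 0
  nn : ∀ y, 0 ≤ h y
  meas : Measurable h
  mono : ∀ y t, 0 ≤ t → Real.exp (-ρ * t) * h y ≤ h (y + t)
  eq : ∀ y, 0 ≤ y → h y = Real.exp (-ρ * y) + R.op R.p h y

lemma ii_of_bdd {f : ℝ → ℝ} (hm : Measurable f) (B : ℝ) (hb : ∀ y, |f y| ≤ B) (a b : ℝ) :
    IntervalIntegrable f MeasureTheory.volume a b :=
  (intervalIntegrable_const (c := B)).mono_fun' hm.aestronglyMeasurable
    (Filter.Eventually.of_forall hb)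

lemma int_neg {f : ℝ → ℝ} (hn : ∀ y, y < 0 → f y = 0) (a : ℝ) (ha : a ≤ 0) :
    ∫ t in a..0, f t = 0 := by
  rw [intervalIntegral.integral_of_le ha, ← MeasureTheory.integral_Ico_eq_integral_Ioc]
  rw [MeasureTheory.setIntegral_congr_fun (g := fun _ => (0:ℝ)) measurableSet_Ico]
  · simp
  · intro x hx; exact hn x hx.2

lemma int_neg' {f : ℝ → ℝ} (hn : ∀ y, y < 0 → f y = 0) (a : ℝ) (ha : a < 0) :
    ∫ t in (0:ℝ)..a, f t = 0 := by
  rw [intervalIntegral.integral_symm, int_neg hn a ha.le, neg_zero]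

lemma op_ext (f : ℝ → ℝ) (hn : ∀ y, y < 0 → f y = 0) (w : ι → ℝ) (y Y : ℝ) (h : y ≤ Y) :
    R.op w f y = ∑ i ∈ R.S Y, w i * f (y - R.l i) := by
  classical
  unfold op
  apply Finset.sum_subset_zero_on_sdiff (R.S_mono h)
  · intro i hi
    rw [Finset.mem_sdiff, R.hS, R.hS] at hi
    rw [hn _ (by linarith [not_le.1 hi.2]), mul_zero]
  · intro i _; rfl

lemma int_op {f : ℝ → ℝ} (hn : ∀ y, y < 0 → f y = 0)
    (hi : ∀ a b, IntervalIntegrable f MeasureTheory.volume a b) (Y : ℝ) (hY : 0 ≤ Y) :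
    ∫ t in (0:ℝ)..Y, R.op R.p f t = R.op R.p (fun y => ∫ t in (0:ℝ)..y, f t) Y := by
  have h1 : ∫ t in (0:ℝ)..Y, R.op R.p f t
      = ∫ t in (0:ℝ)..Y, ∑ i ∈ R.S Y, R.p i * f (t - R.l i) := by
    apply intervalIntegral.integral_congr
    intro t ht
    rw [Set.uIcc_of_le hY] at ht
    exact R.op_ext f hn R.p t Y ht.2
  rw [h1, intervalIntegral.integral_finsetSum]
  · unfold op
    apply Finset.sum_congr rfl
    intro i _
    rw [intervalIntegral.integral_const_mul, intervalIntegral.integral_comp_sub_right (fun t => f t)]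
    congr 1
    rw [← intervalIntegral.integral_add_adjacent_intervals (hi _ 0) (hi _ _),
      int_neg hn _ (by have := R.l_pos i; linarith), zero_add]
  · intro i _
    apply IntervalIntegrable.const_mul
    have := (hi (0 - R.l i) (Y - R.l i)).comp_sub_right (R.l i)
    simpa using this

lemma ii_op {f : ℝ → ℝ} (hn : ∀ y, y < 0 → f y = 0)
    (hi : ∀ a b, IntervalIntegrable f MeasureTheory.volume a b) (Y : ℝ) (hY : 0 ≤ Y) :
    IntervalIntegrable (R.op R.p f) MeasureTheory.volume 0 Y := by
  have h1 : IntervalIntegrable (∑ i ∈ R.S Y, fun t => R.p i * f (t - R.l i))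
      MeasureTheory.volume 0 Y := by
    apply IntervalIntegrable.sum
    intro i _
    apply IntervalIntegrable.const_mul
    have := (hi (0 - R.l i) (Y - R.l i)).comp_sub_right (R.l i)
    simpa using this
  apply h1.congr
  intro t ht
  rw [Set.uIoc_of_le hY] at ht
  rw [R.op_ext f hn R.p t Y ht.2]
  simp

lemma IsH.bdd {R : Ren ι} {ρ : ℝ} {h : ℝ → ℝ} (H : R.IsH ρ h) : ∃ B, 0 < B ∧ ∀ y, |h y| ≤ B := by
  obtain ⟨B, hB, hV⟩ := R.supExp ρ H.hρ
  obtain ⟨V, h1, h2⟩ := hV 0 le_rfl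
  refine ⟨B, hB, fun y => ?_⟩
  rw [abs_of_nonneg (H.nn y)]
  by_cases hy : 0 ≤ y
  · refine le_trans (R.comp y h V ?_ y hy le_rfl) (h1 y).2
    intro z hz _
    have := h2 z hz
    rw [if_pos hz, sub_zero] at this
    rw [H.eq z hz] ; linarith
  · rw [H.neg y (not_le.1 hy)]; exact hB.le

lemma exp_int (ρ : ℝ) (hρ : 0 < ρ) (y : ℝ) :
    ∫ t in (0:ℝ)..y, Real.exp (-ρ * t) = (1 - Real.exp (-ρ * y)) / ρ := by
  rw [intervalIntegral.integral_comp_mul_left (fun t => Real.exp t) (neg_ne_zero.2 hρ.ne'), integral_exp]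
  simp only [smul_eq_mul, mul_zero, Real.exp_zero]
  field_simp
  ring

lemma var_ge (x : ι → ℝ) (T : Finset ι) (a : ι) (ha : a ∈ T) :
    R.p a * (x a - ∑ i ∈ T, R.p i * x i) ^ 2
      ≤ ∑ i ∈ T, R.p i * x i ^ 2 - (∑ i ∈ T, R.p i * x i) ^ 2 := by
  set m := ∑ i ∈ T, R.p i * x i with hm
  have h1 := Finset.single_le_sum (f := fun i => R.p i * (x i - m) ^ 2)
    (fun i _ => mul_nonneg (R.hp i).le (sq_nonneg _)) ha
  refine h1.trans ?_
  have h2 : ∑ i ∈ T, R.p i * (x i - m) ^ 2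
      = ∑ i ∈ T, R.p i * x i ^ 2 - 2 * m * m + (∑ i ∈ T, R.p i) * m ^ 2 := by
    rw [Finset.sum_mul]
    nth_rewrite 3 [hm]
    rw [Finset.mul_sum, ← Finset.sum_sub_distrib, ← Finset.sum_add_distrib]
    exact Finset.sum_congr rfl fun i _ => by ring
  rw [h2]
  nlinarith [R.sum_le_one T, sq_nonneg m]

lemma IsH.L2 {R : Ren ι} {ρ : ℝ} {h : ℝ → ℝ} (H : R.IsH ρ h) (a : ι) :
    ∃ C, ∀ Y, 0 ≤ Y → ∫ t in (0:ℝ)..Y, (h t - h (t - R.l a)) ^ 2 ≤ C := by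
  classical
  obtain ⟨B, hB, hb⟩ := H.bdd
  have hρ := H.hρ
  have hpa := R.hp a
  have pt : ∀ t, 0 ≤ t → (h t - h (t - R.l a)) ^ 2
      ≤ 2 / R.p a * (R.op R.p (fun t => h t ^ 2) t - h t ^ 2)
        + (4 * B / R.p a + 2) * Real.exp (-ρ * t) := by
    intro t ht
    have hv := R.var_ge (fun i => h (t - R.l i)) (insert a (R.S t)) a (Finset.mem_insert_self _ _)
    have e1 : ∀ f : ℝ → ℝ, (∀ y, y < 0 → f y = 0) →
        ∑ i ∈ insert a (R.S t), R.p i * f (t - R.l i) = R.op R.p f t := by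
      intro f hf
      unfold op
      symm
      apply Finset.sum_subset (Finset.subset_insert _ _)
      intro i _ hi
      rw [R.hS] at hi
      rw [hf _ (by linarith [not_le.1 hi]), mul_zero]
    rw [e1 h H.neg, e1 (fun t => h t ^ 2) (fun y hy => by simp [H.neg y hy])] at hv
    set E := Real.exp (-ρ * t) with hE
    have hE0 : 0 < E := Real.exp_pos _
    have hE1 : E ≤ 1 := by apply Real.exp_le_one_iff.2; nlinarith
    have e2 : R.op R.p h t = h t - E := by rw [H.eq t ht]; ring
    rw [e2] at hv
    set Q := R.op R.p (fun t => h t ^ 2) t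
    have hbt := hb t
    rw [abs_of_nonneg (H.nn t)] at hbt
    have h3 : (h t - h (t - R.l a)) ^ 2 ≤ 2 * (h (t - R.l a) - (h t - E)) ^ 2 + 2 * E ^ 2 := by
      nlinarith [sq_nonneg (h (t - R.l a) - (h t - E) + E)]
    have h4 : (h (t - R.l a) - (h t - E)) ^ 2 ≤ (Q - h t ^ 2 + 2 * B * E) / R.p a := by
      rw [le_div_iff₀ hpa]
      have : 0 ≤ (B - h t) * E := mul_nonneg (by linarith) hE0.le
      nlinarith
    have h5 : E ^ 2 ≤ E := by nlinarith
    calc _ ≤ 2 * ((Q - h t ^ 2 + 2 * B * E) / R.p a) + 2 * E := by linarith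
      _ = _ := by ring
  have hm2 : Measurable (fun t => h t ^ 2) := H.meas.pow_const 2
  have hb2 : ∀ y, |h y ^ 2| ≤ B ^ 2 := fun y => by
    rw [abs_pow]; exact pow_le_pow_left₀ (abs_nonneg _) (hb y) 2
  have hn2 : ∀ y, y < 0 → h y ^ 2 = 0 := fun y hy => by simp [H.neg y hy]
  have hi2 := ii_of_bdd hm2 _ hb2
  have hmd : Measurable (fun t => (h t - h (t - R.l a)) ^ 2) :=
    (H.meas.sub (H.meas.comp (measurable_id.sub_const _))).pow_const 2
  have hid := ii_of_bdd hmd ((2 * B) ^ 2) (fun y => by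
    rw [abs_pow]
    apply pow_le_pow_left₀ (abs_nonneg _)
    refine (abs_sub _ _).trans ?_
    linarith [hb y, hb (y - R.l a)])
  refine ⟨(4 * B / R.p a + 2) / ρ, fun Y hY => ?_⟩
  have hie : IntervalIntegrable (fun t => Real.exp (-ρ * t)) MeasureTheory.volume 0 Y :=
    Continuous.intervalIntegrable (by fun_prop) _ _
  have hio := R.ii_op hn2 hi2 Y hY
  refine (intervalIntegral.integral_mono_on hY (hid 0 Y)
    (((hio.sub (hi2 0 Y)).const_mul _).add (hie.const_mul _)) (fun t ht => pt t ht.1)).trans ?_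
  rw [intervalIntegral.integral_add ((hio.sub (hi2 0 Y)).const_mul _) (hie.const_mul _),
    intervalIntegral.integral_const_mul, intervalIntegral.integral_const_mul,
    intervalIntegral.integral_sub hio (hi2 0 Y), R.int_op hn2 hi2 Y hY, exp_int ρ hρ]
  have hle : R.op R.p (fun y => ∫ t in (0:ℝ)..y, h t ^ 2) Y ≤ ∫ t in (0:ℝ)..Y, h t ^ 2 := by
    have hI : 0 ≤ ∫ t in (0:ℝ)..Y, h t ^ 2 :=
      intervalIntegral.integral_nonneg hY (fun _ _ => sq_nonneg _)
    calc _ ≤ ∑ i ∈ R.S Y, R.p i * ∫ t in (0:ℝ)..Y, h t ^ 2 := by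
          apply Finset.sum_le_sum
          intro i hi
          rw [R.hS] at hi
          apply mul_le_mul_of_nonneg_left _ (R.hp i).le
          apply intervalIntegral.integral_mono_interval le_rfl (by linarith)
            (by linarith [R.l_pos i]) (Filter.Eventually.of_forall fun _ => sq_nonneg _) (hi2 0 Y)
      _ ≤ 1 * _ := by rw [← Finset.sum_mul]; exact mul_le_mul_of_nonneg_right (R.sum_le_one _) hI
      _ = _ := one_mul _
  have h6 : 2 / R.p a * (R.op R.p (fun y => ∫ t in (0:ℝ)..y, h t ^ 2) Y
      - ∫ t in (0:ℝ)..Y, h t ^ 2) ≤ 0 :=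
    mul_nonpos_of_nonneg_of_nonpos (by positivity) (by linarith)
  have h7 : (1 - Real.exp (-ρ * Y)) / ρ ≤ 1 / ρ := by
    apply div_le_div_of_nonneg_right _ hρ.le
    linarith [Real.exp_pos (-ρ * Y)]
  have h8 := mul_le_mul_of_nonneg_left h7 (show 0 ≤ 4 * B / R.p a + 2 by positivity)
  calc _ ≤ (4 * B / R.p a + 2) * (1 / ρ) := by linarith
    _ = _ := by ring

/-- windows of the increments tend to zero in L¹ -/
lemma IsH.win {R : Ren ι} {ρ : ℝ} {h : ℝ → ℝ} (H : R.IsH ρ h) (a : ι) (T : ℝ) (hT : 0 < T) :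
    Tendsto (fun Y => ∫ t in (Y - T)..Y, |h t - h (t - R.l a)|) atTop (nhds 0) := by
  obtain ⟨B, hB, hb⟩ := H.bdd
  obtain ⟨C, hC⟩ := H.L2 a
  have hmd0 : Measurable (fun t => h t - h (t - R.l a)) :=
    (H.meas.sub (H.meas.comp (measurable_id.sub_const _)))
  have hbd : ∀ t, |h t - h (t - R.l a)| ≤ 2 * B := fun y => by
    refine (abs_sub _ _).trans ?_
    linarith [hb y, hb (y - R.l a)]
  have hid := ii_of_bdd (hmd0.pow_const 2) ((2 * B) ^ 2) (fun y => by
    rw [abs_pow]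
    exact pow_le_pow_left₀ (abs_nonneg _) (hbd y) 2)
  have hia := ii_of_bdd (f := fun t => |h t - h (t - R.l a)|) (hmd0.abs) (2 * B)
    (fun y => by rw [abs_abs]; exact hbd y)
  set Θ : ℝ → ℝ := fun Y => ∫ t in (0:ℝ)..(max Y 0), (h t - h (t - R.l a)) ^ 2 with hΘ
  have hmono : Monotone Θ := by
    intro x y hxy
    apply intervalIntegral.integral_mono_interval le_rfl (le_max_right _ _)
      (max_le_max_right 0 hxy) (Filter.Eventually.of_forall fun _ => sq_nonneg _) (hid _ _)
  have hbdd : BddAbove (Set.range Θ) := ⟨C, by rintro _ ⟨y, rfl⟩; exact hC _ (le_max_right _ _)⟩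
  have hlim := tendsto_atTop_ciSup hmono hbdd
  have hlim2 : Tendsto (fun Y => Θ Y - Θ (Y - T)) atTop (nhds 0) := by
    have := hlim.sub (hlim.comp (tendsto_atTop_add_const_right atTop (-T) tendsto_id))
    rw [sub_self] at this
    exact this
  rw [Metric.tendsto_atTop] at hlim2 ⊢
  intro ε hε
  set lam := ε / (4 * T) with hlam
  have hlampos : 0 < lam := by positivity
  obtain ⟨N, hN⟩ := hlim2 (lam * ε) (by positivity)
  refine ⟨max N T, fun Y hY => ?_⟩
  have hYN := le_trans (le_max_left _ _) hY
  have hYT := le_trans (le_max_right _ _) hY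
  have h1 := hN Y hYN
  have h2 : Θ Y - Θ (Y - T) = ∫ t in (Y - T)..Y, (h t - h (t - R.l a)) ^ 2 := by
    simp only [hΘ]
    rw [max_eq_left (by linarith), max_eq_left (by linarith)]
    exact intervalIntegral.integral_interval_sub_left (hid _ _) (hid _ _)
  rw [h2, Real.dist_eq, sub_zero] at h1
  have h1' := (abs_lt.1 h1).2
  have hnn : 0 ≤ ∫ t in (Y - T)..Y, |h t - h (t - R.l a)| :=
    intervalIntegral.integral_nonneg (by linarith) (fun _ _ => abs_nonneg _)
  rw [Real.dist_eq, sub_zero, abs_of_nonneg hnn]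
  have h3 : ∫ t in (Y - T)..Y, |h t - h (t - R.l a)|
      ≤ ∫ t in (Y - T)..Y, (lam + 1 / (4 * lam) * (h t - h (t - R.l a)) ^ 2) := by
    apply intervalIntegral.integral_mono_on (by linarith) (hia _ _)
      (intervalIntegrable_const.add ((hid _ _).const_mul _))
    intro t _
    have h4 : lam + 1 / (4 * lam) * (h t - h (t - R.l a)) ^ 2
      = (4 * lam ^ 2 + |h t - h (t - R.l a)| ^ 2) / (4 * lam) := by
      rw [sq_abs]; field_simp
    rw [h4, le_div_iff₀ (by positivity)]
    nlinarith [sq_nonneg (2 * lam - |h t - h (t - R.l a)|)]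
  rw [intervalIntegral.integral_add intervalIntegrable_const ((hid _ _).const_mul _),
    intervalIntegral.integral_const, intervalIntegral.integral_const_mul] at h3
  have h5 : 1 / (4 * lam) * ∫ t in (Y - T)..Y, (h t - h (t - R.l a)) ^ 2
      < 1 / (4 * lam) * (lam * ε) := mul_lt_mul_of_pos_left h1' (by positivity)
  have h6 : 1 / (4 * lam) * (lam * ε) = ε / 4 := by field_simp
  have h7 : (Y - (Y - T)) • lam = ε / 4 := by
    rw [hlam, smul_eq_mul]; field_simp; ring
  linarith


lemma pl_bound (i : ι) : |R.p i * R.l i| ≤ 1 * (R.p i * (1 + R.l i) ^ 2) := by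
  have h1 := R.hp i
  have h2 := R.l_pos i
  rw [abs_of_pos (by positivity), one_mul]
  apply mul_le_mul_of_nonneg_left _ h1.le
  nlinarith

lemma pl_summable : Summable (fun i => R.p i * R.l i) :=
  R.summ _ 1 zero_le_one R.pl_bound

def mean : ℝ := ∑' i, R.p i * R.l i

lemma mean_pos : 0 < R.mean := by
  obtain ⟨a⟩ := R.nonempty
  exact R.pl_summable.tsum_pos (fun i => (mul_pos (R.hp i) (R.l_pos i)).le) a
    (mul_pos (R.hp a) (R.l_pos a))

lemma ren_int {f g : ℝ → ℝ} (hn : ∀ y, y < 0 → f y = 0)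
    (hi : ∀ a b, IntervalIntegrable f MeasureTheory.volume a b)
    (hg : ∀ a b, IntervalIntegrable g MeasureTheory.volume a b)
    (he : ∀ y, 0 ≤ y → f y = g y + R.op R.p f y) (Y : ℝ) (hY : 0 ≤ Y) :
    ∫ t in (0:ℝ)..Y, f t = (∫ t in (0:ℝ)..Y, g t) + R.op R.p (fun y => ∫ t in (0:ℝ)..y, f t) Y := by
  have h1 : ∫ t in (0:ℝ)..Y, f t = ∫ t in (0:ℝ)..Y, (g t + R.op R.p f t) := by
    apply intervalIntegral.integral_congr
    intro t ht
    rw [Set.uIcc_of_le hY] at ht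
    exact he t ht.1
  rw [h1, intervalIntegral.integral_add (hg _ _) (R.ii_op hn hi Y hY), R.int_op hn hi Y hY]

lemma hasSum_op (f : ℝ → ℝ) (hn : ∀ y, y < 0 → f y = 0) (Y : ℝ) :
    HasSum (fun i => R.p i * (f Y - f (Y - R.l i))) (f Y - R.op R.p f Y) := by
  have h1 : HasSum (fun i => R.p i * f (Y - R.l i)) (R.op R.p f Y) := by
    apply hasSum_sum_of_ne_finset_zero (L := .unconditional ι)
    intro i hi
    rw [R.hS] at hi
    rw [hn _ (by linarith [not_le.1 hi]), mul_zero]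
  have h2 := (R.hsum.mul_right (f Y)).sub h1
  rw [one_mul] at h2
  exact h2.congr_fun (fun i => by ring)

lemma IsH.black1 {R : Ren ι} {ρ : ℝ} {h : ℝ → ℝ} (H : R.IsH ρ h) (a : ι) :
    Tendsto (fun Y => (∫ t in (0:ℝ)..Y, h t) - ∫ t in (0:ℝ)..(Y - R.l a), h t) atTop
      (nhds (R.l a / (ρ * R.mean))) := by
  obtain ⟨B, hB, hb⟩ := H.bdd
  have hρ := H.hρ
  set d := R.l a with hd
  have hd0 : 0 < d := R.l_pos a
  have hi := ii_of_bdd H.meas B hb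
  set Φ : ℝ → ℝ := fun Y => ∫ t in (0:ℝ)..Y, h t with hΦ
  have hΦn : ∀ y, y < 0 → Φ y = 0 := fun y hy => int_neg' H.neg y hy
  have hΦc : Continuous Φ := intervalIntegral.continuous_primitive hi 0
  have hΦi : ∀ a b, IntervalIntegrable Φ MeasureTheory.volume a b :=
    fun a b => hΦc.intervalIntegrable a b
  set Ψ : ℝ → ℝ := fun Y => ∫ t in (0:ℝ)..Y, Φ t with hΨ
  have hΨn : ∀ y, y < 0 → Ψ y = 0 := fun y hy => int_neg' hΦn y hy
  set G : ℝ → ℝ := fun y => ∫ t in (0:ℝ)..y, Real.exp (-ρ * t) with hG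
  have hGc : Continuous G := intervalIntegral.continuous_primitive
    (fun a b => Continuous.intervalIntegrable (by fun_prop) a b) 0
  have hGi : ∀ a b, IntervalIntegrable G MeasureTheory.volume a b :=
    fun a b => hGc.intervalIntegrable a b
  have e1 : ∀ Y, 0 ≤ Y → Φ Y = G Y + R.op R.p Φ Y := fun Y hY =>
    R.ren_int H.neg hi (fun a b => Continuous.intervalIntegrable (by fun_prop) a b) H.eq Y hY
  have e2 : ∀ Y, 0 ≤ Y → Ψ Y = (∫ t in (0:ℝ)..Y, G t) + R.op R.p Ψ Y := fun Y hY =>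
    R.ren_int hΦn hΦi hGi e1 Y hY
  set I : ℝ → ℝ := fun Y => Φ Y - Φ (Y - d) with hI
  have hIc : Continuous I := by
    have : Continuous (fun y => Φ (y - d)) := hΦc.comp (continuous_id.sub continuous_const)
    exact hΦc.sub this
  -- I as window
  have hIw : ∀ Y, I Y = ∫ t in (Y - d)..Y, h t := fun Y =>
    intervalIntegral.integral_interval_sub_left (hi _ _) (hi _ _)
  have hIb : ∀ Y, |I Y| ≤ B * d := by
    intro Y
    rw [hIw]
    have := intervalIntegral.norm_integral_le_of_norm_le_const (a := Y - d) (b := Y) (f := h) (C := B)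
      (fun x _ => hb x)
    rw [Real.norm_eq_abs] at this
    refine this.trans (le_of_eq ?_)
    rw [show Y - (Y - d) = d by ring, abs_of_pos hd0]
  have hmd0 : Measurable (fun t => h t - h (t - d)) :=
    (H.meas.sub (H.meas.comp (measurable_id.sub_const _)))
  have hbd : ∀ t, |h t - h (t - d)| ≤ 2 * B := fun y => by
    refine (abs_sub _ _).trans ?_
    linarith [hb y, hb (y - d)]
  have hii := ii_of_bdd hmd0 (2 * B) hbd
  have hia := ii_of_bdd (f := fun t => |h t - h (t - d)|) (hmd0.abs) (2 * B)
    (fun y => by rw [abs_abs]; exact hbd y)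
  have hId : ∀ Y T t, 0 < T → Y - T ≤ t → t ≤ Y →
      |I t - I Y| ≤ ∫ s in (Y - T)..Y, |h s - h (s - d)| := by
    intro Y T t hT h1 h2
    have e3 : I Y - I t = ∫ s in t..Y, (h s - h (s - d)) := by
      have hi' : IntervalIntegrable (fun s => h (s - d)) MeasureTheory.volume t Y :=
        ii_of_bdd (f := fun s => h (s - d)) (H.meas.comp (measurable_id.sub_const _)) B
          (fun s => hb _) t Y
      rw [intervalIntegral.integral_sub (hi _ _) hi',
        intervalIntegral.integral_comp_sub_right (fun s => h s),
        ← intervalIntegral.integral_interval_sub_left (hi 0 Y) (hi 0 t),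
        ← intervalIntegral.integral_interval_sub_left (hi 0 (Y - d)) (hi 0 (t - d))]
      simp only [hI, hΦ]; ring
    rw [abs_sub_comm, e3]
    refine (intervalIntegral.abs_integral_le_integral_abs h2).trans ?_
    exact intervalIntegral.integral_mono_interval h1 h2 le_rfl
      (Filter.Eventually.of_forall fun _ => abs_nonneg _) (hia _ _)
  set J : ι → ℝ → ℝ := fun i Y => ∫ t in (Y - R.l i)..Y, I t with hJ
  have hJeq : ∀ i Y, J i Y = (Ψ Y - Ψ (Y - R.l i)) - (Ψ (Y - d) - Ψ (Y - d - R.l i)) := by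
    intro i Y
    have hΦi' : IntervalIntegrable (fun s => Φ (s - d)) MeasureTheory.volume (Y - R.l i) Y :=
      (hΦc.comp (continuous_id.sub continuous_const)).intervalIntegrable _ _
    simp only [hJ, hI]
    rw [intervalIntegral.integral_sub (hΦi _ _) hΦi',
        intervalIntegral.integral_comp_sub_right (fun s => Φ s),
        ← intervalIntegral.integral_interval_sub_left (hΦi 0 Y) (hΦi 0 (Y - R.l i)),
        ← intervalIntegral.integral_interval_sub_left (hΦi 0 (Y - d)) (hΦi 0 (Y - R.l i - d))]
    simp only [hΨ]
    rw [show Y - R.l i - d = Y - d - R.l i by ring]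
  have hJs : ∀ Y, d ≤ Y → HasSum (fun i => R.p i * J i Y) (∫ t in (Y - d)..Y, G t) := by
    intro Y hY
    have s1 := (R.hasSum_op Ψ hΨn Y).sub (R.hasSum_op Ψ hΨn (Y - d))
    have v1 : Ψ Y - R.op R.p Ψ Y - (Ψ (Y - d) - R.op R.p Ψ (Y - d)) = ∫ t in (Y - d)..Y, G t := by
      rw [← intervalIntegral.integral_interval_sub_left (hGi 0 Y) (hGi 0 (Y - d))]
      linarith [e2 Y (by linarith), e2 (Y - d) (by linarith)]
    rw [v1] at s1
    exact s1.congr_fun (fun i => by rw [hJeq]; ring)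
  have hJd : ∀ i, Tendsto (fun Y => R.p i * (J i Y - R.l i * I Y)) atTop (nhds 0) := by
    intro i
    have hw := (H.win a (R.l i) (R.l_pos i)).const_mul (R.p i * R.l i)
    rw [mul_zero] at hw
    apply squeeze_zero_norm _ hw
    intro Y
    have e4 : J i Y - R.l i * I Y = ∫ t in (Y - R.l i)..Y, (I t - I Y) := by
      rw [intervalIntegral.integral_sub (hIc.intervalIntegrable _ _) intervalIntegrable_const,
        intervalIntegral.integral_const, smul_eq_mul]
      ring
    rw [e4, norm_mul, Real.norm_of_nonneg (R.hp i).le, mul_assoc]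
    apply mul_le_mul_of_nonneg_left _ (R.hp i).le
    have hlp := R.l_pos i
    refine (intervalIntegral.norm_integral_le_of_norm_le_const (C :=
      ∫ s in (Y - R.l i)..Y, |h s - h (s - d)|) ?_).trans ?_
    · intro t ht
      rw [Set.uIoc_of_le (by linarith)] at ht
      exact hId Y (R.l i) t hlp ht.1.le ht.2
    · rw [show Y - (Y - R.l i) = R.l i by ring, abs_of_pos hlp, mul_comm]
  have hdom : Tendsto (fun Y => ∑' i, R.p i * (J i Y - R.l i * I Y)) atTop (nhds (∑' _i : ι, (0:ℝ))) := by
    apply tendsto_tsum_of_dominated_convergence (bound := fun i => (2 * B * d) * (R.p i * R.l i))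
      (R.pl_summable.mul_left _) hJd
    refine Filter.Eventually.of_forall fun Y i => ?_
    have hlp := R.l_pos i
    rw [norm_mul, Real.norm_of_nonneg (R.hp i).le]
    have h1 : ‖J i Y‖ ≤ B * d * R.l i := by
      refine (intervalIntegral.norm_integral_le_of_norm_le_const (C := B * d) ?_).trans ?_
      · intro t _; exact hIb t
      · rw [show Y - (Y - R.l i) = R.l i by ring, abs_of_pos hlp]
    have h2 : ‖R.l i * I Y‖ ≤ R.l i * (B * d) := by
      rw [norm_mul, Real.norm_of_nonneg hlp.le]
      exact mul_le_mul_of_nonneg_left (hIb Y) hlp.le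
    have h3 := norm_sub_le (J i Y) (R.l i * I Y)
    have h4 : ‖J i Y - R.l i * I Y‖ ≤ 2 * B * d * R.l i := by linarith
    have := mul_le_mul_of_nonneg_left h4 (R.hp i).le
    linarith
  rw [tsum_zero] at hdom
  have hmean := R.mean_pos
  have hGlim : Tendsto (fun Y => ∫ t in (Y - d)..Y, G t) atTop (nhds (d / ρ)) := by
    rw [tendsto_iff_norm_sub_tendsto_zero]
    have hz : Tendsto (fun Y => Real.exp (-ρ * (Y - d)) / ρ * d) atTop (nhds 0) := by
      have h1 : Tendsto (fun Y : ℝ => -ρ * (Y - d)) atTop atBot := by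
        apply Tendsto.const_mul_atTop_of_neg (by linarith)
        exact tendsto_atTop_add_const_right atTop (-d) tendsto_id
      have := ((Real.tendsto_exp_atBot.comp h1).div_const ρ).mul_const d
      simpa using this
    apply squeeze_zero (fun _ => norm_nonneg _) _ hz
    intro Y
    have e5 : (∫ t in (Y - d)..Y, G t) - d / ρ = ∫ t in (Y - d)..Y, (G t - 1 / ρ) := by
      rw [intervalIntegral.integral_sub (hGi _ _) intervalIntegrable_const,
        intervalIntegral.integral_const, smul_eq_mul]
      ring
    rw [e5]
    refine (intervalIntegral.norm_integral_le_of_norm_le_const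
      (C := Real.exp (-ρ * (Y - d)) / ρ) ?_).trans ?_
    · intro t ht
      rw [Set.uIoc_of_le (by linarith)] at ht
      simp only [hG]
      rw [exp_int ρ hρ, ← sub_div, show 1 - Real.exp (-ρ * t) - 1 = - Real.exp (-ρ * t) by ring,
        norm_div, norm_neg, Real.norm_of_nonneg hρ.le, Real.norm_of_nonneg (Real.exp_pos _).le]
      apply div_le_div_of_nonneg_right _ hρ.le
      apply Real.exp_le_exp.2
      nlinarith [ht.1]
    · rw [show Y - (Y - d) = d by ring, abs_of_pos hd0]
  have hfin := (hGlim.sub hdom).div_const R.mean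
  rw [sub_zero, div_div] at hfin
  refine hfin.congr' ?_
  filter_upwards [eventually_ge_atTop d] with Y hY
  have s1 := (hJs Y hY).sub (R.pl_summable.hasSum.mul_right (I Y))
  have s2 : ∑' i, R.p i * (J i Y - R.l i * I Y) = (∫ t in (Y - d)..Y, G t) - R.mean * I Y := by
    rw [mean, ← s1.tsum_eq]
    exact tsum_congr fun i => by ring
  rw [s2]
  field_simp
  ring

/-- averaged renewal theorem for the group generated by the steps -/
lemma IsH.black2 {R : Ren ι} {ρ : ℝ} {h : ℝ → ℝ} (H : R.IsH ρ h) (d : ℝ)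
    (hd : d ∈ AddSubgroup.closure (Set.range R.l)) :
    Tendsto (fun Y => (∫ t in (0:ℝ)..Y, h t) - ∫ t in (0:ℝ)..(Y - d), h t) atTop
      (nhds (d * (1 / (ρ * R.mean)))) := by
  induction hd using AddSubgroup.closure_induction with
  | mem x hx =>
    obtain ⟨a, rfl⟩ := hx
    convert H.black1 a using 2
    ring
  | zero => simp
  | add x y _ _ hx hy =>
    have := hx.add (hy.comp (tendsto_atTop_add_const_right atTop (-x) tendsto_id))
    rw [add_mul]
    refine this.congr fun Y => ?_
    simp only [Function.comp, id]
    rw [show Y + -x - y = Y - (x + y) by ring, show Y + -x = Y - x by ring]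
    ring
  | neg x _ hx =>
    have := (hx.comp (tendsto_atTop_add_const_right atTop x tendsto_id)).neg
    rw [neg_mul]
    refine this.congr fun Y => ?_
    simp only [Function.comp, id]
    rw [show Y + x - x = Y by ring, show Y - -x = Y + x by ring]
    ring

lemma IsH.sand {R : Ren ι} {ρ : ℝ} {h : ℝ → ℝ} (H : R.IsH ρ h) (d : ℝ) (hd : 0 < d) (Y : ℝ) :
    d * (Real.exp (-ρ * d) * h (Y - d)) ≤ (∫ t in (0:ℝ)..Y, h t) - ∫ t in (0:ℝ)..(Y - d), h t ∧
    (∫ t in (0:ℝ)..Y, h t) - (∫ t in (0:ℝ)..(Y - d), h t) ≤ d * (Real.exp (ρ * d) * h Y) := by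
  obtain ⟨B, hB, hb⟩ := H.bdd
  have hi := ii_of_bdd H.meas B hb
  have hρ := H.hρ
  rw [intervalIntegral.integral_interval_sub_left (hi _ _) (hi _ _)]
  constructor
  · have h1 : ∫ _t in (Y - d)..Y, Real.exp (-ρ * d) * h (Y - d) ≤ ∫ t in (Y - d)..Y, h t := by
      apply intervalIntegral.integral_mono_on (by linarith) intervalIntegrable_const (hi _ _)
      intro t ht
      have := H.mono (Y - d) (t - (Y - d)) (by linarith [ht.1])
      rw [show Y - d + (t - (Y - d)) = t by ring] at this
      refine le_trans (mul_le_mul_of_nonneg_right ?_ (H.nn _)) this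
      apply Real.exp_le_exp.2
      nlinarith [ht.2]
    rw [intervalIntegral.integral_const, smul_eq_mul, show Y - (Y - d) = d by ring] at h1
    exact h1
  · have h1 : ∫ t in (Y - d)..Y, h t ≤ ∫ _t in (Y - d)..Y, Real.exp (ρ * d) * h Y := by
      apply intervalIntegral.integral_mono_on (by linarith) (hi _ _) intervalIntegrable_const
      intro t ht
      have := H.mono t (Y - t) (by linarith [ht.2])
      rw [show t + (Y - t) = Y by ring] at this
      have h2 := mul_le_mul_of_nonneg_left this (Real.exp_pos (ρ * (Y - t))).le
      rw [← mul_assoc, ← Real.exp_add, show ρ * (Y - t) + -ρ * (Y - t) = 0 by ring, Real.exp_zero,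
        one_mul] at h2
      refine le_trans h2 (mul_le_mul_of_nonneg_right ?_ (H.nn _))
      apply Real.exp_le_exp.2
      nlinarith [ht.1]
    rw [intervalIntegral.integral_const, smul_eq_mul, show Y - (Y - d) = d by ring] at h1
    exact h1


lemma IsH.dense_case {R : Ren ι} {ρ : ℝ} {h : ℝ → ℝ} (H : R.IsH ρ h)
    (hd : Dense (AddSubgroup.closure (Set.range R.l) : Set ℝ)) :
    Tendsto h atTop (nhds (1 / (ρ * R.mean))) := by
  have hρ := H.hρ
  have hmean := R.mean_pos
  set m := 1 / (ρ * R.mean) with hm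
  have hm0 : 0 < m := by positivity
  rw [tendsto_order]
  constructor
  · intro a ha
    have hc : Tendsto (fun d : ℝ => Real.exp (ρ * d) * a) (nhds 0) (nhds (Real.exp (ρ * 0) * a)) := by
      apply Continuous.tendsto; fun_prop
    rw [mul_zero, Real.exp_zero, one_mul] at hc
    have hev := hc.eventually (gt_mem_nhds ha)
    obtain ⟨η, hη, hη2⟩ := Metric.eventually_nhds_iff.1 hev
    obtain ⟨d, hdS, hd0, hd1⟩ := hd.exists_between hη
    have h1 : Real.exp (ρ * d) * a < m := hη2 (by rw [Real.dist_eq, sub_zero, abs_of_pos hd0]; exact hd1)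
    have h2 := (tendsto_order.1 (H.black2 d hdS)).1 (d * (Real.exp (ρ * d) * a))
      (mul_lt_mul_of_pos_left h1 hd0)
    filter_upwards [h2] with Y hY
    have h3 := hY.trans_le (H.sand d hd0 Y).2
    have h4 := lt_of_mul_lt_mul_left h3 hd0.le
    exact lt_of_mul_lt_mul_left h4 (Real.exp_pos _).le
  · intro a ha
    have hc : Tendsto (fun d : ℝ => Real.exp (-ρ * d) * a) (nhds 0) (nhds (Real.exp (-ρ * 0) * a)) := by
      apply Continuous.tendsto; fun_prop
    rw [mul_zero, Real.exp_zero, one_mul] at hc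
    have hev := hc.eventually (lt_mem_nhds ha)
    obtain ⟨η, hη, hη2⟩ := Metric.eventually_nhds_iff.1 hev
    obtain ⟨d, hdS, hd0, hd1⟩ := hd.exists_between hη
    have h1 : m < Real.exp (-ρ * d) * a := hη2 (by rw [Real.dist_eq, sub_zero, abs_of_pos hd0]; exact hd1)
    have h2 := (tendsto_order.1 (H.black2 d hdS)).2 (d * (Real.exp (-ρ * d) * a))
      (mul_lt_mul_of_pos_left h1 hd0)
    have h2' := (tendsto_atTop_add_const_right atTop d tendsto_id).eventually h2
    filter_upwards [h2'] with Y hY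
    have h3 := (H.sand d hd0 (Y + d)).1.trans_lt hY
    have h4 := lt_of_mul_lt_mul_left h3 hd0.le
    have h5 := lt_of_mul_lt_mul_left h4 (Real.exp_pos _).le
    rwa [add_sub_cancel_right] at h5

lemma IsH.lattice {R : Ren ι} {ρ : ℝ} {h : ℝ → ℝ} (H : R.IsH ρ h) (d : ℝ) (hd : 0 < d)
    (hl : ∀ i, ∃ k : ℤ, R.l i = k * d) (y : ℝ) (hy : 0 ≤ y) :
    h y = Real.exp (-ρ * (y - d * ⌊y / d⌋)) * h (d * ⌊y / d⌋) := by
  have hfl : ∀ y, d * ⌊y / d⌋ ≤ y := fun y => by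
    have := mul_le_mul_of_nonneg_left (Int.floor_le (y / d)) hd.le
    rwa [mul_div_cancel₀ _ hd.ne'] at this
  have hfl0 : ∀ y, 0 ≤ y → 0 ≤ d * (⌊y / d⌋ : ℝ) := fun y hy => by
    apply mul_nonneg hd.le
    exact_mod_cast Int.floor_nonneg.2 (by positivity)
  have hs : ∀ i y, d * (⌊(y - R.l i) / d⌋ : ℝ) = d * ⌊y / d⌋ - R.l i := by
    intro i y
    obtain ⟨k, hk⟩ := hl i
    rw [hk, sub_div, mul_div_cancel_right₀ _ hd.ne', Int.floor_sub_intCast]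
    push_cast; ring
  set F : ℝ → ℝ := fun y => Real.exp (-ρ * (y - d * ⌊y / d⌋)) * h (d * ⌊y / d⌋) with hF
  have hFe : ∀ y, 0 ≤ y → F y - R.op R.p F y = h y - R.op R.p h y := by
    intro y hy
    have e1 : R.op R.p F y = Real.exp (-ρ * (y - d * ⌊y / d⌋)) * R.op R.p h (d * ⌊y / d⌋) := by
      rw [R.op_ext h H.neg R.p _ y (hfl y), Finset.mul_sum, op]
      apply Finset.sum_congr rfl
      intro i _
      simp only [hF]
      rw [hs, show y - R.l i - (d * ↑⌊y / d⌋ - R.l i) = y - d * ⌊y / d⌋ by ring]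
      ring
    have e2 := H.eq y hy
    have e3 := H.eq _ (hfl0 y hy)
    have e4 : Real.exp (-ρ * (y - d * ⌊y / d⌋)) * Real.exp (-ρ * (d * ⌊y / d⌋)) = Real.exp (-ρ * y) := by
      rw [← Real.exp_add]; congr 1; ring
    rw [e1]
    simp only [hF]
    linear_combination (Real.exp (-ρ * (y - d * ⌊y / d⌋))) * e3 + e4 - e2
  apply le_antisymm
  · exact R.comp y h F (fun t h0 _ => (hFe t h0).ge) y hy le_rfl
  · exact R.comp y F h (fun t h0 _ => (hFe t h0).le) y hy le_rfl

lemma IsH.blackwell {R : Ren ι} {ρ : ℝ} {h : ℝ → ℝ} (H : R.IsH ρ h) :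
    ∃ c : ℝ → ℝ, ∃ b B : ℝ, 0 < b ∧ (∀ y, b ≤ c y ∧ c y ≤ B) ∧
      (∀ i y, c (y - R.l i) = c y) ∧ Tendsto (fun y => h y - c y) atTop (nhds 0) := by
  have hρ := H.hρ
  have hmean := R.mean_pos
  rcases AddSubgroup.dense_or_cyclic (AddSubgroup.closure (Set.range R.l)) with hd | ⟨d', hd'⟩
  · refine ⟨fun _ => 1 / (ρ * R.mean), 1 / (ρ * R.mean), 1 / (ρ * R.mean), by positivity,
      fun _ => ⟨le_rfl, le_rfl⟩, fun _ _ => rfl, ?_⟩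
    have := (H.dense_case hd).sub_const (1 / (ρ * R.mean))
    rwa [sub_self] at this
  · rw [← AddSubgroup.zmultiples_eq_closure] at hd'
    have hl' : ∀ i, ∃ k : ℤ, R.l i = k * d' := by
      intro i
      have : R.l i ∈ AddSubgroup.closure (Set.range R.l) := AddSubgroup.subset_closure ⟨i, rfl⟩
      rw [hd', AddSubgroup.mem_zmultiples_iff] at this
      obtain ⟨k, hk⟩ := this
      exact ⟨k, by rw [← hk, zsmul_eq_mul]⟩
    have hd0 : d' ≠ 0 := by
      rintro rfl
      obtain ⟨a⟩ := R.nonempty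
      obtain ⟨k, hk⟩ := hl' a
      have := R.l_pos a
      rw [hk, mul_zero] at this
      exact lt_irrefl _ this
    obtain ⟨d, hd, hdm, hl⟩ : ∃ d : ℝ, 0 < d ∧ d ∈ AddSubgroup.closure (Set.range R.l) ∧
        ∀ i, ∃ k : ℤ, R.l i = k * d := by
      have hmem : d' ∈ AddSubgroup.closure (Set.range R.l) := by
        rw [hd']; exact AddSubgroup.mem_zmultiples d'
      rcases lt_or_gt_of_ne hd0 with hneg | hpos
      · refine ⟨-d', by linarith, AddSubgroup.neg_mem _ hmem, fun i => ?_⟩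
        obtain ⟨k, hk⟩ := hl' i
        exact ⟨-k, by rw [hk]; push_cast; ring⟩
      · exact ⟨d', hpos, hmem, hl'⟩
    have hlat := H.lattice d hd hl
    set r : ℝ → ℝ := fun y => y - d * ⌊y / d⌋ with hr
    have hr0 : ∀ y, 0 ≤ r y := fun y => by
      have := mul_le_mul_of_nonneg_left (Int.floor_le (y / d)) hd.le
      rw [mul_div_cancel₀ _ hd.ne'] at this
      simp only [hr]; linarith
    have hr1 : ∀ y, r y ≤ d := fun y => by
      have := mul_le_mul_of_nonneg_left (Int.lt_floor_add_one (y / d)).le hd.le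
      rw [mul_div_cancel₀ _ hd.ne'] at this
      simp only [hr]; linarith
    have hrs : ∀ i y, r (y - R.l i) = r y := by
      intro i y
      obtain ⟨k, hk⟩ := hl i
      simp only [hr]
      rw [hk, sub_div, mul_div_cancel_right₀ _ hd.ne', Int.floor_sub_intCast]
      push_cast; ring
    have hE : 0 < 1 - Real.exp (-ρ * d) := by
      have : Real.exp (-ρ * d) < 1 := Real.exp_lt_one_iff.2 (by nlinarith)
      linarith
    set E := (1 - Real.exp (-ρ * d)) / ρ with hEdef
    have hE0 : 0 < E := by positivity
    set C := d * (1 / (ρ * R.mean)) / E with hC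
    have hC0 : 0 < C := by positivity
    have hfl : Tendsto (fun y : ℝ => d * (⌊y / d⌋ : ℝ)) atTop atTop := by
      apply tendsto_atTop_mono (f := fun y => y + -d)
      · intro y; have := hr1 y; simp only [hr] at this; linarith
      · exact tendsto_atTop_add_const_right atTop (-d) tendsto_id
    obtain ⟨B, hB, hb⟩ := H.bdd
    have hi := ii_of_bdd H.meas B hb
    have hlim : Tendsto (fun y : ℝ => h (d * ⌊y / d⌋)) atTop (nhds C) := by
      have h1 := ((H.black2 d hdm).comp (tendsto_atTop_add_const_right atTop d hfl)).div_const E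
      refine h1.congr' ?_
      filter_upwards [eventually_ge_atTop 0] with y hy
      simp only [Function.comp]
      rw [div_eq_iff hE0.ne', intervalIntegral.integral_interval_sub_left (hi _ _) (hi _ _),
        add_sub_cancel_right]
      have hf0 : 0 ≤ ⌊y / d⌋ := Int.floor_nonneg.2 (by positivity)
      generalize ⌊y / d⌋ = k at hf0 ⊢
      have hf0' : (0:ℝ) ≤ k := by exact_mod_cast hf0
      have h2 : ∫ t in (0:ℝ)..d, h (d * k + t) = ∫ t in (d * (k:ℝ))..(d * k + d), h t := by
        rw [intervalIntegral.integral_comp_add_left (fun t => h t), add_zero]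
      have h3 : ∫ t in (0:ℝ)..d, h (d * k + t) = ∫ t in (0:ℝ)..d, h (d * k) * Real.exp (-ρ * t) := by
        apply intervalIntegral.integral_congr_Ioo_of_le hd.le
        intro t ht
        have hft : ⌊(d * k + t) / d⌋ = k := by
          rw [Int.floor_eq_iff, le_div_iff₀ hd, div_lt_iff₀ hd]
          constructor <;> nlinarith [ht.1, ht.2]
        have := hlat (d * k + t) (by have := ht.1; positivity)
        rw [hft, add_sub_cancel_left] at this
        dsimp only
        rw [this, mul_comm]
      rw [← h2, h3, intervalIntegral.integral_const_mul, exp_int ρ hρ]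
    refine ⟨fun y => C * Real.exp (-ρ * r y), C * Real.exp (-ρ * d), C, by positivity, fun y => ⟨?_, ?_⟩,
      fun i y => ?_, ?_⟩
    · apply mul_le_mul_of_nonneg_left _ hC0.le
      apply Real.exp_le_exp.2
      nlinarith [hr1 y]
    · have : Real.exp (-ρ * r y) ≤ 1 := Real.exp_le_one_iff.2 (by nlinarith [hr0 y])
      nlinarith
    · dsimp only; rw [hrs]
    · have h1 := (hlim.sub_const C)
      rw [sub_self] at h1
      have h2 := h1.norm
      rw [norm_zero] at h2
      apply squeeze_zero_norm' _ h2
      filter_upwards [eventually_ge_atTop 0] with y hy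
      rw [hlat y hy]
      have : Real.exp (-ρ * r y) ≤ 1 := Real.exp_le_one_iff.2 (by nlinarith [hr0 y])
      rw [show Real.exp (-ρ * (y - d * ⌊y / d⌋)) * h (d * ⌊y / d⌋) - C * Real.exp (-ρ * r y)
        = Real.exp (-ρ * r y) * (h (d * ⌊y / d⌋) - C) by simp only [hr]; ring, norm_mul,
        Real.norm_of_nonneg (Real.exp_pos _).le]
      have := mul_le_mul_of_nonneg_right this (norm_nonneg (h (d * ⌊y / d⌋) - C))
      rwa [one_mul] at this


def mu : ℝ := 1 / R.mean
def xi (i : ι) : ℝ := 1 - R.mu * R.l i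
def tau : ℝ := ∑' i, R.p i * R.xi i ^ 2
def Dx : ℝ := (1 + R.mu) ^ 2

lemma mu_pos : 0 < R.mu := by
  have := R.mean_pos
  unfold mu; positivity

lemma Dx_nonneg : 0 ≤ R.Dx := sq_nonneg _

lemma xi_abs (i : ι) : |R.xi i| ≤ (1 + R.mu) * (1 + R.l i) := by
  have h1 := R.mu_pos
  have h2 := R.l_pos i
  unfold xi
  rw [abs_le]
  constructor <;> nlinarith [mul_pos h1 h2]

lemma xi_b1 (i : ι) : |R.p i * R.xi i| ≤ R.Dx * (R.p i * (1 + R.l i) ^ 2) := by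
  have h1 := R.mu_pos
  have h2 := R.l_pos i
  have h3 := R.hp i
  have h4 := R.xi_abs i
  rw [abs_mul, abs_of_pos h3]
  have h5 : 1 ≤ (1 + R.mu) * (1 + R.l i) := by nlinarith [mul_pos h1 h2]
  have h6 : |R.xi i| ≤ ((1 + R.mu) * (1 + R.l i)) ^ 2 := by nlinarith
  have := mul_le_mul_of_nonneg_left h6 h3.le
  unfold Dx
  linarith

lemma xi_b2 (i : ι) : |R.p i * R.xi i ^ 2| ≤ R.Dx * (R.p i * (1 + R.l i) ^ 2) := by
  have h3 := R.hp i
  have h4 := R.xi_abs i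
  rw [abs_mul, abs_of_pos h3, abs_pow]
  have h6 : |R.xi i| ^ 2 ≤ ((1 + R.mu) * (1 + R.l i)) ^ 2 := pow_le_pow_left₀ (abs_nonneg _) h4 2
  have := mul_le_mul_of_nonneg_left h6 h3.le
  unfold Dx
  linarith

lemma xi0 : HasSum (fun i => R.p i * R.xi i) 0 := by
  have h := R.hsum.sub (R.pl_summable.hasSum.mul_left R.mu)
  have h1 : (1 : ℝ) - R.mu * ∑' i, R.p i * R.l i = 0 := by
    have := R.mean_pos
    change 1 - R.mu * R.mean = 0
    unfold mu; field_simp; ring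
  rw [h1] at h
  exact h.congr_fun (fun i => by unfold xi; ring)

lemma xi2 : HasSum (fun i => R.p i * R.xi i ^ 2) R.tau :=
  (R.summ _ R.Dx R.Dx_nonneg R.xi_b2).hasSum

lemma tau_nonneg : 0 ≤ R.tau := tsum_nonneg fun i => by
  have := R.hp i; positivity

lemma stepsup (f V : ℝ → ℝ) (κ lam y : ℝ) (hlam : 0 < lam) (hy : 0 ≤ y) (hf : |f y| ≤ κ)
    (hs : |f y - R.op R.p f y| ≤ V y - R.op R.p V y) :
    |R.op (fun i => R.p i * R.xi i) f y| ≤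
      (lam * R.tau * (1 + y / R.δ) + 1 / (4 * lam) * (2 * κ * V y - f y ^ 2))
      - R.op R.p (fun t => lam * R.tau * (1 + t / R.δ) + 1 / (4 * lam) * (2 * κ * V t - f t ^ 2)) y := by
  have h1 := R.key (fun i => f (y - R.l i)) (R.S y) R.xi R.tau R.xi0 R.xi2 lam hlam
  have e1 : ∑ i ∈ R.S y, R.p i * f (y - R.l i) ^ 2 = R.op R.p (fun t => f t ^ 2) y := rfl
  have e2 : ∑ i ∈ R.S y, R.p i * f (y - R.l i) = R.op R.p f y := rfl
  have e3 : ∑ i ∈ R.S y, R.p i * R.xi i * f (y - R.l i)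
    = R.op (fun i => R.p i * R.xi i) f y := rfl
  rw [e1, e2, e3] at h1
  rw [R.op_add, R.op_smul, R.op_smul, R.op_sub, R.op_smul]
  have h2 := mul_le_mul_of_nonneg_left (R.supLin y hy) (mul_nonneg hlam.le R.tau_nonneg)
  set s := f y - R.op R.p f y with hsd
  set W := V y - R.op R.p V y with hW
  have h3 : s * f y ≤ κ * W := by
    have : |s * f y| ≤ W * κ := by
      rw [abs_mul]
      exact mul_le_mul hs hf (abs_nonneg _) ((abs_nonneg _).trans hs)
    linarith [le_abs_self (s * f y)]
  have h4 : R.op R.p (fun t => f t ^ 2) y - R.op R.p f y ^ 2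
      ≤ 2 * κ * W - (f y ^ 2 - R.op R.p (fun t => f t ^ 2) y) := by
    have : R.op R.p f y = f y - s := by rw [hsd]; ring
    rw [this]
    nlinarith [sq_nonneg s]
  have h5 := mul_le_mul_of_nonneg_left h4 (show 0 ≤ 1 / (4 * lam) by positivity)
  rw [div_eq_inv_mul, ← one_div] at h1
  have h6 : W = V y - R.op R.p V y := rfl
  rw [h6] at h5
  linarith

lemma poly_exp (t : ℝ) (ht : 0 < t) : ∃ C : ℝ, 0 < C ∧ ∀ y, 0 ≤ y → (1 + y) ^ 2 ≤ C * Real.exp (t * y) := by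
  refine ⟨2 + 4 / t ^ 2, by positivity, fun y hy => ?_⟩
  have h1 := Real.quadratic_le_exp_of_nonneg (show 0 ≤ t * y by positivity)
  have h2 : 1 + (t * y) ^ 2 / 2 ≤ Real.exp (t * y) := by nlinarith [mul_nonneg ht.le hy]
  have h3 : (2 + 4 / t ^ 2) * (1 + (t * y) ^ 2 / 2) ≤ (2 + 4 / t ^ 2) * Real.exp (t * y) :=
    mul_le_mul_of_nonneg_left h2 (by positivity)
  have h4 : (2 + 4 / t ^ 2) * (1 + (t * y) ^ 2 / 2) = 2 + 4 / t ^ 2 + (t * y) ^ 2 + 2 * y ^ 2 := by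
    field_simp; ring
  have h5 : 0 < 4 / t ^ 2 := by positivity
  nlinarith [sq_nonneg (1 - y), sq_nonneg (t * y)]

structure Setup (R : Ren ι) (ρ : ℝ) (h h1 h2 c : ℝ → ℝ) (B : ℝ) : Prop where
  hθρ : R.θ < ρ
  hB : 0 ≤ B
  hb : ∀ y, |h y| ≤ B
  cb : ∀ y, |c y| ≤ B
  per : ∀ i y, c (y - R.l i) = c y
  lim : Tendsto (fun y => h y - c y) atTop (nhds 0)
  eq : ∀ y, 0 ≤ y → h y = Real.exp (-ρ * y) + R.op R.p h y
  eq1 : ∀ y, 0 ≤ y → h1 y = R.op R.p (fun t => h1 t + h t) y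
  eq2 : ∀ y, 0 ≤ y → h2 y = R.op R.p (fun t => h2 t + 2 * h1 t + h t) y

section
variable {R : Ren ι} {ρ : ℝ} {h h1 h2 c : ℝ → ℝ} {B : ℝ}

lemma Setup.tr (H : Setup R ρ h h1 h2 c B) (L : ℝ) (hL : 0 ≤ L) (w : ι → ℝ) (D : ℝ) (hD : 0 ≤ D)
    (hw : ∀ i, |w i| ≤ D * (R.p i * (1 + R.l i) ^ 2)) (y : ℝ) :
    |R.op w h y - c y * ∑' i, w i - R.op w (fun t => if L ≤ t then h t - c t else 0) y|
      ≤ 2 * B * D * R.M * Real.exp (-R.θ * (y - L)) := by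
  classical
  rw [R.op_trunc w (fun t => h t - c t) L hL y]
  have hsub : R.S (y - L) ⊆ R.S y := R.S_mono (by linarith)
  have e1 : R.op w h y = ∑ i ∈ R.S y \ R.S (y - L), w i * h (y - R.l i)
      + ∑ i ∈ R.S (y - L), w i * h (y - R.l i) := (Finset.sum_sdiff hsub).symm
  have e2 : ∑ i ∈ R.S (y - L), w i * (h (y - R.l i) - c (y - R.l i))
      = ∑ i ∈ R.S (y - L), w i * h (y - R.l i) - c y * ∑ i ∈ R.S (y - L), w i := by
    rw [Finset.mul_sum, ← Finset.sum_sub_distrib]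
    exact Finset.sum_congr rfl fun i _ => by rw [H.per]; ring
  have e3 : R.op w h y - c y * ∑' i, w i - ∑ i ∈ R.S (y - L), w i * (h (y - R.l i) - c (y - R.l i))
      = ∑ i ∈ R.S y \ R.S (y - L), w i * h (y - R.l i)
        + c y * (∑ i ∈ R.S (y - L), w i - ∑' i, w i) := by rw [e1, e2]; ring
  rw [e3]
  have b1 : |∑ i ∈ R.S y \ R.S (y - L), w i * h (y - R.l i)| ≤
      B * (D * R.M * Real.exp (-R.θ * (y - L))) := by
    refine (Finset.abs_sum_le_sum_abs _ _).trans ?_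
    have := R.tail_fin w D (y - L) hD hw (R.S y \ R.S (y - L)) (fun i hi => by
      rw [Finset.mem_sdiff, R.hS (y - L)] at hi
      exact (not_le.1 hi.2).le)
    refine le_trans ?_ (mul_le_mul_of_nonneg_left this H.hB)
    rw [Finset.mul_sum]
    apply Finset.sum_le_sum
    intro i _
    rw [abs_mul, mul_comm]
    exact mul_le_mul_of_nonneg_right (H.hb _) (abs_nonneg _)
  have b2 : |c y * (∑ i ∈ R.S (y - L), w i - ∑' i, w i)| ≤
      B * (D * R.M * Real.exp (-R.θ * (y - L))) := by
    rw [abs_mul]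
    exact mul_le_mul (H.cb y) (R.tail_tsum w D (y - L) hD hw) (abs_nonneg _) H.hB
  have := abs_add_le (∑ i ∈ R.S y \ R.S (y - L), w i * h (y - R.l i))
    (c y * (∑ i ∈ R.S (y - L), w i - ∑' i, w i))
  linarith

lemma Setup.trs (H : Setup R ρ h h1 h2 c B) (L : ℝ) (hL : 0 ≤ L) (y : ℝ) (hy : 0 ≤ y) :
    |(fun t => if L ≤ t then h t - c t else 0) y
      - R.op R.p (fun t => if L ≤ t then h t - c t else 0) y|
      ≤ (1 + 2 * B * R.M) * (if L ≤ y then Real.exp (-R.θ * (y - L)) else 0) := by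
  by_cases hLy : L ≤ y
  · have h3 := H.tr L hL R.p 1 zero_le_one (fun i => by
      have h1 := R.hp i
      have h2 := R.l_pos i
      rw [abs_of_pos h1, one_mul]
      have : 1 ≤ (1 + R.l i) ^ 2 := by nlinarith
      nlinarith) y
    rw [R.hsum.tsum_eq, mul_one, mul_one] at h3
    dsimp only
    rw [if_pos hLy, if_pos hLy]
    set o := R.op R.p (fun t => if L ≤ t then h t - c t else 0) y
    have h4 : Real.exp (-ρ * y) ≤ Real.exp (-R.θ * (y - L)) := by
      apply Real.exp_le_exp.2
      nlinarith [H.hθρ, R.hθ]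
    have h5 := Real.exp_pos (-ρ * y)
    have h6 := H.eq y hy
    rw [abs_le] at h3 ⊢
    constructor <;> linarith [h3.1, h3.2]
  · rw [R.op_trunc R.p (fun t => h t - c t) L hL y]
    have : R.S (y - L) = ∅ := by
      ext i; rw [R.hS]; simp; have := R.l_pos i; linarith
    rw [this]; simp [hLy]

def K1 (R : Ren ι) (h h1 : ℝ → ℝ) (y : ℝ) : ℝ := h1 y - R.mu * y * h y
def K2 (R : Ren ι) (h h1 h2 : ℝ → ℝ) (y : ℝ) : ℝ :=
  h2 y - 2 * R.mu * y * h1 y + R.mu ^ 2 * y ^ 2 * h y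

lemma Setup.K1eq (H : Setup R ρ h h1 h2 c B) (y : ℝ) (hy : 0 ≤ y) :
    R.K1 h h1 y - R.op R.p (R.K1 h h1) y
      = R.op (fun i => R.p i * R.xi i) h y - R.mu * y * Real.exp (-ρ * y) := by
  have e0 := H.eq y hy
  have e1 := H.eq1 y hy
  have : ∑ i ∈ R.S y, (R.p i * (h1 (y - R.l i) + h (y - R.l i)) - R.mu * y * (R.p i * h (y - R.l i))
      - R.p i * R.K1 h h1 (y - R.l i) - R.p i * R.xi i * h (y - R.l i)) = 0 := by
    apply Finset.sum_eq_zero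
    intro i _
    unfold K1 xi
    ring
  simp only [Finset.sum_sub_distrib, ← Finset.mul_sum] at this
  unfold op at e0 e1 ⊢
  unfold K1 at this ⊢
  dsimp only at this e0 e1 ⊢
  linear_combination this + e1 - R.mu * y * e0

lemma Setup.K2eq (H : Setup R ρ h h1 h2 c B) (y : ℝ) (hy : 0 ≤ y) :
    R.K2 h h1 h2 y - R.op R.p (R.K2 h h1 h2) y
      = 2 * R.op (fun i => R.p i * R.xi i) (R.K1 h h1) y
        + R.op (fun i => R.p i * R.xi i ^ 2) h y + R.mu ^ 2 * y ^ 2 * Real.exp (-ρ * y) := by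
  have e0 := H.eq y hy
  have e1 := H.eq1 y hy
  have e2 := H.eq2 y hy
  have : ∑ i ∈ R.S y, (R.p i * (h2 (y - R.l i) + 2 * h1 (y - R.l i) + h (y - R.l i))
      - 2 * R.mu * y * (R.p i * (h1 (y - R.l i) + h (y - R.l i)))
      - (- (R.mu ^ 2 * y ^ 2)) * (R.p i * h (y - R.l i))
      - R.p i * R.K2 h h1 h2 (y - R.l i) - 2 * (R.p i * R.xi i * R.K1 h h1 (y - R.l i))
      - R.p i * R.xi i ^ 2 * h (y - R.l i)) = 0 := by
    apply Finset.sum_eq_zero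
    intro i _
    unfold K1 K2 xi
    ring
  simp only [Finset.sum_sub_distrib, ← Finset.mul_sum] at this
  unfold op at e0 e1 e2 ⊢
  have eK : R.K2 h h1 h2 y = h2 y - 2 * R.mu * y * h1 y + R.mu ^ 2 * y ^ 2 * h y := rfl
  rw [eK]
  dsimp only at this e0 e1 e2 ⊢
  linear_combination this + e2 - 2 * R.mu * y * e1 + R.mu ^ 2 * y ^ 2 * e0
end

lemma aux1 {A f r U U' E1 E2 C V V' : ℝ} (g1 : |f| ≤ U - U') (g2 : |A - f| ≤ E1) (g9 : 0 ≤ r)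
    (g8 : r ≤ E2) (g4 : E1 + E2 ≤ C * (V - V')) : |A - r| ≤ U + C * V - (U' + C * V') := by
  rw [abs_le] at g1 g2 ⊢
  constructor <;> linarith [g1.1, g1.2, g2.1, g2.2]

lemma aux2 {o a b d e A B D E K : ℝ} (ha : |a| ≤ A) (hb : |b| ≤ B) (hd : |d| ≤ D) (he : |e| ≤ E)
    (hK : A + D + E ≤ K) : |2 * o + a + b + d - e| ≤ 2 * |o| + B + K := by
  have o1a := le_abs_self o
  have o1b := neg_le_abs o
  rw [abs_le] at ha hb hd he ⊢
  constructor <;> linarith [ha.1, ha.2, hb.1, hb.2, hd.1, hd.2, he.1, he.2]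

lemma aux3 {D o e C V V' U U' E T T' : ℝ} (h : |D| ≤ 2 * |o| + e + C * E) (h1 : |o| ≤ U - U')
    (h2 : E ≤ V - V') (h3 : e * 1 ≤ e * (T - T')) (hC : 0 ≤ C) :
    |D| ≤ 2 * U + e * T + C * V - (2 * U' + e * T' + C * V') := by
  have := mul_le_mul_of_nonneg_left h2 hC
  linarith

section
variable {R : Ren ι} {ρ : ℝ} {h h1 h2 c : ℝ → ℝ} {B : ℝ}

lemma Setup.exL (H : Setup R ρ h h1 h2 c B) (e : ℝ) (he : 0 < e) :
    ∃ L : ℝ, 0 ≤ L ∧ ∀ y, L ≤ y → |h y - c y| ≤ e := by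
  have h1 := (Metric.tendsto_atTop.1 H.lim) e he
  obtain ⟨N, hN⟩ := h1
  refine ⟨max N 0, le_max_right _ _, fun y hy => ?_⟩
  have := hN y ((le_max_left _ _).trans hy)
  rw [Real.dist_eq, sub_zero] at this
  exact this.le

lemma Setup.K1sup (H : Setup R ρ h h1 h2 c B) (ε : ℝ) (hε : 0 < ε) :
    ∃ C : ℝ, 0 ≤ C ∧ ∀ X, 1 ≤ X → ∃ V : ℝ → ℝ,
      (∀ y, 0 ≤ y → y ≤ X → V y ≤ ε * Real.sqrt X + C) ∧
      (∀ y, 0 ≤ y → |R.K1 h h1 y - R.op R.p (R.K1 h h1) y| ≤ V y - R.op R.p V y) := by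
  obtain ⟨Bt, hBt, hsup⟩ := R.supExp R.θ R.hθ
  have hM := R.M_nonneg
  have hB := H.hB
  have hδ := R.hδ
  have hτ := R.tau_nonneg
  have hmu := R.mu_pos
  set C0 := 1 + 2 * B * R.M with hC0
  have hC0p : 0 < C0 := by positivity
  set Q := R.tau * (1 + 1 / R.δ) + C0 * Bt / 2 + 1 with hQ
  have hQ0 : 0 < Q := by positivity
  set a := ε / Q with ha
  have ha0 : 0 < a := by positivity
  obtain ⟨L, hL, hLf⟩ := H.exL (a ^ 2) (by positivity)
  obtain ⟨VL, hVL, hVLs⟩ := hsup L hL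
  obtain ⟨V0, hV0, hV0s⟩ := hsup 0 le_rfl
  obtain ⟨Cp, hCp, hpoly⟩ := poly_exp (ρ - R.θ) (by linarith [H.hθρ])
  set C1 := 2 * B * R.Dx * R.M * Real.exp (R.θ * L) + R.mu * Cp with hC1
  have hC1p : 0 ≤ C1 := by
    have := R.Dx_nonneg
    positivity
  refine ⟨C1 * Bt, by positivity, fun X hX => ?_⟩
  set s := Real.sqrt X with hs
  have hs1 : 1 ≤ s := Real.one_le_sqrt.2 hX
  have hss : s ^ 2 = X := Real.sq_sqrt (by linarith)
  have hs0 : 0 < s := by linarith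
  set lam := a / s with hlam
  have hlam0 : 0 < lam := by positivity
  set f : ℝ → ℝ := fun t => if L ≤ t then h t - c t else 0 with hf
  have hfb : ∀ y, |f y| ≤ a ^ 2 := by
    intro y
    simp only [hf]
    split_ifs with hy
    · exact hLf y hy
    · rw [abs_zero]; positivity
  refine ⟨fun t => (lam * R.tau * (1 + t / R.δ) + 1 / (4 * lam) * (2 * a ^ 2 * (C0 * VL t) - f t ^ 2))
    + C1 * V0 t, ?_, ?_⟩
  · intro y hy hyX
    have b1 : lam * R.tau * (1 + y / R.δ) ≤ a * s * (R.tau * (1 + 1 / R.δ)) := by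
      have : lam * (1 + y / R.δ) ≤ a * s * (1 + 1 / R.δ) := by
        have h3 : 1 + y / R.δ ≤ s ^ 2 * (1 + 1 / R.δ) := by
          have : y / R.δ ≤ s ^ 2 / R.δ := by rw [hss]; gcongr
          have h4 : s ^ 2 * (1 + 1 / R.δ) = s ^ 2 + s ^ 2 / R.δ := by ring
          nlinarith
        have h5 := mul_le_mul_of_nonneg_left h3 hlam0.le
        have h6 : lam * (s ^ 2 * (1 + 1 / R.δ)) = a * s * (1 + 1 / R.δ) := by
          rw [hlam]; field_simp
        linarith
      have := mul_le_mul_of_nonneg_right this hτ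
      linarith
    have b2 : 1 / (4 * lam) * (2 * a ^ 2 * (C0 * VL y) - f y ^ 2) ≤ a * s * (C0 * Bt / 2) := by
      have h3 : 2 * a ^ 2 * (C0 * VL y) - f y ^ 2 ≤ 2 * a ^ 2 * (C0 * Bt) := by
        have := mul_le_mul_of_nonneg_left (hVL y).2 (show 0 ≤ 2 * a ^ 2 * C0 by positivity)
        nlinarith [sq_nonneg (f y)]
      have h4 := mul_le_mul_of_nonneg_left h3 (show 0 ≤ 1 / (4 * lam) by positivity)
      have h5 : 1 / (4 * lam) * (2 * a ^ 2 * (C0 * Bt)) = a * s * (C0 * Bt / 2) := by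
        rw [hlam]; field_simp; ring
      linarith
    have b3 : C1 * V0 y ≤ C1 * Bt := mul_le_mul_of_nonneg_left (hV0 y).2 hC1p
    have b4 : a * s * Q = ε * s := by rw [ha]; field_simp
    have b5 : 0 < a * s := by positivity
    rw [hQ] at b4
    dsimp only
    nlinarith
  · intro y hy
    rw [H.K1eq y hy]
    have g1 := R.stepsup f (fun t => C0 * VL t) (a ^ 2) lam y hlam0 hy (hfb y) (by
      refine (H.trs L hL y hy).trans ?_
      rw [R.op_smul, ← mul_sub]
      exact mul_le_mul_of_nonneg_left (hVLs y hy) hC0p.le)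
    have g2 := H.tr L hL (fun i => R.p i * R.xi i) R.Dx R.Dx_nonneg R.xi_b1 y
    rw [R.xi0.tsum_eq, mul_zero, sub_zero] at g2
    have g3 := hV0s y hy
    rw [if_pos hy, sub_zero] at g3
    have g4 := mul_le_mul_of_nonneg_left g3 hC1p
    rw [R.op_add (f := fun t => lam * R.tau * (1 + t / R.δ) + 1 / (4 * lam) * (2 * a ^ 2 * (C0 * VL t) - f t ^ 2)),
      R.op_smul (f := V0)]
    have g5 : Real.exp (-R.θ * (y - L)) = Real.exp (R.θ * L) * Real.exp (-R.θ * y) := by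
      rw [← Real.exp_add]; congr 1; ring
    have g6 : y * Real.exp (-ρ * y) ≤ Cp * Real.exp (-R.θ * y) := by
      have h3 : y ≤ Cp * Real.exp ((ρ - R.θ) * y) := by nlinarith [hpoly y hy]
      have h4 := mul_le_mul_of_nonneg_right h3 (Real.exp_pos (-ρ * y)).le
      rw [mul_assoc Cp, ← Real.exp_add] at h4
      rwa [show (ρ - R.θ) * y + -ρ * y = -R.θ * y by ring] at h4
    have g7 : 0 ≤ y * Real.exp (-ρ * y) := by positivity
    have g8 := mul_le_mul_of_nonneg_left g6 hmu.le
    have g9 : 0 ≤ R.mu * y * Real.exp (-ρ * y) := by positivity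
    rw [g5] at g2
    have g10 : C1 * Real.exp (-R.θ * y) = 2 * B * R.Dx * R.M * (Real.exp (R.θ * L) * Real.exp (-R.θ * y))
      + R.mu * (Cp * Real.exp (-R.θ * y)) := by rw [hC1]; ring
    rw [g10] at g4
    dsimp only at g1 ⊢
    exact aux1 g1 g2 g9 ((mul_assoc _ _ _).le.trans g8) g4

lemma Setup.K1bd (X ε C : ℝ) (V : ℝ → ℝ)
    (hV1 : ∀ y, 0 ≤ y → y ≤ X → V y ≤ ε * Real.sqrt X + C)
    (hV2 : ∀ y, 0 ≤ y → |R.K1 h h1 y - R.op R.p (R.K1 h h1) y| ≤ V y - R.op R.p V y) :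
    ∀ y, 0 ≤ y → y ≤ X → |R.K1 h h1 y| ≤ ε * Real.sqrt X + C := by
  intro y hy hyX
  refine le_trans ?_ (hV1 y hy hyX)
  rw [abs_le']
  constructor
  · exact R.comp X _ V (fun t ht _ => (le_abs_self _).trans (hV2 t ht)) y hy hyX
  · refine R.comp X (fun t => - R.K1 h h1 t) V (fun t ht _ => le_trans ?_ (hV2 t ht)) y hy hyX
    rw [R.op_neg]
    refine le_trans ?_ (neg_le_abs _)
    linarith

lemma Setup.K1lim (H : Setup R ρ h h1 h2 c B) (ε : ℝ) (hε : 0 < ε) :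
    ∃ C : ℝ, 0 ≤ C ∧ ∀ X, 1 ≤ X → |R.K1 h h1 X| ≤ ε * Real.sqrt X + C := by
  obtain ⟨C, hC, hK⟩ := H.K1sup ε hε
  refine ⟨C, hC, fun X hX => ?_⟩
  obtain ⟨V, hV1, hV2⟩ := hK X hX
  exact Setup.K1bd X ε C V hV1 hV2 X (by linarith) le_rfl

set_option maxHeartbeats 1600000 in
lemma Setup.Dbd (H : Setup R ρ h h1 h2 c B) (e : ℝ) (he : 0 < e) :
    ∃ C : ℝ, 0 ≤ C ∧ ∀ y, 0 ≤ y →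
      |(R.K2 h h1 h2 y - R.mu * R.tau * (y * c y))
        - R.op R.p (fun t => R.K2 h h1 h2 t - R.mu * R.tau * (t * c t)) y|
      ≤ 2 * |R.op (fun i => R.p i * R.xi i) (R.K1 h h1) y| + e * R.tau
        + C * Real.exp (-(R.θ / 2) * y) := by
  have hM := R.M_nonneg
  have hB := H.hB
  have hτ := R.tau_nonneg
  have hmu := R.mu_pos
  have hmean := R.mean_pos
  have hD := R.Dx_nonneg
  have hθ := R.hθ
  obtain ⟨L, hL, hLf⟩ := H.exL e he
  obtain ⟨Cp, hCp, hpoly⟩ := poly_exp (R.θ / 2) (by linarith)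
  set A1 := 2 * B * R.Dx * R.M * Real.exp (R.θ * L) with hA1
  have hA1p : 0 ≤ A1 := by positivity
  set A2 := R.mu * R.tau * B * R.M with hA2
  have hA2p : 0 ≤ A2 := by positivity
  refine ⟨(A1 + R.mu ^ 2 + A2) * Cp, by positivity, fun y hy => ?_⟩
  rw [R.op_sub, R.op_smul]
  have e1 := H.K2eq y hy
  set f : ℝ → ℝ := fun t => if L ≤ t then h t - c t else 0 with hf
  have hfb : ∀ y, |f y| ≤ e := by
    intro y
    simp only [hf]
    split_ifs with hy
    · exact hLf y hy
    · rw [abs_zero]; positivity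
  have g2 := H.tr L hL (fun i => R.p i * R.xi i ^ 2) R.Dx R.Dx_nonneg R.xi_b2 y
  have ht : ∑' i, R.p i * R.xi i ^ 2 = R.tau := rfl
  rw [ht] at g2
  have g3 : |R.op (fun i => R.p i * R.xi i ^ 2) f y| ≤ e * R.tau := by
    have hnn : ∀ i, 0 ≤ R.p i * R.xi i ^ 2 := fun i => by have := R.hp i; positivity
    unfold op
    refine (Finset.abs_sum_le_sum_abs _ _).trans ?_
    have : ∑ i ∈ R.S y, R.p i * R.xi i ^ 2 ≤ R.tau := sum_le_hasSum _ (fun i _ => hnn i) R.xi2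
    refine le_trans ?_ (mul_le_mul_of_nonneg_left this he.le)
    rw [Finset.mul_sum]
    apply Finset.sum_le_sum
    intro i _
    dsimp only
    rw [abs_mul, abs_of_nonneg (hnn i), mul_comm]
    exact mul_le_mul_of_nonneg_right (hfb _) (hnn i)
  -- the mean part
  have g4 : R.op R.p (fun t => t * c t) y
      = c y * (y * ∑ i ∈ R.S y, R.p i - ∑ i ∈ R.S y, R.p i * R.l i) := by
    unfold op
    rw [Finset.mul_sum, ← Finset.sum_sub_distrib, Finset.mul_sum]
    exact Finset.sum_congr rfl fun i _ => by dsimp only; rw [H.per]; ring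
  have t1 := R.tail_tsum R.p 1 y zero_le_one (fun i => by
      have h1 := R.hp i
      have h2 := R.l_pos i
      rw [abs_of_pos h1, one_mul]
      have : 1 ≤ (1 + R.l i) ^ 2 := by nlinarith
      nlinarith)
  have t2 := R.tail_tsum (fun i => R.p i * R.l i) 1 y zero_le_one R.pl_bound
  rw [R.hsum.tsum_eq, one_mul] at t1
  have ht2 : ∑' i, R.p i * R.l i = R.mean := rfl
  rw [ht2, one_mul] at t2
  set Sp := ∑ i ∈ R.S y, R.p i
  set Sl := ∑ i ∈ R.S y, R.p i * R.l i
  set E := Real.exp (-R.θ * y) with hE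
  have hE0 : 0 < E := Real.exp_pos _
  have g5 : |R.mu * R.tau * (c y * (y * (1 - Sp) + (Sl - R.mean)))| ≤ A2 * ((1 + y) * E) := by
    have h3 : |y * (1 - Sp) + (Sl - R.mean)| ≤ R.M * ((1 + y) * E) := by
      refine (abs_add_le _ _).trans ?_
      rw [abs_mul, abs_of_nonneg hy, abs_sub_comm]
      have := mul_le_mul_of_nonneg_left t1 hy
      nlinarith
    have h4 : |c y * (y * (1 - Sp) + (Sl - R.mean))| ≤ B * (R.M * ((1 + y) * E)) := by
      rw [abs_mul]
      exact mul_le_mul (H.cb y) h3 (abs_nonneg _) hB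
    rw [abs_mul, abs_of_nonneg (mul_nonneg hmu.le hτ)]
    have := mul_le_mul_of_nonneg_left h4 (mul_nonneg hmu.le hτ)
    rw [hA2]; linarith
  have g6 : R.mu * R.mean = 1 := by unfold mu; field_simp
  have hexpL : Real.exp (-R.θ * (y - L)) = Real.exp (R.θ * L) * E := by
    rw [hE, ← Real.exp_add]; congr 1; ring
  rw [hexpL] at g2
  have g7 : |R.mu ^ 2 * y ^ 2 * Real.exp (-ρ * y)| ≤ R.mu ^ 2 * ((1 + y) ^ 2 * E) := by
    rw [abs_of_nonneg (by positivity), mul_assoc]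
    apply mul_le_mul_of_nonneg_left _ (by positivity)
    apply mul_le_mul _ _ (Real.exp_pos _).le (by positivity)
    · exact pow_le_pow_left₀ hy (le_add_of_nonneg_left zero_le_one) 2
    · apply Real.exp_le_exp.2
      exact mul_le_mul_of_nonneg_right (neg_le_neg H.hθρ.le) hy
  have hEE : (1 + y) ^ 2 * E ≤ Cp * Real.exp (-(R.θ / 2) * y) := by
    have h4 := mul_le_mul_of_nonneg_right (hpoly y hy) hE0.le
    rw [hE, mul_assoc Cp, ← Real.exp_add] at h4
    rwa [show R.θ / 2 * y + -R.θ * y = -(R.θ / 2) * y by ring] at h4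
  have q1 : E ≤ (1 + y) ^ 2 * E := by
    exact le_mul_of_one_le_left hE0.le (one_le_pow₀ (le_add_of_nonneg_right hy))
  have q2 : (1 + y) * E ≤ (1 + y) ^ 2 * E := by
    apply mul_le_mul_of_nonneg_right _ hE0.le
    exact le_self_pow₀ (le_add_of_nonneg_right hy) two_ne_zero
  have r1 : A1 * E ≤ A1 * ((1 + y) ^ 2 * E) := mul_le_mul_of_nonneg_left q1 hA1p
  have r2 : A2 * ((1 + y) * E) ≤ A2 * ((1 + y) ^ 2 * E) := mul_le_mul_of_nonneg_left q2 hA2p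
  have r3 := mul_le_mul_of_nonneg_left hEE (show 0 ≤ A1 + R.mu ^ 2 + A2 by positivity)
  set o1 := R.op (fun i => R.p i * R.xi i) (R.K1 h h1) y
  set o2 := R.op (fun i => R.p i * R.xi i ^ 2) h y
  set o3 := R.op (fun i => R.p i * R.xi i ^ 2) f y
  have fin : R.K2 h h1 h2 y - R.mu * R.tau * (y * c y)
      - (R.op R.p (R.K2 h h1 h2) y - R.mu * R.tau * R.op R.p (fun t => t * c t) y)
      = 2 * o1 + (o2 - c y * R.tau - o3) + o3 + R.mu ^ 2 * y ^ 2 * Real.exp (-ρ * y)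
        - R.mu * R.tau * (c y * (y * (1 - Sp) + (Sl - R.mean))) := by
    rw [g4]
    linear_combination e1 - c y * R.tau * g6
  have s1 : 2 * B * R.Dx * R.M * (Real.exp (R.θ * L) * E) = A1 * E := by rw [hA1]; ring
  rw [s1] at g2
  have hfin2 : |R.K2 h h1 h2 y - R.mu * R.tau * (y * c y)
      - (R.op R.p (R.K2 h h1 h2) y - R.mu * R.tau * R.op R.p (fun t => t * c t) y)|
      ≤ 2 * |o1| + e * R.tau + (A1 + R.mu ^ 2 + A2) * Cp * Real.exp (-(R.θ / 2) * y) := by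
    rw [fin]
    refine aux2 g2 g3 g7 g5 ?_
    refine le_trans ?_ (r3.trans (mul_assoc _ _ _).ge)
    rw [add_mul (A1 + R.mu ^ 2), add_mul A1]
    exact add_le_add (add_le_add r1 le_rfl) r2
  exact hfin2

lemma Setup.Dlim (H : Setup R ρ h h1 h2 c B) (ε : ℝ) (hε : 0 < ε) :
    ∃ C : ℝ, 0 ≤ C ∧ ∀ X, 1 ≤ X →
      |R.K2 h h1 h2 X - R.mu * R.tau * (X * c X)| ≤ ε * X + C := by
  have hτ := R.tau_nonneg
  have hδ := R.hδ
  set Q := 3 * R.tau * (1 + 1 / R.δ) + 2 with hQ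
  have hQ0 : 0 < Q := by positivity
  set a := ε / Q with ha
  have ha0 : 0 < a := by positivity
  obtain ⟨C1, hC1, hK⟩ := H.K1sup a ha0
  obtain ⟨C2, hC2, hDb⟩ := H.Dbd a ha0
  obtain ⟨Bt, hBt, hsup⟩ := R.supExp (R.θ / 2) (by linarith [R.hθ])
  obtain ⟨V0, hV0, hV0s⟩ := hsup 0 le_rfl
  refine ⟨2 * C1 ^ 2 / a + C2 * Bt, by positivity, fun X hX => ?_⟩
  have hX0 : 0 ≤ X := by linarith
  obtain ⟨V, hV1, hV2⟩ := hK X hX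
  have hKb := Setup.K1bd X a C1 V hV1 hV2
  set κ := a * Real.sqrt X + C1 with hκ
  have hκ0 : 0 ≤ κ := by positivity
  set U : ℝ → ℝ := fun t => a * R.tau * (1 + t / R.δ)
    + 1 / (4 * a) * (2 * κ * V t - R.K1 h h1 t ^ 2) with hU
  set Dd : ℝ → ℝ := fun t => R.K2 h h1 h2 t - R.mu * R.tau * (t * c t) with hDd
  set W : ℝ → ℝ := fun t => 2 * U t + a * R.tau * (1 + t / R.δ) + C2 * V0 t with hW
  have hW' : ∀ y, 0 ≤ y → y ≤ X → |Dd y - R.op R.p Dd y| ≤ W y - R.op R.p W y := by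
    intro y hy hyX
    have e1 : R.op R.p W y = 2 * R.op R.p U y + a * R.tau * R.op R.p (fun t => 1 + t / R.δ) y
        + C2 * R.op R.p V0 y := by
      rw [hW, R.op_add, R.op_add, R.op_smul, R.op_smul, R.op_smul]
    rw [e1]
    have g3 := hV0s y hy
    rw [if_pos hy, sub_zero] at g3
    exact aux3 (hDb y hy) (R.stepsup (R.K1 h h1) V κ a y ha0 hy (hKb y hy hyX) (hV2 y hy)) g3
      (mul_le_mul_of_nonneg_left (R.supLin y hy) (by positivity)) hC2
  have hfinal : |Dd X| ≤ W X := by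
    rw [abs_le']
    constructor
    · exact R.comp X _ W (fun t ht htX => (le_abs_self _).trans (hW' t ht htX)) X hX0 le_rfl
    · refine R.comp X (fun t => - Dd t) W (fun t ht htX => le_trans ?_ (hW' t ht htX)) X hX0 le_rfl
      rw [R.op_neg]
      refine le_trans ?_ (neg_le_abs _)
      linarith
  refine hfinal.trans ?_
  have b1 : 1 + X / R.δ ≤ X * (1 + 1 / R.δ) := by
    have : X * (1 + 1 / R.δ) = X + X / R.δ := by ring
    linarith
  have b2 := mul_le_mul_of_nonneg_left b1 (show 0 ≤ a * R.tau by positivity)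
  have b3 : κ ^ 2 ≤ 2 * a ^ 2 * X + 2 * C1 ^ 2 := by
    have := Real.sq_sqrt hX0
    have h3 : 2 * a ^ 2 * X = 2 * (a * Real.sqrt X) ^ 2 := by rw [mul_pow, this]; ring
    rw [h3, hκ]
    nlinarith [sq_nonneg (a * Real.sqrt X - C1)]
  have b4 : 2 * κ * V X - R.K1 h h1 X ^ 2 ≤ 2 * (2 * a ^ 2 * X + 2 * C1 ^ 2) := by
    have := mul_le_mul_of_nonneg_left (hV1 X hX0 le_rfl) hκ0
    nlinarith [sq_nonneg (R.K1 h h1 X)]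
  have b5 := mul_le_mul_of_nonneg_left b4 (show 0 ≤ 1 / (4 * a) by positivity)
  have b6 : 1 / (4 * a) * (2 * (2 * a ^ 2 * X + 2 * C1 ^ 2)) = a * X + C1 ^ 2 / a := by
    field_simp; ring
  rw [b6] at b5
  have b7 : C2 * V0 X ≤ C2 * Bt := mul_le_mul_of_nonneg_left (hV0 X).2 hC2
  have b8 : a * X * Q = ε * X := by rw [ha]; field_simp
  rw [hQ] at b8
  have b9 : 2 * C1 ^ 2 / a = 2 * (C1 ^ 2 / a) := by ring
  simp only [hW, hU]
  rw [b9]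
  linarith
end

lemma lim_of_bd {F G : ℝ → ℝ} (hG : Tendsto G atTop atTop)
    (h : ∀ ε : ℝ, 0 < ε → ∃ C : ℝ, 0 ≤ C ∧ ∀ X, 1 ≤ X → |F X| ≤ ε * G X + C) :
    Tendsto (fun X => F X / G X) atTop (nhds 0) := by
  rw [Metric.tendsto_nhds]
  intro ε hε
  obtain ⟨C, hC, hb⟩ := h (ε / 2) (by linarith)
  filter_upwards [eventually_ge_atTop 1, hG.eventually_gt_atTop (2 * C / ε),
    hG.eventually_gt_atTop 0] with X h1 h2 h3
  rw [Real.dist_eq, sub_zero, abs_div, abs_of_pos h3, div_lt_iff₀ h3]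
  rw [div_lt_iff₀ hε] at h2
  linarith [hb X h1]

section
variable {R : Ren ι} {ρ : ℝ} {h h1 h2 c : ℝ → ℝ} {B : ℝ}

lemma Setup.concl (H : Setup R ρ h h1 h2 c B) (b : ℝ) (hb0 : 0 < b) (hbc : ∀ y, b ≤ c y) :
    Tendsto (fun X => (h2 X / h X - (h1 X / h X) ^ 2) / X) atTop (nhds (R.mu * R.tau)) := by
  have hh : ∀ᶠ X in atTop, b / 2 ≤ h X := by
    obtain ⟨L, hL, hLf⟩ := H.exL (b / 2) (by linarith)
    filter_upwards [eventually_ge_atTop L] with X hX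
    have := abs_le.1 (hLf X hX)
    linarith [hbc X, this.1]
  have hinv : ∀ᶠ X in atTop, |1 / h X| ≤ 2 / b := by
    filter_upwards [hh] with X hX
    have : 0 < h X := by linarith
    rw [abs_of_pos (by positivity), div_le_div_iff₀ this hb0]
    linarith
  have l1 : Tendsto (fun X => R.K1 h h1 X / Real.sqrt X) atTop (nhds 0) :=
    lim_of_bd Real.tendsto_sqrt_atTop (fun ε hε => H.K1lim ε hε)
  have l2 : Tendsto (fun X => (R.K2 h h1 h2 X - R.mu * R.tau * (X * c X)) / X) atTop (nhds 0) :=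
    lim_of_bd tendsto_id (fun ε hε => H.Dlim ε hε)
  have m1 := bdd_le_mul_tendsto_zero' (2 / b) hinv l1
  have m2 := bdd_le_mul_tendsto_zero' (2 / b) hinv l2
  have m3 := bdd_le_mul_tendsto_zero' (2 / b) hinv H.lim
  have m4 := ((m2.sub (m3.const_mul (R.mu * R.tau))).add_const (R.mu * R.tau)).sub (m1.pow 2)
  have ez : (0:ℝ) - R.mu * R.tau * 0 + R.mu * R.tau - 0 ^ 2 = R.mu * R.tau := by ring
  rw [ez] at m4
  refine m4.congr' ?_
  filter_upwards [hh, eventually_gt_atTop 0] with X hX hX0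
  have hp : 0 < h X := by linarith
  have hs := Real.sq_sqrt hX0.le
  have hs0 : 0 < Real.sqrt X := Real.sqrt_pos.2 hX0
  have e1 : (1 / h X * (R.K1 h h1 X / Real.sqrt X)) ^ 2 = (R.K1 h h1 X / h X) ^ 2 / X := by
    rw [mul_pow, div_pow (R.K1 h h1 X), hs]; ring
  rw [e1]
  unfold K2 K1
  field_simp
  ring
end

end Ren

lemma af_finite (P : Set ℕ) (m n : ℕ) (hn : n ≠ 0) :
    Finite {t : Fin m → ℕ // (∀ i, t i ∈ P) ∧ ∏ i, t i = n} := by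
  have h1 : (Set.pi Set.univ (fun _ : Fin m => Set.Iic n)).Finite :=
    Set.Finite.pi' (fun _ => Set.finite_Iic n) |>.subset (by
      intro t ht i; exact ht i (Set.mem_univ i))
  refine Set.Finite.subset h1 ?_
  rintro t ⟨_, ht⟩ i _
  exact Nat.le_of_dvd (Nat.pos_of_ne_zero hn) (ht ▸ Finset.dvd_prod_of_mem t (Finset.mem_univ i))

lemma af_zero (P : Set ℕ) (n : ℕ) : af P 0 n = if n = 1 then 1 else 0 := by
  unfold af
  split_ifs with h
  · subst h
    rw [Nat.card_eq_one_iff_unique]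
    refine ⟨⟨fun a b => Subtype.ext (Subsingleton.elim _ _)⟩, ⟨⟨fun i => 0, ?_, ?_⟩⟩⟩
    · intro i; exact i.elim0
    · simp
  · rw [Nat.card_eq_zero]
    left
    refine ⟨fun a => h ?_⟩
    have := a.2.2
    simpa using this.symm

open Classical in
lemma af_succ (P : Set ℕ) (m n : ℕ) (hn : n ≠ 0) :
    af P (m + 1) n = ∑ x ∈ n.divisorsAntidiagonal, (if x.1 ∈ P then 1 else 0) * af P m x.2 := by
  have e : {t : Fin (m + 1) → ℕ // (∀ i, t i ∈ P) ∧ ∏ i, t i = n} ≃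
      (x : {x // x ∈ n.divisorsAntidiagonal.filter (fun x => x.1 ∈ P)}) ×
        {t : Fin m → ℕ // (∀ i, t i ∈ P) ∧ ∏ i, t i = x.1.2} :=
    { toFun := fun t => ⟨⟨(t.1 0, ∏ i, t.1 (Fin.succ i)), by
        rw [Finset.mem_filter, Nat.mem_divisorsAntidiagonal]
        refine ⟨⟨?_, hn⟩, t.2.1 0⟩
        exact (Fin.prod_univ_succ t.1).symm.trans t.2.2⟩, ⟨fun i => t.1 (Fin.succ i), fun i => t.2.1 _, rfl⟩⟩
      invFun := fun z => ⟨Fin.cons z.1.1.1 z.2.1, by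
        obtain ⟨⟨x, hx⟩, t, ht1, ht2⟩ := z
        rw [Finset.mem_filter, Nat.mem_divisorsAntidiagonal] at hx
        refine ⟨fun i => ?_, ?_⟩
        · refine Fin.cases ?_ (fun j => ?_) i
          · exact hx.2
          · exact ht1 j
        · rw [Fin.prod_univ_succ]
          simp only [Fin.cons_zero, Fin.cons_succ]
          rw [ht2, hx.1.1]⟩
      left_inv := fun t => Subtype.ext (Fin.cons_self_tail t.1)
      right_inv := by
        rintro ⟨⟨⟨x1, x2⟩, hx⟩, t, ht1, ht2⟩
        dsimp only at ht2
        subst ht2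
        rfl }
  have hfin : ∀ x : {x // x ∈ n.divisorsAntidiagonal.filter (fun x => x.1 ∈ P)},
      Finite {t : Fin m → ℕ // (∀ i, t i ∈ P) ∧ ∏ i, t i = x.1.2} := by
    rintro ⟨x, hx⟩
    rw [Finset.mem_filter, Nat.mem_divisorsAntidiagonal] at hx
    apply af_finite
    rintro h0
    apply hx.1.2
    rw [← hx.1.1]
    dsimp only at h0
    rw [h0, mul_zero]
  unfold af
  rw [Nat.card_congr e, Nat.card_sigma, Finset.sum_coe_sort (n.divisorsAntidiagonal.filter (fun x => x.1 ∈ P))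
    (fun x => Nat.card {t : Fin m → ℕ // (∀ i, t i ∈ P) ∧ ∏ i, t i = x.2}), Finset.sum_filter]
  apply Finset.sum_congr rfl
  intro x _
  split_ifs <;> simp

lemma af_big (P : Set ℕ) (hP : ∀ n ∈ P, 2 ≤ n) (m n : ℕ) (h1 : n < 2 ^ m) :
    af P m n = 0 := by
  unfold af
  rw [Nat.card_eq_zero]
  left
  refine ⟨fun t => ?_⟩
  have h2 : ∏ _i : Fin m, 2 ≤ ∏ i, t.1 i := Finset.prod_le_prod' fun i _ => hP _ (t.2.1 i)
  rw [t.2.2] at h2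
  simp at h2
  omega

/-- weighted counting function -/
def Bw (P : Set ℕ) (u : ℕ → ℝ) (N : ℕ) : ℝ := ∑ n ∈ Finset.Icc 1 N, ∑' m : ℕ, u m * (af P m n : ℝ)

def cw (P : Set ℕ) (m N : ℕ) : ℝ := ∑ n ∈ Finset.Icc 1 N, (af P m n : ℝ)

lemma Bw_eq (P : Set ℕ) (hP : ∀ n ∈ P, 2 ≤ n) (u : ℕ → ℝ) (N K : ℕ) (h : N ≤ K) :
    Bw P u N = ∑ m ∈ Finset.range K, u m * cw P m N := by
  unfold Bw cw
  simp only [Finset.mul_sum]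
  rw [Finset.sum_comm]
  apply Finset.sum_congr rfl
  intro n hn
  rw [Finset.mem_Icc] at hn
  apply tsum_eq_sum
  intro m hm
  rw [Finset.mem_range, not_lt] at hm
  rw [af_big P hP m n (lt_of_le_of_lt (by omega : n ≤ m) Nat.lt_two_pow_self)]
  simp

lemma cw_zero (P : Set ℕ) (N : ℕ) (hN : 1 ≤ N) : cw P 0 N = 1 := by
  unfold cw
  rw [Finset.sum_eq_single 1]
  · simp [af_zero]
  · intro n _ hn; simp [af_zero, hn]
  · intro h; simp at h; omega

open Classical in
lemma cw_succ (P : Set ℕ) (m N : ℕ) :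
    cw P (m + 1) N = ∑ d ∈ (Finset.Icc 1 N).filter (· ∈ P), cw P m (N / d) := by
  let f : ArithmeticFunction ℝ := ⟨fun n => if n = 0 then 0 else if n ∈ P then 1 else 0, by simp⟩
  let g : ArithmeticFunction ℝ := ⟨fun n => if n = 0 then 0 else (af P m n : ℝ), by simp⟩
  have h1 := ArithmeticFunction.sum_Ioc_mul_eq_sum_sum f g N
  have hI : ∀ N : ℕ, Finset.Ioc 0 N = Finset.Icc 1 N := fun N => by ext; simp; omega
  simp only [hI] at h1
  have h2 : cw P (m + 1) N = ∑ n ∈ Finset.Icc 1 N, (f * g) n := by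
    unfold cw
    apply Finset.sum_congr rfl
    intro n hn
    rw [Finset.mem_Icc] at hn
    rw [af_succ P m n (by omega), ArithmeticFunction.mul_apply]
    push_cast
    apply Finset.sum_congr rfl
    intro x hx
    have hx1 := Nat.ne_zero_of_mem_divisorsAntidiagonal hx
    simp [f, g, hx1.1, hx1.2]
  rw [h2, h1, Finset.sum_filter]
  apply Finset.sum_congr rfl
  intro d hd
  rw [Finset.mem_Icc] at hd
  have hg : ∑ k ∈ Finset.Icc 1 (N / d), g k = cw P m (N / d) := by
    unfold cw
    apply Finset.sum_congr rfl
    intro k hk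
    rw [Finset.mem_Icc] at hk
    simp [g, show k ≠ 0 by omega]
  rw [hg]
  simp [f, show d ≠ 0 by omega]

open Classical in
lemma Bw_rec (P : Set ℕ) (hP : ∀ n ∈ P, 2 ≤ n) (u : ℕ → ℝ) (N : ℕ) (hN : 1 ≤ N) :
    Bw P u N = u 0 + ∑ d ∈ (Finset.Icc 1 N).filter (· ∈ P), Bw P (fun m => u (m + 1)) (N / d) := by
  rw [Bw_eq P hP u N (N + 1) (by omega), Finset.sum_range_succ', cw_zero P N hN, mul_one, add_comm]
  congr 1
  have : ∀ d ∈ (Finset.Icc 1 N).filter (· ∈ P), Bw P (fun m => u (m + 1)) (N / d)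
      = ∑ m ∈ Finset.range N, u (m + 1) * cw P m (N / d) := fun d _ =>
    Bw_eq P hP _ _ N (Nat.div_le_self N d)
  rw [Finset.sum_congr rfl this, Finset.sum_comm]
  apply Finset.sum_congr rfl
  intro m _
  rw [cw_succ, Finset.mul_sum]

lemma Bw_nonneg (P : Set ℕ) (u : ℕ → ℝ) (hu : ∀ m, 0 ≤ u m) (N : ℕ) : 0 ≤ Bw P u N :=
  Finset.sum_nonneg fun _ _ => tsum_nonneg fun m => mul_nonneg (hu m) (Nat.cast_nonneg _)

lemma Bw_mono (P : Set ℕ) (u : ℕ → ℝ) (hu : ∀ m, 0 ≤ u m) {N N' : ℕ} (h : N ≤ N') :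
    Bw P u N ≤ Bw P u N' :=
  Finset.sum_le_sum_of_subset_of_nonneg (Finset.Icc_subset_Icc le_rfl h)
    fun _ _ _ => tsum_nonneg fun m => mul_nonneg (hu m) (Nat.cast_nonneg _)

def hw (P : Set ℕ) (ρ : ℝ) (u : ℕ → ℝ) (y : ℝ) : ℝ := Real.exp (-ρ * y) * Bw P u ⌊Real.exp y⌋₊

lemma Bw_add (P : Set ℕ) (hP : ∀ n ∈ P, 2 ≤ n) (u v : ℕ → ℝ) (N : ℕ) :
    Bw P (fun m => u m + v m) N = Bw P u N + Bw P v N := by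
  rw [Bw_eq P hP _ N N le_rfl, Bw_eq P hP u N N le_rfl, Bw_eq P hP v N N le_rfl,
    ← Finset.sum_add_distrib]
  exact Finset.sum_congr rfl fun m _ => by ring

lemma Bw_smul (P : Set ℕ) (hP : ∀ n ∈ P, 2 ≤ n) (a : ℝ) (u : ℕ → ℝ) (N : ℕ) :
    Bw P (fun m => a * u m) N = a * Bw P u N := by
  rw [Bw_eq P hP _ N N le_rfl, Bw_eq P hP u N N le_rfl, Finset.mul_sum]
  exact Finset.sum_congr rfl fun m _ => by ring

open Classical in
def mkRen (P : Set ℕ) (hP : ∀ n ∈ P, 2 ≤ n) (ρ θ : ℝ) (hθ : 0 < θ)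
    (hs : HasSum (fun n : P => ((n : ℕ) : ℝ) ^ (-ρ)) 1)
    (he : Summable fun n : P => ((n : ℕ) : ℝ) ^ (-ρ) * (1 + Real.log (n : ℕ)) ^ 2
      * Real.exp (θ * Real.log (n : ℕ))) : Ren P where
  p := fun n => ((n : ℕ) : ℝ) ^ (-ρ)
  l := fun n => Real.log (n : ℕ)
  S := fun y => (Finset.Icc 1 ⌊Real.exp y⌋₊).subtype (· ∈ P)
  δ := Real.log 2
  θ := θ
  hp := fun n => Real.rpow_pos_of_pos (by have := hP n n.2; exact_mod_cast (by omega : 0 < (n : ℕ))) _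
  hsum := hs
  hδ := Real.log_pos (by norm_num)
  hl := fun n => Real.log_le_log (by norm_num) (by exact_mod_cast hP n n.2)
  hS := fun y n => by
    have h2 := hP n n.2
    rw [Finset.mem_subtype, Finset.mem_Icc, Nat.le_floor_iff (Real.exp_pos y).le,
      Real.log_le_iff_le_exp (by exact_mod_cast (by omega : 0 < (n : ℕ)))]
    exact ⟨fun h => h.2, fun h => ⟨by omega, h⟩⟩
  hθ := hθ
  hexp := he

lemma hw_rec (P : Set ℕ) (hP : ∀ n ∈ P, 2 ≤ n) (ρ θ : ℝ) (hθ : 0 < θ)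
    (hs : HasSum (fun n : P => ((n : ℕ) : ℝ) ^ (-ρ)) 1)
    (he : Summable fun n : P => ((n : ℕ) : ℝ) ^ (-ρ) * (1 + Real.log (n : ℕ)) ^ 2
      * Real.exp (θ * Real.log (n : ℕ))) (u : ℕ → ℝ) (y : ℝ) (hy : 0 ≤ y) :
    hw P ρ u y = u 0 * Real.exp (-ρ * y)
      + (mkRen P hP ρ θ hθ hs he).op (mkRen P hP ρ θ hθ hs he).p (hw P ρ (fun m => u (m + 1))) y := by
  classical
  have hN : 1 ≤ ⌊Real.exp y⌋₊ := by
    rw [Nat.le_floor_iff (Real.exp_pos y).le]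
    simpa using Real.one_le_exp hy
  have e1 : (mkRen P hP ρ θ hθ hs he).op (mkRen P hP ρ θ hθ hs he).p (hw P ρ (fun m => u (m + 1))) y
      = ∑ d ∈ (Finset.Icc 1 ⌊Real.exp y⌋₊).filter (· ∈ P),
        ((d : ℝ) ^ (-ρ) * hw P ρ (fun m => u (m + 1)) (y - Real.log d)) := by
    rw [← Finset.sum_subtype_eq_sum_filter]
    rfl
  rw [e1, hw, Bw_rec P hP u _ hN, mul_add, Finset.mul_sum, mul_comm (u 0)]
  congr 1
  apply Finset.sum_congr rfl
  intro d hd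
  rw [Finset.mem_filter, Finset.mem_Icc] at hd
  have hd0 : (0:ℝ) < d := by exact_mod_cast (by omega : 0 < d)
  unfold hw
  rw [Real.exp_sub, Real.exp_log hd0, Nat.floor_div_natCast, ← mul_assoc, Real.rpow_def_of_pos hd0,
    ← Real.exp_add]
  congr 2
  ring

lemma hw_isH (P : Set ℕ) (hP : ∀ n ∈ P, 2 ≤ n) (ρ θ : ℝ) (hρ : 0 < ρ) (hθ : 0 < θ)
    (hs : HasSum (fun n : P => ((n : ℕ) : ℝ) ^ (-ρ)) 1)
    (he : Summable fun n : P => ((n : ℕ) : ℝ) ^ (-ρ) * (1 + Real.log (n : ℕ)) ^ 2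
      * Real.exp (θ * Real.log (n : ℕ))) :
    (mkRen P hP ρ θ hθ hs he).IsH ρ (hw P ρ (fun _ => 1)) where
  hρ := hρ
  neg := fun y hy => by
    have : ⌊Real.exp y⌋₊ = 0 := Nat.floor_eq_zero.2 (Real.exp_lt_one_iff.2 hy)
    unfold hw
    rw [this]
    simp [Bw]
  nn := fun y => mul_nonneg (Real.exp_pos _).le (Bw_nonneg P _ (fun _ => zero_le_one) _)
  meas := by
    have h1 : Measurable (fun y : ℝ => Bw P (fun _ => 1) ⌊Real.exp y⌋₊) :=
      (Measurable.of_discrete (f := Bw P (fun _ => 1))).comp (Nat.measurable_floor.comp Real.measurable_exp)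
    exact (Real.measurable_exp.comp (measurable_id.const_mul (-ρ))).mul h1
  mono := fun y t ht => by
    unfold hw
    rw [← mul_assoc, ← Real.exp_add, show -ρ * t + -ρ * y = -ρ * (y + t) by ring]
    apply mul_le_mul_of_nonneg_left _ (Real.exp_pos _).le
    apply Bw_mono P _ (fun _ => zero_le_one)
    apply Nat.floor_mono
    exact Real.exp_le_exp.2 (by linarith)
  eq := fun y hy => by
    have := hw_rec P hP ρ θ hθ hs he (fun _ => 1) y hy
    rwa [one_mul] at this

lemma exists_theta (P : Set ℕ) (hP : ∀ n ∈ P, 2 ≤ n) (ρ : ℝ) (hρ0 : 0 < ρ)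
    (hρκ : kappa P < (ρ : EReal)) : ∃ θ : ℝ, 0 < θ ∧ θ < ρ ∧
    (Summable fun n : P => ((n : ℕ) : ℝ) ^ (-ρ) * (1 + Real.log (n : ℕ)) ^ 2
      * Real.exp (θ * Real.log (n : ℕ))) := by
  unfold kappa at hρκ
  rw [sInf_lt_iff] at hρκ
  obtain ⟨x, ⟨r, rfl, hr⟩, hlt⟩ := hρκ
  have hlt : r < ρ := by exact_mod_cast hlt
  obtain ⟨C, hC, hpoly⟩ := Ren.poly_exp ((ρ - r) / 2) (by linarith)
  refine ⟨min ρ (ρ - r) / 2, ?_, ?_, ?_⟩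
  · have := lt_min hρ0 (sub_pos.2 hlt)
    linarith
  · have := min_le_left ρ (ρ - r)
    linarith
  · apply Summable.of_nonneg_of_le _ _ (hr.mul_left C)
    · intro n; positivity
    · intro n
      have h2 := hP n n.2
      have hn0 : (0:ℝ) < (n : ℕ) := by exact_mod_cast (by omega : 0 < (n : ℕ))
      have hl : 0 ≤ Real.log (n : ℕ) := Real.log_nonneg (by exact_mod_cast (by omega : 1 ≤ (n : ℕ)))
      set a := Real.log (n : ℕ) with ha
      rw [Real.rpow_def_of_pos hn0, Real.rpow_def_of_pos hn0, ← ha]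
      have h3 := mul_le_mul_of_nonneg_left (hpoly a hl)
        (mul_nonneg (Real.exp_pos (a * -ρ)).le (Real.exp_pos (min ρ (ρ - r) / 2 * a)).le)
      have h4 : Real.exp (a * -ρ) * Real.exp (min ρ (ρ - r) / 2 * a) * (C * Real.exp ((ρ - r) / 2 * a))
          ≤ C * Real.exp (a * -r) := by
        rw [show Real.exp (a * -ρ) * Real.exp (min ρ (ρ - r) / 2 * a) * (C * Real.exp ((ρ - r) / 2 * a))
          = C * (Real.exp (a * -ρ) * Real.exp (min ρ (ρ - r) / 2 * a) * Real.exp ((ρ - r) / 2 * a)) by ring,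
          ← Real.exp_add, ← Real.exp_add]
        apply mul_le_mul_of_nonneg_left _ hC.le
        apply Real.exp_le_exp.2
        have := mul_le_mul_of_nonneg_right (min_le_right ρ (ρ - r)) hl
        linarith
      linarith

theorem main_lim (P : Set ℕ) (hP : ∀ n ∈ P, 2 ≤ n) (hP2 : P.Nontrivial)
    (ρ : ℝ) (hρ0 : 0 < ρ) (hρκ : kappa P < (ρ : EReal)) (hρ1 : Pval P ρ = 1)
    (μ σsq : ℝ) (hμ : μ = -1 / Pderiv1 P ρ) (hσsq : σsq = μ ^ 3 * Pderiv2 P ρ - μ) :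
    0 < σsq ∧ Tendsto (fun X => (hw P ρ (fun m => (m:ℝ) ^ 2) X / hw P ρ (fun _ => 1) X
      - (hw P ρ (fun m => (m:ℝ)) X / hw P ρ (fun _ => 1) X) ^ 2) / X) atTop (nhds σsq) := by
  obtain ⟨θ, hθ, hθρ, he⟩ := exists_theta P hP ρ hρ0 hρκ
  have hsm : Summable (fun n : P => ((n : ℕ) : ℝ) ^ (-ρ)) := by
    by_contra hns
    unfold Pval at hρ1
    rw [tsum_eq_zero_of_not_summable hns] at hρ1
    norm_num at hρ1
  have hs : HasSum (fun n : P => ((n : ℕ) : ℝ) ^ (-ρ)) 1 := by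
    have := hsm.hasSum
    unfold Pval at hρ1
    rwa [hρ1] at this
  have H := hw_isH P hP ρ θ hρ0 hθ hs he
  have hrec := hw_rec P hP ρ θ hθ hs he
  set R := mkRen P hP ρ θ hθ hs he with hR
  have hmean : R.mean = - Pderiv1 P ρ := by
    unfold Pderiv1; rw [neg_neg]; rfl
  have hmu : R.mu = μ := by
    unfold Ren.mu
    rw [hmean, hμ, one_div, neg_div, one_div, inv_neg]
  have hmp := R.mean_pos
  have hmup := R.mu_pos
  have hmm : R.mu * R.mean = 1 := by unfold Ren.mu; field_simp
  have hl2 : Summable (fun n : P => R.p n * R.l n ^ 2) := by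
    apply R.summ _ 1 zero_le_one
    intro i
    have h1 := R.hp i
    have h2 := R.l_pos i
    rw [abs_of_pos (by positivity), one_mul]
    apply mul_le_mul_of_nonneg_left _ h1.le
    nlinarith
  have htau : R.tau = R.mu ^ 2 * Pderiv2 P ρ - 1 := by
    have h1 := (R.hsum.sub (R.pl_summable.hasSum.mul_left (2 * R.mu))).add (hl2.hasSum.mul_left (R.mu ^ 2))
    have h2 := (h1.congr_fun (g := fun n => R.p n * R.xi n ^ 2) (fun n => by unfold Ren.xi; ring)).unique R.xi2
    have h3 : ∑' n, R.p n * R.l n = R.mean := rfl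
    have h4 : ∑' n, R.p n * R.l n ^ 2 = Pderiv2 P ρ := rfl
    rw [h3, h4] at h2
    linear_combination -h2 - 2 * hmm
  have hσ : σsq = R.mu * R.tau := by
    rw [htau, hσsq, ← hmu]; ring
  have htp : 0 < R.tau := by
    obtain ⟨a, ha, b, hb, hab⟩ := hP2
    have hx : ∃ i : P, R.xi i ≠ 0 := by
      by_contra hcon
      push Not at hcon
      have h1 := hcon ⟨a, ha⟩
      have h2 := hcon ⟨b, hb⟩
      unfold Ren.xi at h1 h2
      have h3 : R.l ⟨a, ha⟩ = R.l ⟨b, hb⟩ := by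
        apply mul_left_cancel₀ hmup.ne'
        linarith
      have h4 : Real.log (a : ℝ) = Real.log (b : ℝ) := h3
      apply hab
      have ha2 := hP a ha
      have hb2 := hP b hb
      have := Real.log_injOn_pos (Set.mem_Ioi.2 (by exact_mod_cast (by omega : 0 < a)))
        (Set.mem_Ioi.2 (by exact_mod_cast (by omega : 0 < b))) h4
      exact_mod_cast this
    obtain ⟨i, hi⟩ := hx
    have := R.hp i
    exact R.xi2.summable.tsum_pos (fun j => by have := R.hp j; positivity) i (by positivity)
  obtain ⟨c, b, B, hb0, hcb, hper, hlim⟩ := H.blackwell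
  obtain ⟨B', hB', hbB'⟩ := H.bdd
  have Hs : Ren.Setup R ρ (hw P ρ (fun _ => 1)) (hw P ρ (fun m => (m:ℝ))) (hw P ρ (fun m => (m:ℝ) ^ 2))
      c (max B B') :=
    { hθρ := hθρ
      hB := hB'.le.trans (le_max_right _ _)
      hb := fun y => (hbB' y).trans (le_max_right _ _)
      cb := fun y => by
        rw [abs_of_nonneg (hb0.le.trans (hcb y).1)]
        exact (hcb y).2.trans (le_max_left _ _)
      per := hper
      lim := hlim
      eq := H.eq
      eq1 := fun y hy => by
        rw [hrec _ y hy, Nat.cast_zero, zero_mul, zero_add]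
        congr 1
        funext t
        unfold hw
        rw [← mul_add, ← Bw_add P hP]
        push_cast
        rfl
      eq2 := fun y hy => by
        rw [hrec _ y hy, Nat.cast_zero, zero_pow two_ne_zero, zero_mul, zero_add]
        congr 1
        funext t
        unfold hw
        have : (fun m : ℕ => (((m + 1 : ℕ) : ℝ)) ^ 2) = fun m : ℕ => ((m:ℝ) ^ 2 + 2 * (m:ℝ)) + 1 := by
          funext m; push_cast; ring
        rw [this, Bw_add P hP (fun m : ℕ => (m:ℝ) ^ 2 + 2 * (m:ℝ)) (fun _ => 1),
          Bw_add P hP (fun m : ℕ => (m:ℝ) ^ 2) (fun m => 2 * (m:ℝ)), Bw_smul P hP]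
        ring }
  refine ⟨hσ ▸ mul_pos hmup htp, ?_⟩
  rw [hσ]
  exact Hs.concl b hb0 (fun y => (hcb y).1)

/-- **The variance of `Y_N`.** `Var(Y_N) ∼ σ² log N` as `N → ∞`, where
`Var(Y_N) = E(Y_N²) - (E Y_N)²` and `σ² = μ³𝒫''(ρ) - μ`. -/
theorem ordered_factorizations_variance
    (P : Set ℕ) (hP : ∀ n ∈ P, 2 ≤ n) (hP2 : P.Nontrivial)
    (hκ : 1 < PvalE P (kappa P))
    (ρ : ℝ) (hρ0 : 0 < ρ) (hρκ : kappa P < (ρ : EReal)) (hρ1 : Pval P ρ = 1)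
    (μ σsq : ℝ) (hμ : μ = -1 / Pderiv1 P ρ) (hσsq : σsq = μ ^ 3 * Pderiv2 P ρ - μ) :
    Asymptotics.IsEquivalent atTop
      (fun N : ℕ =>
        (∑ n ∈ Finset.Icc 1 N, ∑' m : ℕ, ((m : ℝ)) ^ 2 * (af P m n : ℝ)) / Acum P N
          - ((∑ n ∈ Finset.Icc 1 N, ∑' m : ℕ, (m : ℝ) * (af P m n : ℝ)) / Acum P N) ^ 2)
      (fun N : ℕ => σsq * Real.log N) := by
  obtain ⟨hσ, hlim⟩ := main_lim P hP hP2 ρ hρ0 hρκ hρ1 μ σsq hμ hσsq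
  have hl := (hlim.comp (Real.tendsto_log_atTop.comp (tendsto_natCast_atTop_atTop (R := ℝ)))).div_const σsq
  rw [div_self hσ.ne'] at hl
  have hA : ∀ N, Acum P N = Bw P (fun _ => 1) N := fun N => by
    unfold Acum aTot Bw; simp only [one_mul]
  apply Asymptotics.isEquivalent_of_tendsto_one
  refine hl.congr' ?_
  filter_upwards [eventually_ge_atTop 2] with N hN
  have hN0 : (0:ℝ) < N := by exact_mod_cast (by omega : 0 < N)
  have hh : ∀ u, hw P ρ u (Real.log N) = Real.exp (-ρ * Real.log N) * Bw P u N := fun u => by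
    unfold hw; rw [Real.exp_log hN0, Nat.floor_natCast]
  have hE := (Real.exp_pos (-ρ * Real.log N)).ne'
  simp only [Function.comp, Pi.div_apply]
  rw [hh, hh, hh, mul_div_mul_left _ _ hE, mul_div_mul_left _ _ hE, hA]
  change _ = (Bw P (fun m => (m:ℝ) ^ 2) N / Bw P (fun _ => 1) N
    - (Bw P (fun m => (m:ℝ)) N / Bw P (fun _ => 1) N) ^ 2) / _
  rw [div_div, mul_comm (Real.log N)]
end
end

section
/- For every complex s and z with e^{Re(z)} 𝒫(Re(s)) < 1, the double series Σ_{n≥1} n^{−s} Σ_{m≥0} a_m(n) e^{mz} converges absolutely and equals 1/(1 − e^{z} 𝒫(s)). -/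
open scoped BigOperators ENNReal
open Filter Asymptotics

noncomputable section

/-- The Dirichlet series `𝒫(s) = Σ_{n ∈ 𝒫} n^{-s}` at a complex point. -/
def PvalC (P : Set ℕ) (s : ℂ) : ℂ := ∑' n : P, ((n : ℕ) : ℂ) ^ (-s)

lemma aux_hasSum_pi {R : Type*} [NormedField R] [CompleteSpace R] {ι : Type*} (f : ι → R)
    (hf : Summable (fun i => ‖f i‖)) (m : ℕ) :
    Summable (fun t : Fin m → ι => ‖∏ i, f (t i)‖) ∧
      HasSum (fun t : Fin m → ι => ∏ i, f (t i)) ((∑' i, f i) ^ m) := by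
  induction m with
  | zero =>
    refine ⟨(hasSum_fintype _).summable, ?_⟩
    convert hasSum_fintype _ using 1
    · simp
    · infer_instance
  | succ m ih =>
    obtain ⟨h1, h2⟩ := ih
    have e := (Fin.consEquiv (fun _ : Fin (m+1) => ι))
    have hs := Summable.mul_norm hf h1
    have hv : HasSum (fun p : ι × (Fin m → ι) => f p.1 * ∏ i, f (p.2 i))
        ((∑' i, f i) * (∑' i, f i) ^ m) := by
      have := tsum_mul_tsum_of_summable_norm hf h1
      rw [h2.tsum_eq] at this
      rw [this]
      exact (hs.of_norm).hasSum
    constructor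
    · rw [← (Fin.consEquiv (fun _ : Fin (m+1) => ι)).summable_iff]
      refine hs.congr fun p => ?_
      simp [Fin.consEquiv, Fin.prod_univ_succ]
    · rw [← (Fin.consEquiv (fun _ : Fin (m+1) => ι)).hasSum_iff, pow_succ']
      convert hv using 1
      funext p
      simp [Fin.consEquiv, Fin.prod_univ_succ]

lemma aux_card (P : Set ℕ) (m n : ℕ) :
    Nat.card {t : Fin m → P // ∏ i, (t i : ℕ) = n} = af P m n := by
  unfold af
  refine Nat.card_congr
    { toFun := fun t => ⟨fun i => t.1 i, fun i => (t.1 i).2, t.2⟩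
      invFun := fun t => ⟨fun i => ⟨t.1 i, t.2.1 i⟩, t.2.2⟩
      left_inv := fun t => rfl
      right_inv := fun t => rfl }

lemma aux_fiber {R : Type*} [NormedField R] [CompleteSpace R] (P : Set ℕ) (m : ℕ)
    (G : ℕ → R) (a : R) (h : HasSum (fun t : Fin m → P => G (∏ i, (t i : ℕ))) a) :
    HasSum (fun n => (af P m n : R) * G n) a := by
  have h' := (Equiv.sigmaFiberEquiv (fun t : Fin m → P => ∏ i, (t i : ℕ))).hasSum_iff.mpr h
  have h2 := h'.sigma (fun n => (h'.summable.sigma_factor n).hasSum)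
  convert h2 using 1
  funext n
  have : ∀ c : {t : Fin m → P // ∏ i, (t i : ℕ) = n},
      ((fun t : Fin m → P => G (∏ i, (t i : ℕ))) ∘
        (Equiv.sigmaFiberEquiv (fun t : Fin m → P => ∏ i, (t i : ℕ)))) ⟨n, c⟩ = G n := by
    intro c
    simp [Equiv.sigmaFiberEquiv, c.2]
  rw [tsum_congr this, tsum_const, aux_card, nsmul_eq_mul]

lemma aux_cpow (s : ℂ) {m : ℕ} (t : Fin m → ℕ) :
    (((∏ i, t i : ℕ)) : ℂ) ^ (-s) = ∏ i, ((t i : ℕ) : ℂ) ^ (-s) := by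
  induction m with
  | zero => simp
  | succ m ih =>
    rw [Fin.prod_univ_succ, Fin.prod_univ_succ, ← ih, Nat.cast_mul,
      Complex.natCast_mul_natCast_cpow]

/-- **The bivariate generating identity.** If `e^{Re z} 𝒫(Re s) < 1` (in `[0,∞]`), then the
double series `Σ_{n ≥ 1} n^{-s} Σ_{m ≥ 0} a_m(n) e^{mz}` converges absolutely and equals
`1/(1 - e^z 𝒫(s))`. -/
theorem bivariate_generating_function
    (P : Set ℕ) (hP : ∀ n ∈ P, 2 ≤ n) (s z : ℂ)
    (h : ENNReal.ofReal (Real.exp z.re) *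
        (∑' n : P, ENNReal.ofReal (((n : ℕ) : ℝ) ^ (-s.re))) < 1) :
    Summable (fun p : ℕ × ℕ =>
        ‖((p.1 : ℂ) ^ (-s)) * ((af P p.2 p.1 : ℂ) * Complex.exp ((p.2 : ℂ) * z))‖) ∧
    (∑' n : ℕ, (n : ℂ) ^ (-s) * ∑' m : ℕ, (af P m n : ℂ) * Complex.exp ((m : ℂ) * z))
      = 1 / (1 - Complex.exp z * PvalC P s) := by
  have hnorm : ∀ n : P, ‖((n : ℕ) : ℂ) ^ (-s)‖ = ((n : ℕ) : ℝ) ^ (-s.re) := by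
    intro n
    have := hP n n.2
    rw [Complex.norm_natCast_cpow_of_pos (by omega)]
    simp
  have hexp : ENNReal.ofReal (Real.exp z.re) ≠ 0 := by
    simp [Real.exp_pos]
  have hne : (∑' n : P, ENNReal.ofReal (((n : ℕ) : ℝ) ^ (-s.re))) ≠ ⊤ := by
    intro hT
    rw [hT, ENNReal.mul_top hexp] at h
    exact absurd h (by simp)
  have hnn : ∀ n : P, 0 ≤ ((n : ℕ) : ℝ) ^ (-s.re) := fun n => by positivity
  have hsum : Summable (fun n : P => ((n : ℕ) : ℝ) ^ (-s.re)) := by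
    have := ENNReal.summable_toReal hne
    refine this.congr fun n => ENNReal.toReal_ofReal (hnn n)
  rw [← ENNReal.ofReal_tsum_of_nonneg hnn hsum, ← ENNReal.ofReal_mul (Real.exp_pos _).le,
    ENNReal.ofReal_lt_one] at h
  set f : P → ℂ := fun n => Complex.exp z * ((n : ℕ) : ℂ) ^ (-s) with hf
  have hfn : ∀ n, ‖f n‖ = Real.exp z.re * ((n : ℕ) : ℝ) ^ (-s.re) := by
    intro n
    rw [hf]; simp only [norm_mul, hnorm, Complex.norm_exp]
  have hfs : Summable (fun n => ‖f n‖) := by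
    simp only [hfn]; exact hsum.mul_left _
  have hr : ∑' n, ‖f n‖ < 1 := by
    simp only [hfn]; rwa [tsum_mul_left]
  have hr0 : 0 ≤ ∑' n, ‖f n‖ := tsum_nonneg fun _ => norm_nonneg _
  have hfv : ∑' n, f n = Complex.exp z * PvalC P s := by
    rw [hf, tsum_mul_left]; rfl
  set F : ℕ → ℕ → ℂ := fun m n =>
    ((n : ℂ) ^ (-s)) * ((af P m n : ℂ) * Complex.exp ((m : ℂ) * z)) with hF
  have hprod : ∀ m (t : Fin m → P), ∏ i, f (t i) =
      ((∏ i, (t i : ℕ) : ℕ) : ℂ) ^ (-s) * Complex.exp ((m : ℂ) * z) := by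
    intro m t
    rw [aux_cpow, hf, Finset.prod_mul_distrib, Complex.exp_nat_mul]
    simp [mul_comm]
  have hC : ∀ m, HasSum (F m) ((Complex.exp z * PvalC P s) ^ m) := by
    intro m
    have h1 := (aux_hasSum_pi f hfs m).2
    simp only [hprod] at h1
    rw [hfv] at h1
    have := aux_fiber P m (fun n => (n : ℂ) ^ (-s) * Complex.exp ((m : ℂ) * z)) _ h1
    have he : F m = (fun n : ℕ => (af P m n : ℂ) * ((n : ℂ) ^ (-s) * Complex.exp ((m : ℂ) * z))) := by
      funext n
      simp only [hF]; ring
    rw [he]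
    exact this
  have hR : ∀ m, HasSum (fun n => ‖F m n‖) ((∑' n, ‖f n‖) ^ m) := by
    intro m
    have h1 := (aux_hasSum_pi (fun n => ‖f n‖) (by simpa using hfs) m).2
    simp only [← norm_prod, hprod] at h1
    have := aux_fiber P m (fun n => ‖(n : ℂ) ^ (-s) * Complex.exp ((m : ℂ) * z)‖) _ h1
    have he : (fun n => ‖F m n‖) = (fun n : ℕ => (af P m n : ℝ) * ‖(n : ℂ) ^ (-s) * Complex.exp ((m : ℂ) * z)‖) := by
      funext n
      simp only [hF, norm_mul, Complex.norm_natCast]; ring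
    rw [he]
    exact this
  have hS : Summable (fun p : ℕ × ℕ => ‖F p.1 p.2‖) := by
    rw [summable_prod_of_nonneg (fun _ => norm_nonneg _)]
    refine ⟨fun m => (hR m).summable, ?_⟩
    simp only [fun m => (hR m).tsum_eq]
    exact summable_geometric_of_lt_one hr0 hr
  have hS' : Summable (fun p : ℕ × ℕ => ‖F p.2 p.1‖) := hS.prod_symm
  refine ⟨hS', ?_⟩
  have hlt : ‖Complex.exp z * PvalC P s‖ < 1 := by
    rw [← hfv]; exact (norm_tsum_le_tsum_norm hfs).trans_lt hr
  simp only [← tsum_mul_left]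
  change ∑' n, ∑' m, F m n = _
  rw [Summable.tsum_comm (f := F) hS.of_norm]
  simp only [fun m => (hC m).tsum_eq]
  rw [tsum_geometric_of_norm_lt_one hlt, one_div]
end
end

section
/- Under the stated assumptions including non-periodicity, A(N) ∼ (μ/ρ) N^{ρ} as N → ∞, where μ/ρ = −1/(ρ 𝒫′(ρ)). -/
open scoped BigOperators ENNReal
open Filter Asymptotics

noncomputable section

open Topology

theorem af_fin (P : Set ℕ) (hP : ∀ n ∈ P, 2 ≤ n) (m N : ℕ) :
    {t : Fin m → ℕ | (∀ i, t i ∈ P) ∧ ∏ i, t i ≤ N}.Finite := by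
  refine (Set.finite_Icc (0 : Fin m → ℕ) (fun _ => N)).subset ?_
  rintro t ⟨h1, h2⟩
  refine ⟨fun i => Nat.zero_le _, fun i => ?_⟩
  refine le_trans ?_ h2
  exact Nat.le_of_dvd (Finset.prod_pos fun j _ => by have := hP _ (h1 j); omega)
    (Finset.dvd_prod_of_mem t (Finset.mem_univ i))

def cumf (P : Set ℕ) (m N : ℕ) : ℕ :=
  Nat.card {t : Fin m → ℕ // (∀ i, t i ∈ P) ∧ ∏ i, t i ≤ N}

theorem cumf_eq (P : Set ℕ) (hP : ∀ n ∈ P, 2 ≤ n) (m N : ℕ) :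
    ∑ n ∈ Finset.Icc 1 N, af P m n = cumf P m N := by
  classical
  have hf := af_fin P hP m N
  have h1 : cumf P m N = hf.toFinset.card := by
    unfold cumf
    exact Nat.card_eq_card_finite_toFinset hf
  rw [h1, Finset.card_eq_sum_card_fiberwise (f := fun t => ∏ i, t i) (t := Finset.Icc 1 N)]
  · refine Finset.sum_congr rfl fun n hn => ?_
    rw [Finset.mem_Icc] at hn
    unfold af
    rw [← Nat.card_eq_finsetCard]
    refine Nat.card_congr (Equiv.subtypeEquivRight fun t => ?_)
    simp only [Finset.mem_filter, Set.Finite.mem_toFinset, Set.mem_ofPred_eq]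
    constructor
    · rintro ⟨a, b⟩; exact ⟨⟨a, by omega⟩, b⟩
    · rintro ⟨⟨a, _⟩, b⟩; exact ⟨a, b⟩
  · intro t ht
    simp only [Set.Finite.coe_toFinset, Set.mem_ofPred_eq] at ht
    simp only [Finset.coe_Icc, Set.mem_Icc]
    exact ⟨Finset.prod_pos fun j _ => lt_of_lt_of_le Nat.zero_lt_two (hP _ (ht.1 j)), ht.2⟩

open Classical in
theorem cumf_succ (P : Set ℕ) (hP : ∀ n ∈ P, 2 ≤ n) (m N : ℕ) :
    cumf P (m + 1) N = ∑ p ∈ (Finset.Icc 1 N).filter (· ∈ P), cumf P m (N / p) := by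
  have hfin : ∀ k, Finite {t : Fin m → ℕ // (∀ i, t i ∈ P) ∧ ∏ i, t i ≤ k} := fun k =>
    (af_fin P hP m k).to_subtype
  rw [← Finset.sum_coe_sort]
  unfold cumf
  rw [← Nat.card_sigma]
  refine Nat.card_congr ⟨fun t => ⟨⟨t.1 0, ?_⟩, ⟨Fin.tail t.1, ?_, ?_⟩⟩,
    fun q => ⟨Fin.cons q.1.1 q.2.1, ?_, ?_⟩, ?_, ?_⟩
  · obtain ⟨t, h1, h2⟩ := t
    have := hP _ (h1 0)
    simp only [Finset.mem_filter, Finset.mem_Icc]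
    refine ⟨⟨by omega, le_trans ?_ h2⟩, h1 0⟩
    exact Nat.le_of_dvd (Finset.prod_pos fun j _ => by have := hP _ (h1 j); omega)
      (Finset.dvd_prod_of_mem t (Finset.mem_univ 0))
  · intro i; exact t.2.1 _
  · obtain ⟨t, h1, h2⟩ := t
    have := hP _ (h1 0)
    rw [Fin.prod_univ_succ, mul_comm] at h2
    exact (Nat.le_div_iff_mul_le (lt_of_lt_of_le Nat.zero_lt_two this)).2 h2
  · obtain ⟨⟨p, hp⟩, t, h1, h2⟩ := q
    simp only [Finset.mem_filter] at hp
    intro i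
    refine Fin.cases ?_ (fun j => ?_) i
    · simpa using hp.2
    · simpa using h1 j
  · obtain ⟨⟨p, hp⟩, t, h1, h2⟩ := q
    simp only [Finset.mem_filter, Finset.mem_Icc] at hp
    rw [Fin.prod_univ_succ]
    simp only [Fin.cons_zero, Fin.cons_succ]
    rw [mul_comm]
    exact (Nat.le_div_iff_mul_le (by omega)).1 h2
  · rintro ⟨t, h⟩; simp
  · rintro ⟨⟨p, hp⟩, t, h1, h2⟩; rfl

theorem cumf_zero (P : Set ℕ) (N : ℕ) (hN : 1 ≤ N) : cumf P 0 N = 1 := by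
  unfold cumf
  have : Unique {t : Fin 0 → ℕ // (∀ i, t i ∈ P) ∧ ∏ i, t i ≤ N} :=
    { default := ⟨fun i => i.elim0, fun i => i.elim0, by simpa using hN⟩
      uniq := fun t => Subtype.ext (funext fun i => i.elim0) }
  exact Nat.card_unique

theorem af_zero_s8 (P : Set ℕ) (hP : ∀ n ∈ P, 2 ≤ n) (m n : ℕ) (hn : 1 ≤ n) (h : n ≤ m) : af P m n = 0 := by
  unfold af
  have : IsEmpty {t : Fin m → ℕ // (∀ i, t i ∈ P) ∧ ∏ i, t i = n} := by
    refine ⟨fun ⟨t, h1, h2⟩ => ?_⟩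
    have : 2 ^ m ≤ ∏ i, t i := by
      simpa using Finset.prod_le_prod' (s := Finset.univ) (f := fun _ : Fin m => 2) (g := t) (fun i _ => hP _ (h1 i))
    have := Nat.lt_two_pow_self (n := m)
    omega
  exact Nat.card_of_isEmpty

theorem Acum_hasSum (P : Set ℕ) (hP : ∀ n ∈ P, 2 ≤ n) (N : ℕ) :
    HasSum (fun m => (cumf P m N : ℝ)) (Acum P N) := by
  have : (fun m => (cumf P m N : ℝ)) = fun m => ∑ n ∈ Finset.Icc 1 N, (af P m n : ℝ) := by
    funext m; rw [← cumf_eq P hP]; push_cast; rfl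
  rw [this]
  unfold Acum
  refine hasSum_sum fun n hn => ?_
  rw [Finset.mem_Icc] at hn
  refine Summable.hasSum ?_
  refine summable_of_ne_finset_zero (s := Finset.range n) fun m hm => ?_
  rw [af_zero_s8 P hP m n hn.1 (by simpa using hm)]; simp

open Classical in
theorem Acum_rec (P : Set ℕ) (hP : ∀ n ∈ P, 2 ≤ n) (N : ℕ) (hN : 1 ≤ N) :
    Acum P N = 1 + ∑ p ∈ (Finset.Icc 1 N).filter (· ∈ P), Acum P (N / p) := by
  have h := Acum_hasSum P hP N
  rw [← h.tsum_eq, h.summable.tsum_eq_zero_add, cumf_zero P N hN]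
  congr 1
  · simp
  refine HasSum.tsum_eq ?_
  have h2 := hasSum_sum (s := (Finset.Icc 1 N).filter (· ∈ P)) fun p _ => Acum_hasSum P hP (N / p)
  have e : (fun m => ((cumf P (m + 1) N : ℕ) : ℝ)) =
      fun m => ∑ p ∈ (Finset.Icc 1 N).filter (· ∈ P), (cumf P m (N / p) : ℝ) := by
    funext m
    rw [cumf_succ P hP]; push_cast; rfl
  rw [e]
  exact h2

theorem aTot_nonneg (P : Set ℕ) (n : ℕ) : 0 ≤ aTot P n := tsum_nonneg fun _ => Nat.cast_nonneg _

theorem Acum_mono (P : Set ℕ) : Monotone (Acum P) := fun a b h =>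
  Finset.sum_le_sum_of_subset_of_nonneg (Finset.Icc_subset_Icc_right h) fun n _ _ => aTot_nonneg P n

theorem Acum_nonneg (P : Set ℕ) (n : ℕ) : 0 ≤ Acum P n := Finset.sum_nonneg fun n _ => aTot_nonneg P n

theorem Acum_zero (P : Set ℕ) : Acum P 0 = 0 := by simp [Acum]

theorem Acum_tsum (P : Set ℕ) (hP : ∀ n ∈ P, 2 ≤ n) (N : ℕ) (hN : 1 ≤ N) :
    Acum P N = 1 + ∑' p : P, Acum P (N / p) := by
  classical
  rw [Acum_rec P hP N hN, tsum_subtype P (fun p => Acum P (N / p)),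
    tsum_eq_sum (s := (Finset.Icc 1 N).filter (· ∈ P))]
  · congr 1
    refine Finset.sum_congr rfl fun p hp => ?_
    rw [Finset.mem_filter] at hp
    rw [Set.indicator_of_mem hp.2]
  · intro p hp
    by_cases h : p ∈ P
    · have := hP p h
      rw [Set.indicator_of_mem h, Nat.div_eq_of_lt, Acum_zero]
      simp only [Finset.mem_filter, Finset.mem_Icc, h, and_true] at hp
      omega
    · exact Set.indicator_of_notMem h _

theorem Acum_bound (P : Set ℕ) (hP : ∀ n ∈ P, 2 ≤ n) (hP2 : P.Nontrivial) (ρ : ℝ) (hρ : 0 < ρ)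
    (hs : HasSum (fun n : P => ((n : ℕ) : ℝ) ^ (-ρ)) 1) :
    ∃ C : ℝ, 0 ≤ C ∧ ∀ N : ℕ, Acum P N ≤ C * (N : ℝ) ^ ρ := by
  classical
  obtain ⟨p, hp, q, hq, hpq⟩ := hP2
  set K := max p q with hK
  set C := 1 + Acum P K with hC
  have hC0 : 0 ≤ C := by have := Acum_nonneg P K; linarith
  refine ⟨C, hC0, ?_⟩
  have main : ∀ N : ℕ, 1 ≤ N → Acum P N ≤ C * (N : ℝ) ^ ρ - 1 := by
    intro N
    induction N using Nat.strong_induction_on with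
    | _ N ih =>
    intro hN
    have hN' : (1 : ℝ) ≤ N := by exact_mod_cast hN
    by_cases hNK : N < K
    · have h1 := Acum_mono P hNK.le
      have h2 : 1 ≤ (N : ℝ) ^ ρ := Real.one_le_rpow hN' hρ.le
      nlinarith
    · push Not at hNK
      rw [Acum_rec P hP N hN]
      set s := (Finset.Icc 1 N).filter (· ∈ P) with hsdef
      have h1 : ∑ p ∈ s, Acum P (N / p) ≤ ∑ p ∈ s, (C * (N : ℝ) ^ ρ * (p : ℝ) ^ (-ρ) - 1) := by
        refine Finset.sum_le_sum fun r hr => ?_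
        simp only [hsdef, Finset.mem_filter, Finset.mem_Icc] at hr
        have hr2 := hP r hr.2
        refine (ih (N / r) (Nat.div_lt_self (by omega) (by omega)) (Nat.div_pos hr.1.2 (by omega))).trans ?_
        have h3 : ((N / r : ℕ) : ℝ) ^ ρ ≤ (N : ℝ) ^ ρ * (r : ℝ) ^ (-ρ) := by
          rw [Real.rpow_neg (by positivity), ← div_eq_mul_inv, ← Real.div_rpow (by positivity) (by positivity)]
          exact Real.rpow_le_rpow (by positivity) Nat.cast_div_le hρ.le
        have := mul_le_mul_of_nonneg_left h3 hC0
        linarith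
      have h2 : ∑ p ∈ s, (p : ℝ) ^ (-ρ) ≤ 1 := by
        have := sum_le_hasSum (s.subtype (· ∈ P)) (fun i _ => by positivity) hs
        refine le_trans (le_of_eq ?_) this
        rw [Finset.sum_subtype_eq_sum_filter (f := fun n : ℕ => (n : ℝ) ^ (-ρ))]
        simp [hsdef, Finset.filter_filter]
      have h3 : 2 ≤ s.card := by
        rw [← Finset.card_pair hpq]
        refine Finset.card_le_card ?_
        intro x hx
        simp only [Finset.mem_insert, Finset.mem_singleton] at hx
        simp only [hsdef, Finset.mem_filter, Finset.mem_Icc]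
        have := hP p hp
        have := hP q hq
        rcases hx with rfl | rfl
        · exact ⟨⟨by omega, by omega⟩, hp⟩
        · exact ⟨⟨by omega, by omega⟩, hq⟩
      have h3' : (2 : ℝ) ≤ s.card := by exact_mod_cast h3
      rw [Finset.sum_sub_distrib, ← Finset.mul_sum] at h1
      simp only [Finset.sum_const, nsmul_eq_mul, mul_one] at h1
      have := mul_le_mul_of_nonneg_left h2 (mul_nonneg hC0 (by positivity : 0 ≤ (N : ℝ) ^ ρ))
      linarith
  intro N
  rcases Nat.eq_zero_or_pos N with rfl | h
  · rw [Acum_zero]; positivity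
  · linarith [main N h]

theorem log_dense (P : Set ℕ) (hP : ∀ n ∈ P, 2 ≤ n) (hP2 : P.Nontrivial)
    (hnp : ∀ d : ℕ, 2 ≤ d → ¬ P ⊆ {n : ℕ | ∃ k : ℕ, 1 ≤ k ∧ n = d ^ k}) :
    Dense (AddSubgroup.closure (Set.range fun n : P => Real.log (n : ℕ)) : Set ℝ) := by
  set G := AddSubgroup.closure (Set.range fun n : P => Real.log (n : ℕ)) with hG
  rcases AddSubgroup.dense_or_cyclic G with h | ⟨a, ha⟩
  · exact h
  exfalso
  obtain ⟨a, ha0, ha⟩ : ∃ a : ℝ, 0 ≤ a ∧ G = AddSubgroup.zmultiples a := by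
    rw [← AddSubgroup.zmultiples_eq_closure] at ha
    rcases le_total 0 a with h | h
    · exact ⟨a, h, ha⟩
    · exact ⟨-a, by linarith, by rw [ha, AddSubgroup.zmultiples_neg]⟩
  have hq : ∀ x ∈ G, ∃ q : ℚ, 0 < q ∧ Real.exp x = q := by
    intro x hx
    induction hx using AddSubgroup.closure_induction with
    | mem x hx =>
      obtain ⟨⟨n, hn⟩, rfl⟩ := hx
      have := hP n hn
      exact ⟨n, by positivity, by simp only []; rw [Real.exp_log (by positivity)]; simp⟩
    | zero => exact ⟨1, by norm_num, by simp⟩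
    | add x y _ _ h1 h2 =>
      obtain ⟨q, h, e⟩ := h1
      obtain ⟨r, h', e'⟩ := h2
      exact ⟨q * r, by positivity, by rw [Real.exp_add, e, e']; simp⟩
    | neg x _ h =>
      obtain ⟨q, h, e⟩ := h
      exact ⟨q⁻¹, by positivity, by rw [Real.exp_neg, e]; simp⟩
  obtain ⟨q, hq0, hqa⟩ := hq a (ha ▸ AddSubgroup.mem_zmultiples a)
  have hk : ∀ n ∈ P, ∃ k : ℕ, 1 ≤ k ∧ (n : ℚ) = q ^ k := by
    intro n hn
    have hn2 := hP n hn
    have h1 : Real.log n ∈ G := AddSubgroup.subset_closure ⟨⟨n, hn⟩, rfl⟩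
    rw [ha, AddSubgroup.mem_zmultiples_iff] at h1
    obtain ⟨k, hk⟩ := h1
    have hlog : 0 < Real.log n := Real.log_pos (by exact_mod_cast hn2)
    rw [zsmul_eq_mul] at hk
    have hkpos : 0 < k := by
      by_contra h
      push Not at h
      have : (k : ℝ) ≤ 0 := by exact_mod_cast h
      nlinarith
    lift k to ℕ using hkpos.le
    refine ⟨k, by exact_mod_cast hkpos, ?_⟩
    have : (n : ℝ) = (q : ℝ) ^ k := by
      rw [← Real.exp_log (show (0:ℝ) < n by positivity), ← hk, ← hqa, ← Real.exp_nat_mul]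
      simp
    exact_mod_cast this
  obtain ⟨n, hn, -⟩ := hP2
  obtain ⟨k, hk1, hkn⟩ := hk n hn
  have hden : q.den = 1 := by
    have := congrArg Rat.den hkn
    rw [Rat.den_pow] at this
    simp only [Rat.den_natCast] at this
    rcases Nat.pow_eq_one.1 this.symm with h | h
    · exact h
    · omega
  have hqn : ((q.num.toNat : ℕ) : ℚ) = q := by
    have h1 : (q.num : ℚ) = q := Rat.coe_int_num_of_den_eq_one hden
    have h2 : ((q.num.toNat : ℕ) : ℤ) = q.num := Int.toNat_of_nonneg (Rat.num_nonneg.2 hq0.le)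
    have h3 : (((q.num.toNat : ℕ) : ℤ) : ℚ) = (q.num : ℚ) := by rw [h2]
    rw [h1] at h3
    exact_mod_cast h3
  set d := q.num.toNat with hd
  have hdn : ∀ n ∈ P, ∃ k : ℕ, 1 ≤ k ∧ n = d ^ k := by
    intro n hn
    obtain ⟨k, h1, h2⟩ := hk n hn
    refine ⟨k, h1, ?_⟩
    rw [← hqn] at h2
    exact_mod_cast h2
  refine hnp d ?_ hdn
  obtain ⟨k, h1, h2⟩ := hdn n hn
  have := hP n hn
  by_contra hlt
  have h01 : d = 0 ∨ d = 1 := by omega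
  rcases h01 with h | h
  · rw [h, zero_pow (by omega)] at h2; omega
  · rw [h, one_pow] at h2; omega

theorem rn_lim {ι : Type*} (w ℓ : ι → ℝ) (hw : ∀ i, 0 < w i) (hw1 : HasSum w 1)
    (g : ℝ → ℝ) (C N : ℝ) (hC : ∀ x, |g x| ≤ C)
    (herr : Tendsto (fun x => g x - ∑' i, w i * g (x - ℓ i)) atTop (𝓝 0))
    (hN : ∀ ε > 0, ∀ᶠ x in atTop, g x ≤ N + ε)
    (F : Filter ℝ) (hF : F ≤ atTop) (hg : Tendsto g F (𝓝 N)) (i : ι) :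
    Tendsto (fun x => g (x - ℓ i)) F (𝓝 N) := by
  rw [tendsto_iff_ultrafilter]
  intro U hU
  have hlim : ∀ j, ∃ y, Tendsto (fun x => g (x - ℓ j)) (U : Filter ℝ) (𝓝 y) := by
    intro j
    obtain ⟨y, -, hy⟩ := (isCompact_Icc (a := -C) (b := C)).ultrafilter_le_nhds
      (U.map (fun x => g (x - ℓ j))) (by
        simp only [Ultrafilter.coe_map, le_principal_iff, mem_map]
        exact Filter.univ_mem' (fun x => abs_le.1 (hC _)))
    exact ⟨y, hy⟩
  choose φ hφ using hlim
  have hat : ∀ j, Tendsto (fun x : ℝ => x - ℓ j) (U : Filter ℝ) atTop := fun j =>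
    (tendsto_atTop_add_const_right _ (-ℓ j) tendsto_id).mono_left (hU.trans hF)
  have hle : ∀ j, φ j ≤ N := by
    intro j
    refine le_of_forall_pos_le_add fun ε hε => ?_
    exact le_of_tendsto (hφ j) ((hat j).eventually (hN ε hε))
  have hφC : ∀ j, |φ j| ≤ C := fun j =>
    le_of_tendsto (hφ j).abs (Eventually.of_forall fun x => hC _)
  have hsum : Tendsto (fun x => ∑' j, w j * g (x - ℓ j)) (U : Filter ℝ) (𝓝 (∑' j, w j * φ j)) := by
    refine tendsto_tsum_of_dominated_convergence (bound := fun j => w j * C)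
      (hw1.summable.mul_right C) (fun j => (hφ j).const_mul _) (Eventually.of_forall fun x j => ?_)
    rw [norm_mul, Real.norm_of_nonneg (hw j).le]
    exact mul_le_mul_of_nonneg_left (hC _) (hw j).le
  have h1 : Tendsto (fun x => ∑' j, w j * g (x - ℓ j)) (U : Filter ℝ) (𝓝 N) := by
    have := (hg.mono_left hU).sub (herr.mono_left (hU.trans hF))
    simpa using this
  have h2 : ∑' j, w j * φ j = N := tendsto_nhds_unique hsum h1
  have hs : Summable fun j => w j * φ j := by
    refine Summable.of_norm_bounded (hw1.summable.mul_right C) fun j => ?_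
    rw [norm_mul, Real.norm_of_nonneg (hw j).le]
    exact mul_le_mul_of_nonneg_left (hφC _) (hw j).le
  have h3 : HasSum (fun j => w j * (N - φ j)) 0 := by
    have := (hw1.mul_right N).sub hs.hasSum
    rw [h2] at this
    simpa [mul_sub] using this
  have h4 := (hasSum_zero_iff_of_nonneg (fun j => mul_nonneg (hw j).le (sub_nonneg.2 (hle j)))).1 h3
  have h5 := congrFun h4 i
  simp only [Pi.zero_apply, mul_eq_zero, (hw i).ne', false_or] at h5
  have : φ i = N := by linarith
  exact this ▸ hφ i

theorem rn_lim_S {ι : Type*} (w ℓ : ι → ℝ) (hw : ∀ i, 0 < w i) (hw1 : HasSum w 1)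
    (g : ℝ → ℝ) (C N : ℝ) (hC : ∀ x, |g x| ≤ C)
    (herr : Tendsto (fun x => g x - ∑' i, w i * g (x - ℓ i)) atTop (𝓝 0))
    (hN : ∀ ε > 0, ∀ᶠ x in atTop, g x ≤ N + ε)
    (s : ℝ) (hs : s ∈ AddSubmonoid.closure (Set.range ℓ)) :
    ∀ (F : Filter ℝ) (_ : F ≤ atTop) (_ : Tendsto g F (𝓝 N)),
    Tendsto (fun x => g (x - s)) F (𝓝 N) := by
  induction hs using AddSubmonoid.closure_induction with
  | mem x hx =>
    obtain ⟨i, rfl⟩ := hx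
    intro F hF hg
    exact rn_lim w ℓ hw hw1 g C N hC herr hN F hF hg i
  | zero => intro F hF hg; simpa using hg
  | add x y hx hy ihx ihy =>
    intro F hF hg
    have h1 := ihx F hF hg
    have h2 := ihy (F.map (fun t => t - x))
      ((tendsto_atTop_add_const_right _ (-x) tendsto_id).mono_left hF) (by simpa [Function.comp_def] using h1)
    rw [tendsto_map'_iff] at h2
    simpa [Function.comp_def, sub_sub] using h2

theorem rn_dense {ι : Type*} [Nonempty ι] (ℓ : ι → ℝ) (hℓ : ∀ i, 0 < ℓ i)
    (hd : Dense (AddSubgroup.closure (Set.range ℓ) : Set ℝ)) (ε : ℝ) (hε : 0 < ε) :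
    ∃ T : ℝ, ∀ y ≥ T, ∃ s ∈ AddSubmonoid.closure (Set.range ℓ), y ≤ s ∧ s < y + ε := by
  set S := AddSubmonoid.closure (Set.range ℓ) with hS
  have hS0 : ∀ s ∈ S, 0 ≤ s := by
    intro s hs
    induction hs using AddSubmonoid.closure_induction with
    | mem x hx => obtain ⟨i, rfl⟩ := hx; exact (hℓ i).le
    | zero => exact le_rfl
    | add x y _ _ h1 h2 => linarith
  have hdiff : ∀ d ∈ AddSubgroup.closure (Set.range ℓ), ∃ a ∈ S, ∃ b ∈ S, d = a - b := by
    intro d hd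
    induction hd using AddSubgroup.closure_induction with
    | mem x hx => exact ⟨x, AddSubmonoid.subset_closure hx, 0, S.zero_mem, by simp⟩
    | zero => exact ⟨0, S.zero_mem, 0, S.zero_mem, by simp⟩
    | add x y _ _ h1 h2 =>
      obtain ⟨a, ha, b, hb, rfl⟩ := h1
      obtain ⟨a', ha', b', hb', rfl⟩ := h2
      exact ⟨a + a', S.add_mem ha ha', b + b', S.add_mem hb hb', by ring⟩
    | neg x _ h =>
      obtain ⟨a, ha, b, hb, rfl⟩ := h
      exact ⟨b, hb, a, ha, by ring⟩
  obtain ⟨d, hdG, hd0, hdε⟩ := hd.exists_between hε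
  obtain ⟨a, ha, b, hb, hab⟩ := hdiff d hdG
  obtain ⟨i⟩ := ‹Nonempty ι›
  have hi : ℓ i ∈ S := AddSubmonoid.subset_closure ⟨i, rfl⟩
  obtain ⟨a, ha, b, hb, hab, hb0⟩ : ∃ a ∈ S, ∃ b ∈ S, d = a - b ∧ 0 < b :=
    ⟨a + ℓ i, S.add_mem ha hi, b + ℓ i, S.add_mem hb hi, by linarith, by linarith [hS0 b hb, hℓ i]⟩
  set n := ⌈b / d⌉₊ with hn
  refine ⟨n * b, fun y hy => ?_⟩
  have hy0 : 0 ≤ y := le_trans (by positivity) hy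
  set k := ⌊y / b⌋₊ with hk
  have hk1 : (k : ℝ) * b ≤ y := by
    rw [← le_div_iff₀ hb0]; exact Nat.floor_le (by positivity)
  have hk2 : y < (k + 1) * b := by
    rw [← div_lt_iff₀ hb0]; exact Nat.lt_floor_add_one _
  have hnk : n ≤ k := Nat.le_floor (by rwa [le_div_iff₀ hb0])
  set j := ⌈(y - k * b) / d⌉₊ with hj
  have hjn : j ≤ n := Nat.ceil_mono (by gcongr; linarith)
  have hjk := hjn.trans hnk
  have hj1 : y - k * b ≤ j * d := by
    rw [← div_le_iff₀ hd0]; exact Nat.le_ceil _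
  have hj2 : (j : ℝ) < (y - k * b) / d + 1 := Nat.ceil_lt_add_one (div_nonneg (by linarith) hd0.le)
  have hj3 : j * d < y - k * b + d := by
    have := mul_lt_mul_of_pos_right hj2 hd0
    rwa [add_mul, div_mul_cancel₀ _ hd0.ne', one_mul] at this
  refine ⟨(k - j) • b + j • a, S.add_mem (S.nsmul_mem hb _) (S.nsmul_mem ha _), ?_⟩
  have : (k - j) • b + j • a = k * b + j * d := by
    rw [nsmul_eq_mul, nsmul_eq_mul, Nat.cast_sub hjk, hab]; ring
  rw [this]
  constructor <;> linarith

theorem rn_cons {ι : Type*} [Countable ι] (w ℓ : ι → ℝ) (hw : ∀ i, 0 < w i) (hw1 : HasSum w 1)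
    (hℓ : ∀ i, 0 < ℓ i)
    (f : ℝ → ℝ) (C ρ : ℝ) (hρ : 0 < ρ) (hf0 : ∀ x, 0 ≤ f x) (hC : ∀ x, f x ≤ C)
    (hneg : ∀ x < 0, f x = 0) (hmeas : Measurable f)
    (hrec : ∀ x ≥ 0, f x = ∑' i, w i * f (x - ℓ i) + Real.exp (-ρ * x)) (x : ℝ) (hx : 0 ≤ x) :
    HasSum (fun i => w i * ∫ t in (x - ℓ i)..x, f t) ((1 - Real.exp (-ρ * x)) / ρ) := by
  have hint : ∀ a b, IntervalIntegrable f MeasureTheory.volume a b := by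
    intro a b
    refine (intervalIntegrable_const (c := C)).mono_fun hmeas.aestronglyMeasurable ?_
    refine Eventually.of_forall fun t => ?_
    simp only [Real.norm_of_nonneg (hf0 t)]
    exact (hC t).trans (le_abs_self C)
  have h1 : HasSum (fun i => ∫ t in (0:ℝ)..x, w i * f (t - ℓ i))
      (∫ t in (0:ℝ)..x, (f t - Real.exp (-ρ * t))) := by
    refine intervalIntegral.hasSum_integral_of_dominated_convergence (fun i _ => w i * C)
      (fun i => ?_) (fun i => ?_) ?_ ?_ ?_
    · exact ((hmeas.comp (measurable_id.sub_const _)).const_mul _).aestronglyMeasurable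
    · refine Eventually.of_forall fun t _ => ?_
      rw [Real.norm_of_nonneg (mul_nonneg (hw i).le (hf0 _))]
      exact mul_le_mul_of_nonneg_left (hC _) (hw i).le
    · exact Eventually.of_forall fun t _ => hw1.summable.mul_right C
    · simp
    · refine Eventually.of_forall fun t ht => ?_
      rw [Set.uIoc_of_le hx] at ht
      rw [hrec t ht.1.le, add_sub_cancel_right]
      refine Summable.hasSum ?_
      refine Summable.of_nonneg_of_le (fun i => mul_nonneg (hw i).le (hf0 _))
        (fun i => mul_le_mul_of_nonneg_left (hC _) (hw i).le) (hw1.summable.mul_right C)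
  have h2 := (hw1.mul_right (∫ t in (0:ℝ)..x, f t)).sub h1
  have h3 : ∫ t in (0:ℝ)..x, Real.exp (-ρ * t) = (1 - Real.exp (-ρ * x)) / ρ := by
    rw [intervalIntegral.integral_comp_mul_left (fun t => Real.exp t) (neg_ne_zero.2 hρ.ne'), integral_exp]
    simp; field_simp; ring
  rw [intervalIntegral.integral_sub (hint _ _) (Continuous.intervalIntegrable (by fun_prop) _ _),
    h3] at h2
  have e1 : (1 - Real.exp (-ρ * x)) / ρ = (1 * ∫ (t : ℝ) in 0..x, f t) -
      ((∫ (x : ℝ) in 0..x, f x) - (1 - Real.exp (-ρ * x)) / ρ) := by ring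
  have e2 : (fun i => w i * ∫ (t : ℝ) in x - ℓ i..x, f t) = fun b =>
      (w b * ∫ (t : ℝ) in 0..x, f t) - ∫ (t : ℝ) in 0..x, w b * f (t - ℓ b) := by
    funext i
    rw [intervalIntegral.integral_const_mul, intervalIntegral.integral_comp_sub_right f (ℓ i), ← mul_sub]
    congr 1
    have h4 : ∫ t in (0 - ℓ i)..0, f t = 0 := by
      have := intervalIntegral.integral_comp_neg (a := 0) (b := ℓ i) f
      rw [neg_zero, ← zero_sub] at this
      rw [← this]
      rw [intervalIntegral.integral_congr_ae (g := fun _ => 0)]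
      · simp
      · refine Eventually.of_forall fun t ht => ?_
        rw [Set.uIoc_of_le (hℓ i).le] at ht
        exact hneg _ (by linarith [ht.1])
    rw [← intervalIntegral.integral_add_adjacent_intervals (hint (0 - ℓ i) 0) (hint 0 (x - ℓ i)), h4,
      zero_add, ← intervalIntegral.integral_add_adjacent_intervals (hint 0 (x - ℓ i)) (hint (x - ℓ i) x)]
    ring
  rw [e1, e2]
  exact h2

theorem rn_up {S : AddSubmonoid ℝ} (hS : ∀ ε > 0, ∃ T : ℝ, ∀ y ≥ T, ∃ s ∈ S, y ≤ s ∧ s < y + ε)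
    (f : ℝ → ℝ) (ρ : ℝ) (hρ : 0 < ρ) (hf0 : ∀ x, 0 ≤ f x)
    (hslow : ∀ x h, 0 ≤ h → Real.exp (-ρ * h) * f x ≤ f (x + h))
    (F : Filter ℝ) (M : ℝ) (hF : ∀ s ∈ S, Tendsto (fun x => f (x - s)) F (𝓝 M))
    (c : ℝ) (hc : c < M) :
    ∃ T, ∀ K : Set ℝ, IsCompact K → K ⊆ Set.Ici T → ∀ᶠ x in F, ∀ y ∈ K, c ≤ f (x - y) := by
  obtain ⟨ε, hε, hcε⟩ : ∃ ε > 0, c < Real.exp (-ρ * (3 * ε)) * M := by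
    have h1 : Tendsto (fun ε : ℝ => Real.exp (-ρ * (3 * ε)) * M) (𝓝[>] 0) (𝓝 M) := by
      have : Continuous (fun ε : ℝ => Real.exp (-ρ * (3 * ε)) * M) := by fun_prop
      have := this.tendsto 0
      simp only [mul_zero, Real.exp_zero, one_mul] at this
      exact this.mono_left nhdsWithin_le_nhds
    obtain ⟨ε, h, h'⟩ := ((h1.eventually (lt_mem_nhds hc)).and self_mem_nhdsWithin).exists
    exact ⟨ε, h', h⟩
  obtain ⟨T, hT⟩ := hS ε hε
  refine ⟨T, fun K hK hKT => ?_⟩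
  refine hK.induction_on (p := fun t => ∀ᶠ x in F, ∀ y ∈ t, c ≤ f (x - y)) (by simp)
    (fun s t hst h => h.mono fun x hx y hy => hx y (hst hy))
    (fun s t h1 h2 => by
      filter_upwards [h1, h2] with x a b y hy
      exact hy.elim (a y) (b y)) ?_
  intro y hy
  have hyT : T ≤ y := hKT hy
  obtain ⟨s, hs, hs1, hs2⟩ := hT (y + ε) (by linarith)
  refine ⟨Set.Ioo (y - ε) (y + ε), mem_nhdsWithin_of_mem_nhds (Ioo_mem_nhds (by linarith) (by linarith)), ?_⟩
  filter_upwards [((hF s hs).const_mul (Real.exp (-ρ * (3 * ε)))).eventually (lt_mem_nhds hcε)]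
    with x hx y' hy'
  have h1 := hslow (x - s) (s - y') (by linarith [hy'.2])
  rw [show x - s + (s - y') = x - y' by ring] at h1
  refine (hx.le.trans ?_).trans h1
  refine mul_le_mul_of_nonneg_right (Real.exp_le_exp.2 ?_) (hf0 _)
  nlinarith [hy'.1]

theorem rn_down {S : AddSubmonoid ℝ} (hS : ∀ ε > 0, ∃ T : ℝ, ∀ y ≥ T, ∃ s ∈ S, y ≤ s ∧ s < y + ε)
    (f : ℝ → ℝ) (ρ : ℝ) (hρ : 0 < ρ) (hf0 : ∀ x, 0 ≤ f x)
    (hslow : ∀ x h, 0 ≤ h → Real.exp (-ρ * h) * f x ≤ f (x + h))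
    (F : Filter ℝ) (M : ℝ) (hF : ∀ s ∈ S, Tendsto (fun x => f (x - s)) F (𝓝 M))
    (c : ℝ) (hc : M < c) :
    ∃ T, ∀ K : Set ℝ, IsCompact K → K ⊆ Set.Ici T → ∀ᶠ x in F, ∀ y ∈ K, f (x - y) ≤ c := by
  obtain ⟨ε, hε, hcε⟩ : ∃ ε > 0, Real.exp (ρ * (3 * ε)) * M < c := by
    have h1 : Tendsto (fun ε : ℝ => Real.exp (ρ * (3 * ε)) * M) (𝓝[>] 0) (𝓝 M) := by
      have : Continuous (fun ε : ℝ => Real.exp (ρ * (3 * ε)) * M) := by fun_prop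
      have := this.tendsto 0
      simp only [mul_zero, Real.exp_zero, one_mul] at this
      exact this.mono_left nhdsWithin_le_nhds
    obtain ⟨ε, h, h'⟩ := ((h1.eventually (gt_mem_nhds hc)).and self_mem_nhdsWithin).exists
    exact ⟨ε, h', h⟩
  obtain ⟨T, hT⟩ := hS ε hε
  refine ⟨T + 2 * ε, fun K hK hKT => ?_⟩
  refine hK.induction_on (p := fun t => ∀ᶠ x in F, ∀ y ∈ t, f (x - y) ≤ c) (by simp)
    (fun s t hst h => h.mono fun x hx y hy => hx y (hst hy))
    (fun s t h1 h2 => by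
      filter_upwards [h1, h2] with x a b y hy
      exact hy.elim (a y) (b y)) ?_
  intro y hy
  have hyT : T + 2 * ε ≤ y := hKT hy
  obtain ⟨s, hs, hs1, hs2⟩ := hT (y - 2 * ε) (by linarith)
  refine ⟨Set.Ioo (y - ε) (y + ε), mem_nhdsWithin_of_mem_nhds (Ioo_mem_nhds (by linarith) (by linarith)), ?_⟩
  filter_upwards [((hF s hs).const_mul (Real.exp (ρ * (3 * ε)))).eventually (gt_mem_nhds hcε)]
    with x hx y' hy'
  have h1 := hslow (x - y') (y' - s) (by linarith [hy'.1])
  rw [show x - y' + (y' - s) = x - s by ring] at h1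
  refine le_trans ?_ hx.le
  have h2 : f (x - y') ≤ Real.exp (ρ * (y' - s)) * f (x - s) := by
    have := mul_le_mul_of_nonneg_left h1 (Real.exp_pos (ρ * (y' - s))).le
    rwa [← mul_assoc, ← Real.exp_add, show ρ * (y' - s) + -ρ * (y' - s) = 0 by ring, Real.exp_zero,
      one_mul] at this
  refine h2.trans ?_
  refine mul_le_mul_of_nonneg_right (Real.exp_le_exp.2 ?_) (hf0 _)
  nlinarith [hy'.2]

theorem rn_main {ι : Type*} [Countable ι] [Nonempty ι] (w ℓ : ι → ℝ) (hw : ∀ i, 0 < w i)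
    (hw1 : HasSum w 1) (hℓ : ∀ i, 0 < ℓ i) (m : ℝ) (hm : HasSum (fun i => w i * ℓ i) m)
    (hd : Dense (AddSubgroup.closure (Set.range ℓ) : Set ℝ))
    (f : ℝ → ℝ) (C ρ : ℝ) (hρ : 0 < ρ) (hf0 : ∀ x, 0 ≤ f x) (hC : ∀ x, f x ≤ C)
    (hneg : ∀ x < 0, f x = 0) (hmeas : Measurable f)
    (hslow : ∀ x h, 0 ≤ h → Real.exp (-ρ * h) * f x ≤ f (x + h))
    (hrec : ∀ x ≥ 0, f x = ∑' i, w i * f (x - ℓ i) + Real.exp (-ρ * x)) :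
    Tendsto f atTop (𝓝 (1 / ρ / m)) := by
  have hint : ∀ a b, IntervalIntegrable f MeasureTheory.volume a b := by
    intro a b
    refine (intervalIntegrable_const (c := C)).mono_fun hmeas.aestronglyMeasurable ?_
    refine Eventually.of_forall fun t => ?_
    simp only [Real.norm_of_nonneg (hf0 t)]
    exact (hC t).trans (le_abs_self C)
  have hC0 : 0 ≤ C := (hf0 0).trans (hC 0)
  have hm0 : 0 < m := by
    obtain ⟨i⟩ := ‹Nonempty ι›
    exact (mul_pos (hw i) (hℓ i)).trans_le
      (le_hasSum hm i fun j _ => (mul_pos (hw j) (hℓ j)).le)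
  have hcons := rn_cons w ℓ hw hw1 hℓ f C ρ hρ hf0 hC hneg hmeas hrec
  have hS := rn_dense ℓ hℓ hd
  have hexp : Tendsto (fun x => Real.exp (-ρ * x)) atTop (𝓝 0) := by
    have : Tendsto (fun x => -(ρ * x)) atTop atBot :=
      tendsto_neg_atTop_atBot.comp (tendsto_id.const_mul_atTop hρ)
    simpa [Function.comp_def] using Real.tendsto_exp_atBot.comp this
  have herr : Tendsto (fun x => f x - ∑' i, w i * f (x - ℓ i)) atTop (𝓝 0) := by
    refine hexp.congr' ?_
    filter_upwards [eventually_ge_atTop 0] with x hx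
    rw [hrec x hx]; ring
  have hbA : IsBoundedUnder (· ≤ ·) atTop f := isBoundedUnder_of ⟨C, hC⟩
  have hbB : IsBoundedUnder (· ≥ ·) atTop f := isBoundedUnder_of ⟨0, hf0⟩
  set M := limsup f atTop with hM
  set M' := liminf f atTop with hM'
  have hMup : ∀ ε > 0, ∀ᶠ x in atTop, f x ≤ M + ε := fun ε hε =>
    (eventually_lt_of_limsup_lt (show limsup f atTop < M + ε by linarith) hbA).mono fun _ h => h.le
  have hMlo : ∀ ε > 0, ∀ᶠ x in atTop, M' - ε ≤ f x := fun ε hε =>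
    (eventually_lt_of_lt_liminf (show M' - ε < liminf f atTop by linarith) hbB).mono fun _ h => h.le
  have hshift : ∀ T : ℝ, Tendsto (fun x : ℝ => x - T) atTop atTop := fun T =>
    tendsto_atTop_add_const_right _ (-T) tendsto_id
  have hcl : ∀ N : ℝ, (∀ ε > 0, ∃ᶠ x in atTop, |f x - N| < ε) →
      (atTop ⊓ comap f (𝓝 N)).NeBot := by
    intro N h
    have : MapClusterPt N atTop f := by
      rw [Metric.nhds_basis_ball.mapClusterPt_iff_frequently]
      intro ε hε
      exact (h ε hε).mono fun x hx => by simpa [Real.dist_eq] using hx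
    rw [neBot_inf_comap_iff_map, inf_comm]
    exact this
  have key1 : M ≤ 1 / ρ / m := by
    set F := atTop ⊓ comap f (𝓝 M) with hFdef
    have : F.NeBot := by
      refine hcl M fun ε hε => ?_
      have h1 := frequently_lt_of_lt_limsup hbB.isCoboundedUnder_le (show M - ε < limsup f atTop by linarith)
      refine (h1.and_eventually (hMup (ε/2) (by linarith))).mono fun x hx => ?_
      rw [abs_lt]; constructor <;> linarith [hx.1, hx.2]
    have hFt : F ≤ atTop := inf_le_left
    have hfF : Tendsto f F (𝓝 M) := tendsto_comap.mono_left inf_le_right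
    have hSF := fun s hs => rn_lim_S w ℓ hw hw1 f C M
      (fun x => by rw [abs_of_nonneg (hf0 x)]; exact hC x) herr hMup s hs F hFt hfF
    rw [le_div_iff₀ hm0]
    refine le_of_tendsto (f := fun c : ℝ => c * m) (x := 𝓝[<] M) (a := M * m) ?_ ?_
    · exact (tendsto_id.mul_const m).mono_left nhdsWithin_le_nhds
    filter_upwards [self_mem_nhdsWithin] with c hc
    obtain ⟨T, hT⟩ := rn_up hS f ρ hρ hf0 hslow F M hSF c hc
    refine le_of_tendsto (hm.mul_left c) (Eventually.of_forall fun s => ?_)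
    obtain ⟨x, hx, hx0⟩ := ((((s.eventually_all (l := F)).2 fun i _ =>
      hT (Set.Icc T (T + ℓ i)) isCompact_Icc Set.Icc_subset_Ici_self)).and
      (hFt ((hshift T).eventually (eventually_ge_atTop 0)))).exists
    have h2 := sum_le_hasSum s (fun i _ => mul_nonneg (hw i).le
      (intervalIntegral.integral_nonneg (by linarith [hℓ i]) fun t _ => hf0 t)) (hcons (x - T) hx0)
    calc ∑ i ∈ s, c * (w i * ℓ i) ≤ ∑ i ∈ s, w i * ∫ t in (x - T - ℓ i)..(x - T), f t := by
          refine Finset.sum_le_sum fun i hi => ?_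
          have h3 : ∫ t in (x - T - ℓ i)..(x - T), c ≤ ∫ t in (x - T - ℓ i)..(x - T), f t := by
            refine intervalIntegral.integral_mono_on (by linarith [hℓ i]) (by simp) (hint _ _) fun t ht => ?_
            have := hx i hi (x - t) ⟨by linarith [ht.2], by linarith [ht.1]⟩
            simpa using this
          rw [intervalIntegral.integral_const, smul_eq_mul] at h3
          have := mul_le_mul_of_nonneg_left h3 (hw i).le
          linarith
      _ ≤ _ := h2
      _ ≤ 1 / ρ := by
          gcongr
          linarith [Real.exp_pos (-ρ * (x - T))]
  have key2 : 1 / ρ / m ≤ M' := by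
    set F := atTop ⊓ comap f (𝓝 M') with hFdef
    have : F.NeBot := by
      refine hcl M' fun ε hε => ?_
      have h1 := frequently_lt_of_liminf_lt hbA.isCoboundedUnder_ge (show liminf f atTop < M' + ε by linarith)
      refine (h1.and_eventually (hMlo (ε/2) (by linarith))).mono fun x hx => ?_
      rw [abs_lt]; constructor <;> linarith [hx.1, hx.2]
    have hFt : F ≤ atTop := inf_le_left
    have hfF : Tendsto f F (𝓝 M') := tendsto_comap.mono_left inf_le_right
    have hSF : ∀ s ∈ AddSubmonoid.closure (Set.range ℓ), Tendsto (fun x => f (x - s)) F (𝓝 M') := by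
      intro s hs
      have := rn_lim_S w ℓ hw hw1 (fun x => - f x) C (-M')
        (fun x => by rw [abs_neg, abs_of_nonneg (hf0 x)]; exact hC x)
        (by
          have := herr.neg
          simp only [neg_zero] at this
          refine this.congr fun x => ?_
          simp only [mul_neg, tsum_neg]; ring)
        (fun ε hε => (hMlo ε hε).mono fun x hx => by linarith) s hs F hFt hfF.neg
      simpa using this.neg
    have hM'0 : 0 ≤ M' := ge_of_tendsto hfF (Eventually.of_forall hf0)
    rw [div_le_iff₀ hm0]
    refine ge_of_tendsto (f := fun c : ℝ => c * m) (x := 𝓝[>] M') (a := M' * m) ?_ ?_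
    · exact (tendsto_id.mul_const m).mono_left nhdsWithin_le_nhds
    filter_upwards [self_mem_nhdsWithin] with c hc
    have hc0 : 0 ≤ c := hM'0.trans (le_of_lt hc)
    obtain ⟨T, hT⟩ := rn_down hS f ρ hρ hf0 hslow F M' hSF c hc
    have hlim2 : Tendsto (fun s : Finset ι => c * m + C * (m - ∑ i ∈ s, w i * ℓ i)) atTop (𝓝 (c * m)) := by
      have : Tendsto (fun s : Finset ι => ∑ i ∈ s, w i * ℓ i) atTop (𝓝 m) := hm
      simpa using ((this.const_sub m).const_mul C).const_add (c * m)
    refine ge_of_tendsto hlim2 (Eventually.of_forall fun s => ?_)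
    have hlim3 : Tendsto (fun x => (1 - Real.exp (-ρ * (x - T))) / ρ) F (𝓝 (1 / ρ)) := by
      have := ((hexp.comp (hshift T)).const_sub 1).div_const ρ
      simpa [Function.comp_def] using this.mono_left hFt
    refine le_of_tendsto hlim3 ?_
    filter_upwards [((s.eventually_all (l := F)).2 fun i _ =>
      hT (Set.Icc T (T + ℓ i)) isCompact_Icc Set.Icc_subset_Ici_self),
      hFt ((hshift T).eventually (eventually_ge_atTop 0))] with x hx hx0
    classical
    have hb : HasSum (fun i => C * (w i * ℓ i) - if i ∈ s then C * (w i * ℓ i) - c * (w i * ℓ i) else 0)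
        (C * m - ∑ i ∈ s, (C * (w i * ℓ i) - c * (w i * ℓ i))) := by
      refine (hm.mul_left C).sub ?_
      have := hasSum_sum_of_ne_finset_zero (s := s) (L := SummationFilter.unconditional ι)
        (f := fun i => if i ∈ s then C * (w i * ℓ i) - c * (w i * ℓ i) else 0)
        (fun i hi => by simp [hi])
      rwa [Finset.sum_congr rfl (g := fun i => C * (w i * ℓ i) - c * (w i * ℓ i))
        (fun i hi => by simp [hi])] at this
    have h2 := hasSum_le (fun i => ?_) (hcons (x - T) hx0) hb
    · refine h2.trans ?_
      rw [Finset.sum_sub_distrib, ← Finset.mul_sum, ← Finset.mul_sum]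
      have : ∑ i ∈ s, w i * ℓ i ≤ m := sum_le_hasSum s (fun i _ => (mul_pos (hw i) (hℓ i)).le) hm
      nlinarith
    · have gen : ∀ D, (∀ t ∈ Set.Icc (x - T - ℓ i) (x - T), f t ≤ D) →
          w i * ∫ t in (x - T - ℓ i)..(x - T), f t ≤ D * (w i * ℓ i) := by
        intro D hD
        have h3 : ∫ t in (x - T - ℓ i)..(x - T), f t ≤ ∫ t in (x - T - ℓ i)..(x - T), D :=
          intervalIntegral.integral_mono_on (by linarith [hℓ i]) (hint _ _) (by simp) hD
        rw [intervalIntegral.integral_const, smul_eq_mul] at h3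
        have := mul_le_mul_of_nonneg_left h3 (hw i).le
        linarith
      by_cases hi : i ∈ s
      · simp only [hi, if_true]
        rw [sub_sub_cancel]
        refine gen c fun t ht => ?_
        have := hx i hi (x - t) ⟨by linarith [ht.2], by linarith [ht.1]⟩
        simpa using this
      · simp only [hi, if_false, sub_zero]
        exact gen C fun t _ => hC t
  exact tendsto_of_le_liminf_of_limsup_le key2 key1 hbA hbB

/-- **Asymptotics of `A(N)`.** Under the stated assumptions, including the non-periodicity
condition, `A(N) ∼ (μ/ρ) N^ρ` as `N → ∞`, where `μ/ρ = -1/(ρ 𝒫'(ρ))`. -/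
theorem Acum_asymptotic
    (P : Set ℕ) (hP : ∀ n ∈ P, 2 ≤ n) (hP2 : P.Nontrivial)
    (hκ : 1 < PvalE P (kappa P))
    (ρ : ℝ) (hρ0 : 0 < ρ) (hρκ : kappa P < (ρ : EReal)) (hρ1 : Pval P ρ = 1)
    (μ : ℝ) (hμ : μ = -1 / Pderiv1 P ρ)
    (hnp : ∀ d : ℕ, 2 ≤ d → ¬ P ⊆ {n : ℕ | ∃ k : ℕ, 1 ≤ k ∧ n = d ^ k}) :
    Asymptotics.IsEquivalent atTop
      (fun N : ℕ => Acum P N)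
      (fun N : ℕ => (μ / ρ) * (N : ℝ) ^ ρ) := by
  classical
  have hnonneg : ∀ n : P, (2 : ℝ) ≤ ((n : ℕ) : ℝ) := fun n => by exact_mod_cast hP n n.2
  have hpos : ∀ n : P, (0 : ℝ) < ((n : ℕ) : ℝ) := fun n => by linarith [hnonneg n]
  obtain ⟨r, hrρ, hr⟩ : ∃ r < ρ, Summable (fun n : P => ((n : ℕ) : ℝ) ^ (-r)) := by
    obtain ⟨x, ⟨r, rfl, hr⟩, hx⟩ := sInf_lt_iff.1 hρκ
    exact ⟨r, by exact_mod_cast hx, hr⟩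
  have hsumm : Summable (fun n : P => ((n : ℕ) : ℝ) ^ (-ρ)) := by
    refine Summable.of_nonneg_of_le (fun n => by positivity) (fun n => ?_) hr
    exact Real.rpow_le_rpow_of_exponent_le (by linarith [hnonneg n]) (by linarith)
  have hw1 : HasSum (fun n : P => ((n : ℕ) : ℝ) ^ (-ρ)) 1 := by
    have := hsumm.hasSum
    unfold Pval at hρ1
    rwa [hρ1] at this
  have hml : Summable (fun n : P => ((n : ℕ) : ℝ) ^ (-ρ) * Real.log (n : ℕ)) := by
    have hδ : 0 < ρ - r := by linarith
    refine Summable.of_nonneg_of_le (fun n => ?_) (fun n => ?_) (hr.mul_right (1 / (ρ - r)))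
    · exact mul_nonneg (by positivity) (Real.log_nonneg (by linarith [hnonneg n]))
    · have h1 := Real.log_le_rpow_div (hpos n).le hδ
      calc ((n : ℕ) : ℝ) ^ (-ρ) * Real.log (n : ℕ)
          ≤ ((n : ℕ) : ℝ) ^ (-ρ) * (((n : ℕ) : ℝ) ^ (ρ - r) / (ρ - r)) := by gcongr
        _ = ((n : ℕ) : ℝ) ^ (-r) * (1 / (ρ - r)) := by
          rw [mul_div_assoc', ← Real.rpow_add (hpos n)]
          rw [show -ρ + (ρ - r) = -r by ring]; ring
  set m := ∑' n : P, ((n : ℕ) : ℝ) ^ (-ρ) * Real.log (n : ℕ) with hm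
  have hμm : μ / ρ = 1 / ρ / m := by
    rw [hμ]; unfold Pderiv1; rw [← hm, neg_div_neg_eq, div_right_comm]
  obtain ⟨C, hC0, hC⟩ := Acum_bound P hP hP2 ρ hρ0 hw1
  have hne : Nonempty P := hP2.nonempty.to_subtype
  set f : ℝ → ℝ := fun x => Real.exp (-ρ * x) * Acum P ⌊Real.exp x⌋₊ with hf
  have hfl : ∀ x < 0, ⌊Real.exp x⌋₊ = 0 := fun x hx =>
    Nat.floor_eq_zero.2 (by simpa using hx)
  have hlog : ∀ n : P, 0 < Real.log (n : ℕ) := fun n => Real.log_pos (by linarith [hnonneg n])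
  have hmono : Monotone (fun x : ℝ => Acum P ⌊Real.exp x⌋₊) := fun x y h =>
    Acum_mono P (Nat.floor_mono (Real.exp_le_exp.2 h))
  have hlim : Tendsto f atTop (𝓝 (1 / ρ / m)) := by
    refine rn_main (fun n : P => ((n : ℕ) : ℝ) ^ (-ρ)) (fun n : P => Real.log (n : ℕ))
      (fun n => Real.rpow_pos_of_pos (hpos n) _) hw1 hlog m hml.hasSum
      (log_dense P hP hP2 hnp) f C ρ hρ0 ?_ ?_ ?_ ?_ ?_ ?_
    · intro x; exact mul_nonneg (Real.exp_pos _).le (Acum_nonneg P _)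
    · intro x
      have h1 : (⌊Real.exp x⌋₊ : ℝ) ^ ρ ≤ Real.exp (ρ * x) := by
        rw [mul_comm, Real.exp_mul]
        exact Real.rpow_le_rpow (by positivity) (Nat.floor_le (Real.exp_pos _).le) hρ0.le
      calc f x ≤ Real.exp (-ρ * x) * (C * Real.exp (ρ * x)) := by
            simp only [hf]
            refine mul_le_mul_of_nonneg_left ((hC _).trans ?_) (Real.exp_pos _).le
            exact mul_le_mul_of_nonneg_left h1 hC0
        _ = C * Real.exp (-ρ * x + ρ * x) := by rw [Real.exp_add]; ring
        _ = C := by simp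
    · intro x hx; simp only [hf]; rw [hfl x hx, Acum_zero, mul_zero]
    · exact (by fun_prop : Measurable fun x : ℝ => Real.exp (-ρ * x)).mul hmono.measurable
    · intro x h hh
      simp only [hf]
      rw [← mul_assoc, ← Real.exp_add, show -ρ * h + -ρ * x = -ρ * (x + h) by ring]
      exact mul_le_mul_of_nonneg_left (hmono (by linarith)) (Real.exp_pos _).le
    · intro x hx
      simp only [hf]
      rw [Acum_tsum P hP _ (Nat.le_floor (by simpa using Real.one_le_exp hx)), mul_add, mul_one,
        add_comm, ← tsum_mul_left]
      congr 1
      refine tsum_congr fun n => ?_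
      rw [Real.exp_sub, Real.exp_log (hpos n), Nat.floor_div_natCast, ← mul_assoc]
      congr 1
      rw [Real.rpow_def_of_pos (hpos n), ← Real.exp_add]
      congr 1; ring
  have hm0 : 0 < m := by
    obtain ⟨i⟩ := hne
    exact (mul_pos (Real.rpow_pos_of_pos (hpos i) _) (hlog i)).trans_le
      (le_hasSum hml.hasSum i fun j _ => (mul_pos (Real.rpow_pos_of_pos (hpos j) _) (hlog j)).le)
  have hlim2 : Tendsto (fun N : ℕ => f (Real.log N)) atTop (𝓝 (1 / ρ / m)) :=
    hlim.comp (Real.tendsto_log_atTop.comp tendsto_natCast_atTop_atTop)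
  have heq : IsEquivalent atTop (fun N : ℕ => f (Real.log N)) (fun _ => 1 / ρ / m) :=
    (isEquivalent_const_iff_tendsto (by positivity)).2 hlim2
  have h3 := heq.mul (IsEquivalent.refl (u := fun N : ℕ => (N : ℝ) ^ ρ) (l := atTop))
  rw [hμm]
  refine h3.congr_left ?_
  filter_upwards [eventually_ge_atTop 1] with N hN
  have hN0 : (0 : ℝ) < N := by exact_mod_cast hN
  simp only [hf, Pi.mul_apply]
  rw [Real.exp_log hN0, Nat.floor_natCast, Real.rpow_def_of_pos hN0, mul_right_comm, ← Real.exp_add]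
  rw [show -ρ * Real.log N + Real.log N * ρ = 0 by ring]; simp
end
end
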